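/- arXiv:2406.20069 — 9 statements merged into one kernel-verified Lean document; each statement's English description precedes it below -/
import Mathlib

section
/- For every real X with 0.6 ≤ X ≤ 0.75 and every θ ∈ [2π/3, π], we have (π − θ)·X − cos θ + 1 ≤ X·arcsin X + cos(arcsin X) + 1; that is, on the interval [2π/3, π] the function θ ↦ (π − θ)X − cos θ + 1 is maximized at θ = π − arcsin X. -/
open Real

/-- For every real `X ∈ [0.6, 0.75]` and every `θ ∈ [2π/3, π]`,
`(π − θ)·X − cos θ + 1 ≤ X·arcsin X + cos (arcsin X) + 1`; i.e. on `[2π/3, π]`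
the function `θ ↦ (π − θ)X − cos θ + 1` is maximized at `θ = π − arcsin X`. -/
theorem stmt_3 (X : ℝ) (hX : X ∈ Set.Icc (0.6 : ℝ) 0.75)
    (θ : ℝ) (hθ : θ ∈ Set.Icc (2 * π / 3) π) :
    (π - θ) * X - Real.cos θ + 1 ≤
      X * Real.arcsin X + Real.cos (Real.arcsin X) + 1 := by
  obtain ⟨h1, h2⟩ := hX
  obtain ⟨h3, h4⟩ := hθ
  have hs : Real.sin (Real.arcsin X) = X :=
    Real.sin_arcsin (by norm_num at *; linarith) (by norm_num at *; linarith)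
  have ha := Real.arcsin_mem_Icc X
  have hc : Real.cos θ = - Real.cos (π - θ) := by rw [Real.cos_pi_sub]; ring
  have hpi := Real.pi_pos
  have hu : π - θ ∈ Set.Icc (-(π / 2)) (π / 2) := ⟨by linarith, by linarith⟩
  rw [hc]
  generalize π - θ = u at *
  generalize Real.arcsin X = a at *
  subst hs
  have hcc := strictConcaveOn_cos_Icc.concaveOn
  have hd := Real.hasDerivAt_cos a
  rcases lt_trichotomy u a with h | h | h
  · have := hcc.le_slope_of_hasDerivAt hu ha h hd
    rw [slope_def_field, le_div_iff₀ (by linarith)] at this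
    linarith
  · subst h; linarith
  · have := hcc.slope_le_of_hasDerivAt ha hu h hd
    rw [slope_def_field, div_le_iff₀ (by linarith)] at this
    linarith
end

section
/- Consider the complete graph on the five vertices {0, a, x, y, z} with vertex weights w(a) = 2 and w(0) = w(x) = w(y) = w(z) = 1, and edge weights w(i,j) = w(i)·w(j). Every triangle-free subgraph of this graph has total edge weight at most 9. -/
/-- The vertex weight on the five vertices `{0, a, x, y, z}`, encoded as `Fin 5` with
`0 ↦ 0`, `1 ↦ a`, `2 ↦ x`, `3 ↦ y`, `4 ↦ z`: the vertex `a` has weight `2`, all others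
weight `1`. -/
def w5 : Fin 5 → ℕ := fun i => if i = 1 then 2 else 1

/-- The sum of edge indicators over a triangle is at most `2`. -/
theorem tri_le (H : SimpleGraph (Fin 5)) [DecidableRel H.Adj] (htf : H.CliqueFree 3)
    (i j k : Fin 5) :
    (if H.Adj i j then 1 else 0) + (if H.Adj i k then 1 else 0)
      + (if H.Adj j k then 1 else 0) ≤ 2 := by
  by_cases h1 : H.Adj i j <;> by_cases h2 : H.Adj i k <;> by_cases h3 : H.Adj j k <;>
    simp [h1, h2, h3]
  exact htf {i, j, k} (SimpleGraph.is3Clique_triple_iff.2 ⟨h1, h2, h3⟩)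

/-- Every triangle-free subgraph of the complete graph on `{0, a, x, y, z}` with edge
weights `w(i)·w(j)` has total edge weight at most `9`. -/
theorem stmt_9 (H : SimpleGraph (Fin 5)) [DecidableRel H.Adj] (htf : H.CliqueFree 3) :
    ∑ q ∈ Finset.univ.filter (fun q : Fin 5 × Fin 5 => q.1 < q.2 ∧ H.Adj q.1 q.2),
      w5 q.1 * w5 q.2 ≤ 9 := by
  have key : ∑ q ∈ Finset.univ.filter (fun q : Fin 5 × Fin 5 => q.1 < q.2 ∧ H.Adj q.1 q.2),
      w5 q.1 * w5 q.2 = ∑ i : Fin 5, ∑ j : Fin 5,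
        (if i < j then w5 i * w5 j else 0) * (if H.Adj i j then 1 else 0) := by
    rw [Finset.sum_filter, Fintype.sum_prod_type]
    refine Finset.sum_congr rfl fun i _ => Finset.sum_congr rfl fun j _ => ?_
    by_cases h1 : i < j <;> by_cases h2 : H.Adj i j <;> simp [h1, h2]
  rw [key]
  have t := tri_le H htf
  generalize hf : (fun i j : Fin 5 => if H.Adj i j then (1 : ℕ) else 0) = f
  have hf' : ∀ i j, (if H.Adj i j then (1 : ℕ) else 0) = f i j := fun i j => by rw [← hf]
  simp only [hf'] at t ⊢
  have t1 := t 0 1 2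
  have t2 := t 0 1 3
  have t3 := t 0 1 4
  have t4 := t 0 2 3
  have t5 := t 0 2 4
  have t6 := t 0 3 4
  have t7 := t 1 2 3
  have t8 := t 1 2 4
  have t9 := t 1 3 4
  have t10 := t 2 3 4
  simp [Fin.sum_univ_five, w5]
  omega
end

section
/- Consider the complete graph on the five vertices {0, a, x, y, z} with vertex weights w(a) = 2 and w(0) = w(x) = w(y) = w(z) = 1, and edge weights w(i,j) = w(i)·w(j). Every triangle-free subgraph H of weight strictly greater than 8 satisfies: H is bipartite; the vertices 0, x, y, z lie in a common connected component of H with the distance in H from 0 to each of x, y, z at most 2; and for every 2-colouring c of the vertices that is proper on H (i.e., c(u) ≠ c(v) for every edge (u,v) of H) one has c(0) + c(x) + c(y) + c(z) = 1 in ℤ/2. -/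
set_option synthInstance.maxHeartbeats 400000 in
set_option synthInstance.maxSize 4000 in
set_option maxRecDepth 10000 in
/-- Boolean core: the only triangle-free edge sets of weight above 8 are the complete bipartite
graphs with one side `{a, u}`. -/
theorem core10 : ∀ e01 e02 e03 e04 e12 e13 e14 e23 e24 e34 : Bool,
    ((e01 && e12 && e02) ||
    (e01 && e13 && e03) ||
    (e01 && e14 && e04) ||
    (e02 && e23 && e03) ||
    (e02 && e24 && e04) ||
    (e03 && e34 && e04) ||
    (e12 && e23 && e13) ||
    (e12 && e24 && e14) ||
    (e13 && e34 && e14) ||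
    (e23 && e34 && e24)) = false →
    8 < (if e01 = true then 2 else 0) + (if e02 = true then 1 else 0) + (if e03 = true then 1 else 0) + (if e04 = true then 1 else 0) + (if e12 = true then 2 else 0) + (if e13 = true then 2 else 0) + (if e14 = true then 2 else 0) + (if e23 = true then 1 else 0) + (if e24 = true then 1 else 0) + (if e34 = true then 1 else 0) →
    ((!e01 && e02 && e03 && e04 && e12 && e13 && e14 && !e23 && !e24 && !e34) ||
    (e01 && e02 && !e03 && !e04 && !e12 && e13 && e14 && e23 && e24 && !e34) ||
    (e01 && !e02 && e03 && !e04 && e12 && !e13 && e14 && e23 && !e24 && e34) ||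
    (e01 && !e02 && !e03 && e04 && e12 && e13 && !e14 && !e23 && e24 && e34)) = true := by
  decide +kernel

theorem no_tri {H : SimpleGraph (Fin 5)} [DecidableRel H.Adj] (htf : H.CliqueFree 3)
    (i j k : Fin 5) :
    (decide (H.Adj i j) && decide (H.Adj j k) && decide (H.Adj i k)) = false := by
  by_contra h
  simp only [Bool.not_eq_false, Bool.and_eq_true, decide_eq_true_eq] at h
  exact htf {i, j, k} (SimpleGraph.is3Clique_triple_iff.2 ⟨h.1.1, h.2, h.1.2⟩)

set_option maxHeartbeats 1000000 in
theorem heavy_shape (H : SimpleGraph (Fin 5)) [DecidableRel H.Adj] (htf : H.CliqueFree 3)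
    (hw : 8 < ∑ q ∈ Finset.univ.filter (fun q : Fin 5 × Fin 5 => q.1 < q.2 ∧ H.Adj q.1 q.2),
      w5 q.1 * w5 q.2) :
    ∃ u : Fin 5, u ≠ 1 ∧ ∀ i j, H.Adj i j ↔ ¬ ((i = 1 ∨ i = u) ↔ (j = 1 ∨ j = u)) := by
  have key := core10 (decide (H.Adj 0 1)) (decide (H.Adj 0 2)) (decide (H.Adj 0 3)) (decide (H.Adj 0 4)) (decide (H.Adj 1 2)) (decide (H.Adj 1 3)) (decide (H.Adj 1 4)) (decide (H.Adj 2 3)) (decide (H.Adj 2 4)) (decide (H.Adj 3 4))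
    (by simp only [no_tri htf, Bool.or_false]) (by
      rw [Finset.sum_filter, Fintype.sum_prod_type] at hw
      simp only [Fin.sum_univ_five] at hw
      simp [w5] at hw
      simp only [decide_eq_true_eq]
      linarith)
  simp only [Bool.or_eq_true, Bool.and_eq_true, Bool.not_eq_true', decide_eq_true_eq,
    decide_eq_false_iff_not, or_assoc, and_assoc] at key
  clear hw
  have ext : ∀ u : Fin 5,
      (∀ i j, i < j → (H.Adj i j ↔ ¬ ((i = 1 ∨ i = u) ↔ (j = 1 ∨ j = u)))) →
      ∀ i j, H.Adj i j ↔ ¬ ((i = 1 ∨ i = u) ↔ (j = 1 ∨ j = u)) := by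
    intro u h i j
    rcases lt_trichotomy i j with hij | hij | hij
    · exact h i j hij
    · subst hij; simp
    · rw [H.adj_comm, h j i hij]; tauto
  rcases key with h | h | h | h
  · refine ⟨0, by decide, ext 0 ?_⟩
    intro i j hij
    clear ext
    obtain ⟨h1, h2, h3, h4, h5, h6, h7, h8, h9, h10⟩ := h
    fin_cases i <;> fin_cases j <;> first | exact absurd hij (by decide) | simp [*]
  · refine ⟨2, by decide, ext 2 ?_⟩
    intro i j hij
    clear ext
    obtain ⟨h1, h2, h3, h4, h5, h6, h7, h8, h9, h10⟩ := h
    fin_cases i <;> fin_cases j <;> first | exact absurd hij (by decide) | simp [*]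
  · refine ⟨3, by decide, ext 3 ?_⟩
    intro i j hij
    clear ext
    obtain ⟨h1, h2, h3, h4, h5, h6, h7, h8, h9, h10⟩ := h
    fin_cases i <;> fin_cases j <;> first | exact absurd hij (by decide) | simp [*]
  · refine ⟨4, by decide, ext 4 ?_⟩
    intro i j hij
    clear ext
    obtain ⟨h1, h2, h3, h4, h5, h6, h7, h8, h9, h10⟩ := h
    fin_cases i <;> fin_cases j <;> first | exact absurd hij (by decide) | simp [*]

theorem colour_core10 : ∀ u : Fin 5, u ≠ 1 → ∀ c : Fin 5 → ZMod 2,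
    (∀ i j : Fin 5, ¬ ((i = 1 ∨ i = u) ↔ (j = 1 ∨ j = u)) → c i ≠ c j) →
      c 0 + c 2 + c 3 + c 4 = 1 := by
  decide +kernel

/-- Every triangle-free subgraph `H` of the complete graph on `{0, a, x, y, z}` (with edge
weights `w(i)·w(j)`) of total weight strictly greater than `8` is bipartite; the vertices
`0, x, y, z` lie in a common connected component of `H`, with the distance in `H` from `0`
to each of `x, y, z` at most `2`; and every `2`-colouring `c` that is proper on `H`
satisfies `c 0 + c x + c y + c z = 1` in `ℤ/2`. -/
theorem stmt_10 (H : SimpleGraph (Fin 5)) [DecidableRel H.Adj] (htf : H.CliqueFree 3)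
    (hw : 8 < ∑ q ∈ Finset.univ.filter (fun q : Fin 5 × Fin 5 => q.1 < q.2 ∧ H.Adj q.1 q.2),
      w5 q.1 * w5 q.2) :
    H.Colorable 2 ∧
    (H.Reachable 0 2 ∧ H.Reachable 0 3 ∧ H.Reachable 0 4) ∧
    (H.dist 0 2 ≤ 2 ∧ H.dist 0 3 ≤ 2 ∧ H.dist 0 4 ≤ 2) ∧
    ∀ c : Fin 5 → ZMod 2, (∀ i j, H.Adj i j → c i ≠ c j) →
      c 0 + c 2 + c 3 + c 4 = 1 := by
  obtain ⟨u, hu, hadj⟩ := heavy_shape H htf hw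
  have walk : ∀ v : Fin 5, v ≠ 1 → ∃ p : H.Walk 0 v, p.length ≤ 2 := by
    intro v hv
    have hc : ∀ u v : Fin 5, u ≠ 1 → v ≠ 1 → v = 0 ∨
        (¬ (((0 : Fin 5) = 1 ∨ 0 = u) ↔ (v = 1 ∨ v = u))) ∨
        ∃ m : Fin 5, (¬ (((0 : Fin 5) = 1 ∨ 0 = u) ↔ (m = 1 ∨ m = u))) ∧
          ¬ ((m = 1 ∨ m = u) ↔ (v = 1 ∨ v = u)) := by decide +kernel
    rcases hc u v hu hv with h | h | ⟨m, h1, h2⟩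
    · subst h; exact ⟨.nil, by simp⟩
    · exact ⟨.cons ((hadj _ _).2 h) .nil, by simp⟩
    · exact ⟨.cons ((hadj _ _).2 h1) (.cons ((hadj _ _).2 h2) .nil), by simp⟩
  have dist2 : ∀ v : Fin 5, v ≠ 1 → H.dist 0 v ≤ 2 := fun v hv => by
    obtain ⟨p, hp⟩ := walk v hv
    exact (SimpleGraph.dist_le p).trans hp
  have reach : ∀ v : Fin 5, v ≠ 1 → H.Reachable 0 v := fun v hv => by
    obtain ⟨p, _⟩ := walk v hv
    exact ⟨p⟩
  refine ⟨⟨SimpleGraph.Coloring.mk (fun i => if i = 1 ∨ i = u then (0 : Fin 2) else 1) ?_⟩,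
    ⟨reach 2 (by decide), reach 3 (by decide), reach 4 (by decide)⟩,
    ⟨dist2 2 (by decide), dist2 3 (by decide), dist2 4 (by decide)⟩, ?_⟩
  · intro i j hij
    have h := (hadj i j).1 hij
    by_cases h1 : i = 1 ∨ i = u <;> by_cases h2 : j = 1 ∨ j = u <;> simp_all
  · intro c hc
    exact colour_core10 u hu c fun i j h => hc i j ((hadj i j).2 h)
end

section
/- Consider the complete graph on the six vertices {0, 1, a, x, y, z} with vertex weights w(a) = w(1) = 2 and w(0) = w(x) = w(y) = w(z) = 1, and edge weights w(i,j) = w(i)·w(j) + δ(i,j) where δ(i,j) = 1 if {i,j} = {0,1} and δ(i,j) = 0 otherwise. Every triangle-free subgraph of this graph has total edge weight at most 17. -/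
/-- The vertex weight on the six vertices `{0, 1, a, x, y, z}`, encoded as `Fin 6` with
`0 ↦ 0`, `1 ↦ 1`, `2 ↦ a`, `3 ↦ x`, `4 ↦ y`, `5 ↦ z`: the vertices `a` and `1` have
weight `2`, all others weight `1`. -/
def w6 : Fin 6 → ℕ := fun i => if i = 1 ∨ i = 2 then 2 else 1

/-- Edge weight `w(i)·w(j) + δ(i,j)`, where `δ` is `1` on the pair `{0, 1}` and `0`
elsewhere. -/
def ew6 : Fin 6 → Fin 6 → ℕ := fun i j =>
  w6 i * w6 j + (if (i = 0 ∧ j = 1) ∨ (i = 1 ∧ j = 0) then 1 else 0)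

/-- The total weight, as a function of an arbitrary Boolean list of the 15 edges, is at most 17
unless there is a triangle. -/
theorem bool_bound : ∀ e01 e02 e12 : Bool, (e01 && e02 && e12) = false →
    ∀ e03 e13 e23 : Bool, (e01 && e03 && e13 || e02 && e03 && e23 || e12 && e13 && e23) = false →
    ∀ e04 e14 e24 e34 : Bool, (e01 && e04 && e14 || e02 && e04 && e24 || e12 && e14 && e24 ||
      e03 && e04 && e34 || e13 && e14 && e34 || e23 && e24 && e34) = false →
    ∀ e05 e15 e25 e35 e45 : Bool, (e01 && e05 && e15 || e02 && e05 && e25 || e12 && e15 && e25 ||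
      e03 && e05 && e35 || e13 && e15 && e35 || e23 && e25 && e35 || e04 && e05 && e45 ||
      e14 && e15 && e45 || e24 && e25 && e45 || e34 && e35 && e45) = false →
    3 * e01.toNat + 2 * e02.toNat + e03.toNat + e04.toNat + e05.toNat + 4 * e12.toNat +
      2 * e13.toNat + 2 * e14.toNat + 2 * e15.toNat + 2 * e23.toNat + 2 * e24.toNat +
      2 * e25.toNat + e34.toNat + e35.toNat + e45.toNat ≤ 17 := by
  decide +kernel

/-- Every triangle-free subgraph of the complete graph on `{0, 1, a, x, y, z}` with edge
weights `w(i)·w(j) + δ(i,j)` has total edge weight at most `17`. -/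
theorem stmt_12 (H : SimpleGraph (Fin 6)) [DecidableRel H.Adj] (htf : H.CliqueFree 3) :
    ∑ q ∈ Finset.univ.filter (fun q : Fin 6 × Fin 6 => q.1 < q.2 ∧ H.Adj q.1 q.2),
      ew6 q.1 q.2 ≤ 17 := by
  have tri : ∀ i j k : Fin 6,
      (decide (H.Adj i j) && decide (H.Adj i k) && decide (H.Adj j k)) = false := by
    intro i j k
    by_contra h
    simp only [Bool.not_eq_false, Bool.and_eq_true, decide_eq_true_eq] at h
    exact htf {i, j, k} (SimpleGraph.is3Clique_triple_iff.2 ⟨h.1.1, h.1.2, h.2⟩)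
  have key := bool_bound (decide (H.Adj 0 1)) (decide (H.Adj 0 2)) (decide (H.Adj 1 2))
    (by simp only [tri])
    (decide (H.Adj 0 3)) (decide (H.Adj 1 3)) (decide (H.Adj 2 3))
    (by simp only [tri, Bool.or_false])
    (decide (H.Adj 0 4)) (decide (H.Adj 1 4)) (decide (H.Adj 2 4)) (decide (H.Adj 3 4))
    (by simp only [tri, Bool.or_false])
    (decide (H.Adj 0 5)) (decide (H.Adj 1 5)) (decide (H.Adj 2 5)) (decide (H.Adj 3 5))
    (decide (H.Adj 4 5))
    (by simp only [tri, Bool.or_false])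
  have b : ∀ (p : Prop) [Decidable p] (n : ℕ), (if p then n else 0) = n * (decide p).toNat := by
    intro p _ n
    by_cases h : p <;> simp [h]
  refine le_trans (le_of_eq ?_) key
  rw [Finset.sum_filter, Fintype.sum_prod_type]
  simp only [ite_and, b]
  simp [Fin.sum_univ_six, ew6, w6]
  ring
end

section
/- Consider the complete graph on the six vertices {0, 1, a, x, y, z} with vertex weights w(a) = w(1) = 2 and w(0) = w(x) = w(y) = w(z) = 1, and edge weights w(i,j) = w(i)·w(j) + δ(i,j) where δ(i,j) = 1 if {i,j} = {0,1} and δ(i,j) = 0 otherwise. Every triangle-free subgraph H of weight strictly greater than 16 satisfies: H is bipartite; the vertices 0, x, y, z lie in a common connected component of H with the distance in H from 0 to each of x, y, z at most 2; and for every 2-colouring c of the vertices that is proper on H (i.e., c(u) ≠ c(v) for every edge (u,v) of H) one has c(0) + c(x) + c(y) + c(z) = 0 in ℤ/2. -/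
/-- The four balanced 2-colourings (by weight) separating `0` from `1`. -/
def col6 : Fin 4 → Fin 6 → Bool
  | 0 => ![true, false, false, true, true, true]
  | 1 => ![true, false, true, true, false, false]
  | 2 => ![true, false, true, false, true, false]
  | 3 => ![true, false, true, false, false, true]

theorem ne6 : ∀ k, col6 k 0 ≠ col6 k 1 := by decide

set_option synthInstance.maxHeartbeats 2000000 in
set_option synthInstance.maxSize 100000 in
set_option maxRecDepth 100000 in
/-- Boolean form of the classification of the triangle-free graphs of weight above 16;
the variables are the indicator values of the fifteen pairs. -/
theorem classify6 : ∀ p01 p02 p12 : Bool, (p01 && p02 && p12) = false →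
    ∀ p03 p13 p23 : Bool,
      (p01 && p03 && p13 || p02 && p03 && p23 || p12 && p13 && p23) = false →
    ∀ p04 p14 p24 p34 : Bool,
      (p01 && p04 && p14 || p02 && p04 && p24 || p12 && p14 && p24 ||
        p03 && p04 && p34 || p13 && p14 && p34 || p23 && p24 && p34) = false →
    ∀ p05 p15 p25 p35 p45 : Bool,
      (p01 && p05 && p15 || p02 && p05 && p25 || p12 && p15 && p25 ||
        p03 && p05 && p35 || p13 && p15 && p35 || p23 && p25 && p35 ||
        p04 && p05 && p45 || p14 && p15 && p45 || p24 && p25 && p45 ||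
        p34 && p35 && p45) = false →
      Nat.ble 17 (3 * p01.toNat + 2 * p02.toNat + p03.toNat + p04.toNat + p05.toNat +
        4 * p12.toNat + 2 * p13.toNat + 2 * p14.toNat + 2 * p15.toNat +
        2 * p23.toNat + 2 * p24.toNat + 2 * p25.toNat +
        p34.toNat + p35.toNat + p45.toNat) = true →
      ∃ k : Fin 4,
        (p01 = (col6 k 0 ^^ col6 k 1) ∧ p02 = (col6 k 0 ^^ col6 k 2) ∧
          p03 = (col6 k 0 ^^ col6 k 3) ∧ p04 = (col6 k 0 ^^ col6 k 4) ∧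
          p05 = (col6 k 0 ^^ col6 k 5)) ∧
        (p12 = (col6 k 1 ^^ col6 k 2) ∧ p13 = (col6 k 1 ^^ col6 k 3) ∧
          p14 = (col6 k 1 ^^ col6 k 4) ∧ p15 = (col6 k 1 ^^ col6 k 5)) ∧
        (p23 = (col6 k 2 ^^ col6 k 3) ∧ p24 = (col6 k 2 ^^ col6 k 4) ∧
          p25 = (col6 k 2 ^^ col6 k 5)) ∧
        (p34 = (col6 k 3 ^^ col6 k 4) ∧ p35 = (col6 k 3 ^^ col6 k 5)) ∧
        p45 = (col6 k 4 ^^ col6 k 5) := by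
  decide +kernel

theorem tri6 (H : SimpleGraph (Fin 6)) [DecidableRel H.Adj] (htf : H.CliqueFree 3)
    (i j k : Fin 6) :
    (decide (H.Adj i j) && decide (H.Adj i k) && decide (H.Adj j k)) = false := by
  by_contra h
  simp only [Bool.not_eq_false, Bool.and_eq_true, decide_eq_true_eq] at h
  exact htf {i, j, k} (SimpleGraph.is3Clique_triple_iff.2 ⟨h.1.1, h.1.2, h.2⟩)

theorem sum6 (H : SimpleGraph (Fin 6)) [DecidableRel H.Adj] :
    ∑ q ∈ Finset.univ.filter (fun q : Fin 6 × Fin 6 => q.1 < q.2 ∧ H.Adj q.1 q.2),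
      ew6 q.1 q.2 =
    3 * (decide (H.Adj 0 1)).toNat + 2 * (decide (H.Adj 0 2)).toNat +
      (decide (H.Adj 0 3)).toNat + (decide (H.Adj 0 4)).toNat + (decide (H.Adj 0 5)).toNat +
      4 * (decide (H.Adj 1 2)).toNat + 2 * (decide (H.Adj 1 3)).toNat +
      2 * (decide (H.Adj 1 4)).toNat + 2 * (decide (H.Adj 1 5)).toNat +
      2 * (decide (H.Adj 2 3)).toNat + 2 * (decide (H.Adj 2 4)).toNat +
      2 * (decide (H.Adj 2 5)).toNat +
      (decide (H.Adj 3 4)).toNat + (decide (H.Adj 3 5)).toNat + (decide (H.Adj 4 5)).toNat := by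
  have e : ∀ (i j : Fin 6), (if i < j ∧ H.Adj i j then ew6 i j else 0) =
      (if i < j then ew6 i j else 0) * (decide (H.Adj i j)).toNat := by
    intro i j
    by_cases h1 : i < j <;> by_cases h2 : H.Adj i j <;> simp [h1, h2]
  rw [Finset.sum_filter, Fintype.sum_prod_type]
  simp only [e]
  have v : ∀ i j : Fin 6, (if i < j then ew6 i j else 0) =
      (![![0,3,2,1,1,1],![0,0,4,2,2,2],![0,0,0,2,2,2],![0,0,0,0,1,1],![0,0,0,0,0,1],
        ![0,0,0,0,0,0]] : Fin 6 → Fin 6 → ℕ) i j := by decide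
  simp only [v]
  simp [Fin.sum_univ_succ]
  ring

theorem adj6 (H : SimpleGraph (Fin 6)) [DecidableRel H.Adj] (htf : H.CliqueFree 3)
    (hw : 16 < ∑ q ∈ Finset.univ.filter (fun q : Fin 6 × Fin 6 => q.1 < q.2 ∧ H.Adj q.1 q.2),
      ew6 q.1 q.2) :
    ∃ k : Fin 4, ∀ i j, H.Adj i j ↔ col6 k i ≠ col6 k j := by
  rw [sum6] at hw
  have t := tri6 H htf
  obtain ⟨k, ⟨h01, h02, h03, h04, h05⟩, ⟨h12, h13, h14, h15⟩, ⟨h23, h24, h25⟩, ⟨h34, h35⟩, h45⟩ :=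
    classify6 _ _ _ (t 0 1 2) _ _ _
      (by rw [t 0 1 3, t 0 2 3, t 1 2 3]; rfl) _ _ _ _
      (by rw [t 0 1 4, t 0 2 4, t 1 2 4, t 0 3 4, t 1 3 4, t 2 3 4]; rfl) _ _ _ _ _
      (by rw [t 0 1 5, t 0 2 5, t 1 2 5, t 0 3 5, t 1 3 5, t 2 3 5, t 0 4 5, t 1 4 5,
            t 2 4 5, t 3 4 5]; rfl)
      (Nat.ble_eq_true_of_le hw)
  refine ⟨k, ?_⟩
  have lt : ∀ i j, i < j → decide (H.Adj i j) = (col6 k i ^^ col6 k j) := by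
    intro i j hij
    fin_cases i <;> fin_cases j <;> first | assumption | exact absurd hij (by decide)
  have lt' : ∀ i j, i < j → (H.Adj i j ↔ col6 k i ≠ col6 k j) := by
    intro i j hij
    have := lt i j hij
    rw [← decide_eq_true_iff (p := H.Adj i j), this, bne_iff_ne]
  intro i j
  rcases lt_trichotomy i j with h | h | h
  · exact lt' i j h
  · subst h; simp
  · rw [H.adj_comm, lt' j i h, ne_comm]

/-- Every triangle-free subgraph `H` of the complete graph on `{0, 1, a, x, y, z}` (with
edge weights `w(i)·w(j) + δ(i,j)`) of total weight strictly greater than `16` is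
bipartite; the vertices `0, x, y, z` lie in a common connected component of `H`, with the
distance in `H` from `0` to each of `x, y, z` at most `2`; and every `2`-colouring `c`
that is proper on `H` satisfies `c 0 + c x + c y + c z = 0` in `ℤ/2`. -/
theorem stmt_13 (H : SimpleGraph (Fin 6)) [DecidableRel H.Adj] (htf : H.CliqueFree 3)
    (hw : 16 < ∑ q ∈ Finset.univ.filter (fun q : Fin 6 × Fin 6 => q.1 < q.2 ∧ H.Adj q.1 q.2),
      ew6 q.1 q.2) :
    H.Colorable 2 ∧
    (H.Reachable 0 3 ∧ H.Reachable 0 4 ∧ H.Reachable 0 5) ∧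
    (H.dist 0 3 ≤ 2 ∧ H.dist 0 4 ≤ 2 ∧ H.dist 0 5 ≤ 2) ∧
    ∀ c : Fin 6 → ZMod 2, (∀ i j, H.Adj i j → c i ≠ c j) →
      c 0 + c 3 + c 4 + c 5 = 0 := by
  obtain ⟨k, hk⟩ := adj6 H htf hw
  have walk : ∀ j, ∃ p : H.Walk 0 j, p.length ≤ 2 := by
    intro j
    by_cases h : col6 k 0 = col6 k j
    · have h01 : col6 k 0 ≠ col6 k 1 := ne6 k
      have a1 : H.Adj 0 1 := (hk _ _).2 h01
      have a2 : H.Adj 1 j := (hk _ _).2 (fun e => h01 (h.trans e.symm))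
      exact ⟨.cons a1 (.cons a2 .nil), by simp⟩
    · exact ⟨.cons ((hk _ _).2 h) .nil, by simp⟩
  have reach : ∀ j, H.Reachable 0 j := fun j => ⟨(walk j).choose⟩
  have dist : ∀ j, H.dist 0 j ≤ 2 := fun j =>
    (SimpleGraph.dist_le (walk j).choose).trans (walk j).choose_spec
  refine ⟨?_, ⟨reach _, reach _, reach _⟩, ⟨dist _, dist _, dist _⟩, ?_⟩
  · have C : H.Coloring Bool := SimpleGraph.Coloring.mk (col6 k) (fun {i j} h => (hk i j).1 h)
    simpa using C.colorable
  · intro c hc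
    have h : ∀ i j, col6 k i ≠ col6 k j → c i ≠ c j := fun i j e => hc i j ((hk i j).2 e)
    have z : ∀ u v : ZMod 2, u ≠ v → v = u + 1 := by decide
    have s : ∀ u : ZMod 2, u + u + u + u = 0 ∧ u + 1 + 1 = u := by decide
    have h01 := z _ _ (h 0 1 (ne6 k))
    have hj : ∀ j, c j = if col6 k 0 = col6 k j then c 0 else c 0 + 1 := by
      intro j
      split_ifs with e
      · have h01' : col6 k 0 ≠ col6 k 1 := ne6 k
        rw [z _ _ (h 1 j (fun e' => h01' (e.trans e'.symm))), h01, (s _).2]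
      · exact z _ _ (h 0 j e)
    rw [hj 3, hj 4, hj 5]
    generalize c 0 = u
    clear * -
    revert k u
    decide
end

section
/- Fix α, β ∈ ℝ with α² + β² = 1, and let x₁, x₂, x₃, y₁, y₂, y₃ be independent standard normal random variables (i.e., distributed according to the product of six copies of the Gaussian measure on ℝ with mean 0 and variance 1). Then the probability of the event {x₁ ≥ x₂, x₁ ≥ x₃, αx₁ + βy₁ ≥ αx₂ + βy₂, αx₁ + βy₁ ≥ αx₃ + βy₃} equals P(α) = 1/9 + (arcsin α + arcsin(α/2))/(4π) + ((arcsin α)² − (arcsin(α/2))²)/(4π²). -/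
open MeasureTheory ProbabilityTheory Real

/-- `P(α) = 1/9 + (arcsin α + arcsin(α/2))/(4π) + ((arcsin α)² − (arcsin(α/2))²)/(4π²)`. -/
noncomputable def Pfun (α : ℝ) : ℝ :=
  1 / 9 + (Real.arcsin α + Real.arcsin (α / 2)) / (4 * π) +
    ((Real.arcsin α) ^ 2 - (Real.arcsin (α / 2)) ^ 2) / (4 * π ^ 2)

noncomputable def gdens (z : ℂ) : ℝ := (1 / (2 * π)) * Real.exp (-‖z‖ ^ 2 / 2)

noncomputable def gC : Measure ℂ := volume.withDensity fun z => ENNReal.ofReal (gdens z)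

lemma gdens_cont : Continuous gdens := by unfold gdens; fun_prop

lemma gdens_nonneg (z : ℂ) : 0 ≤ gdens z := by unfold gdens; positivity

lemma gdens_integrable : Integrable gdens := by
  have h := GaussianFourier.integrable_cexp_neg_mul_sq_norm_add (V := ℂ) (b := 1 / 2)
    (by norm_num) 0 0
  have h2 := h.norm.const_mul (1 / (2 * π))
  refine h2.congr (Filter.Eventually.of_forall fun z => ?_)
  have e : (-(1 / 2 : ℂ)) * (‖z‖ : ℂ) ^ 2 + 0 * ((inner ℝ (0 : ℂ) z : ℝ) : ℂ)
      = ((-‖z‖ ^ 2 / 2 : ℝ) : ℂ) := by push_cast; ring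
  simp only [gdens, Complex.norm_exp, e, Complex.ofReal_re]

instance : IsFiniteMeasure gC := isFiniteMeasure_withDensity_ofReal gdens_integrable.2

lemma gC_charFun (t : ℂ) : charFun gC t = Complex.exp (-(‖t‖ : ℂ) ^ 2 / 2) := by
  rw [charFun_apply, gC, integral_withDensity_eq_integral_toReal_smul
    (by have := gdens_cont.measurable; fun_prop) (by simp)]
  have h := GaussianFourier.integral_cexp_neg_mul_sq_norm_add (V := ℂ) (b := 1 / 2)
    (by norm_num) Complex.I t
  have e : ∀ x : ℂ, (ENNReal.ofReal (gdens x)).toReal • Complex.exp (((inner ℝ x t : ℝ) : ℂ) * Complex.I)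
      = (1 / (2 * π) : ℂ) * Complex.exp (-(1 / 2 : ℂ) * (‖x‖ : ℂ) ^ 2 + Complex.I * ((inner ℝ t x : ℝ) : ℂ)) := by
    intro x
    rw [ENNReal.toReal_ofReal (gdens_nonneg x), Complex.real_smul, gdens, Complex.exp_add,
      real_inner_comm]
    push_cast
    rw [mul_assoc]
    congr 3
    · ring
    · ring
  simp_rw [e]
  rw [integral_const_mul, h, Complex.finrank_real_complex]
  have hpi : (π : ℂ) ≠ 0 := by exact_mod_cast Real.pi_ne_zero
  norm_num
  field_simp

noncomputable def Tmap (v : Fin 6 → ℝ) : ℂ × ℂ :=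
  (⟨(2 * v 0 - v 1 - v 2) / √6, (v 1 - v 2) / √2⟩,
   ⟨(2 * v 3 - v 4 - v 5) / √6, (v 4 - v 5) / √2⟩)

lemma measurable_mk {α : Type*} [MeasurableSpace α] {f g : α → ℝ} (hf : Measurable f)
    (hg : Measurable g) : Measurable fun a => (⟨f a, g a⟩ : ℂ) := by
  have : (fun a => (⟨f a, g a⟩ : ℂ)) = fun a => Complex.measurableEquivRealProd.symm (f a, g a) := rfl
  rw [this]
  fun_prop

lemma Tmap_meas : Measurable Tmap := by
  unfold Tmap
  exact (measurable_mk (by fun_prop) (by fun_prop)).prodMk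
    (measurable_mk (by fun_prop) (by fun_prop))

lemma map_Tmap : (Measure.pi fun _ : Fin 6 => gaussianReal 0 1).map Tmap = gC.prod gC := by
  have key : ((Measure.pi fun _ : Fin 6 => gaussianReal 0 1).map Tmap).map (WithLp.toLp 2)
      = (gC.prod gC).map (WithLp.toLp 2) := by
    have : IsFiniteMeasure (((Measure.pi fun _ : Fin 6 => gaussianReal 0 1).map Tmap).map
      (WithLp.toLp 2)) := inferInstance
    apply Measure.ext_of_charFun
    ext t
    rw [charFun_prod, gC_charFun, gC_charFun, ← Complex.exp_add, charFun_apply,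
      integral_map (by fun_prop) (by fun_prop),
      integral_map Tmap_meas.aemeasurable (by
        refine Measurable.aestronglyMeasurable ?_
        fun_prop)]
    set a := t.ofLp.1
    set b := t.ofLp.2
    let s : EuclideanSpace ℝ (Fin 6) := !₂[2 * a.re / √6, -a.re / √6 + a.im / √2,
      -a.re / √6 - a.im / √2, 2 * b.re / √6, -b.re / √6 + b.im / √2,
      -b.re / √6 - b.im / √2]
    have hs : ∀ v : Fin 6 → ℝ, (inner ℝ (WithLp.toLp 2 (Tmap v)) t : ℝ)
        = inner ℝ (WithLp.toLp 2 v) s := by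
      intro v
      rw [WithLp.prod_inner_apply, PiLp.inner_apply]
      simp [Fin.sum_univ_succ, s, Tmap, Complex.inner]
      have e1 : t.fst = a := rfl
      have e2 : t.snd = b := rfl
      rw [e1, e2]
      ring
    simp_rw [hs]
    have h2 := charFun_stdGaussian s
    rw [← map_pi_eq_stdGaussian, charFun_apply, integral_map (by fun_prop) (by fun_prop)] at h2
    rw [h2]
    congr 1
    have : ‖s‖ ^ 2 = ‖a‖ ^ 2 + ‖b‖ ^ 2 := by
      rw [EuclideanSpace.norm_sq_eq, Complex.sq_norm, Complex.sq_norm, Complex.normSq_apply,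
        Complex.normSq_apply]
      simp [Fin.sum_univ_succ, s]
      ring_nf
      have h6 : (√6)⁻¹ ^ 2 = 1 / 6 := by rw [inv_pow, Real.sq_sqrt (by norm_num)]; norm_num
      have h22 : (√2)⁻¹ ^ 2 = 1 / 2 := by rw [inv_pow, Real.sq_sqrt (by norm_num)]; norm_num
      rw [h6, h22]
      ring
    rw [← Complex.ofReal_pow, this]
    push_cast
    ring
  exact (MeasurableEquiv.toLp 2 (ℂ × ℂ)).map_measurableEquiv_injective key

def coneC : Set ℂ := {z | ‖z‖ ≤ 2 * z.re}

lemma coneC_meas : MeasurableSet coneC :=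
  measurableSet_le (by fun_prop) (by fun_prop)

lemma cone_iff (a b c : ℝ) : (b ≤ a ∧ c ≤ a) ↔
    (⟨(2 * a - b - c) / √6, (b - c) / √2⟩ : ℂ) ∈ coneC := by
  have h6 : √6 = √2 * √3 := by rw [← Real.sqrt_mul (by norm_num)]; norm_num
  have h2 : 0 < √2 := by positivity
  have h3 : 0 < √3 := by positivity
  have h33 : √3 ^ 2 = 3 := Real.sq_sqrt (by norm_num)
  have h22 : √2 ^ 2 = 2 := Real.sq_sqrt (by norm_num)
  have e : Complex.normSq (⟨(2 * a - b - c) / √6, (b - c) / √2⟩ : ℂ)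
      = (2 * a - b - c) ^ 2 / 6 + (b - c) ^ 2 / 2 := by
    rw [Complex.normSq_apply, h6]
    simp only []
    field_simp
    rw [h33, h22]
    ring
  simp only [coneC, Set.mem_ofPred_eq]
  rw [Complex.norm_def, e, Real.sqrt_le_iff]
  have e2 : (2 * ((2 * a - b - c) / √6)) ^ 2 = 4 * (2 * a - b - c) ^ 2 / 6 := by
    rw [h6]; field_simp; rw [h33, h22]; ring
  rw [e2]
  have h60 : 0 < √6 := by positivity
  constructor
  · rintro ⟨h1, h2⟩
    refine ⟨?_, by nlinarith⟩
    have : 0 ≤ 2 * a - b - c := by linarith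
    positivity
  · rintro ⟨h1, h2⟩
    have : 0 ≤ 2 * a - b - c := by
      by_contra hh
      push Not at hh
      have := div_neg_of_neg_of_pos hh h60
      linarith
    have : 0 ≤ (a - b) * (a - c) := by nlinarith
    constructor <;> by_contra hh <;> push Not at hh <;> nlinarith

lemma event_eq (α β : ℝ) :
    (Measure.pi fun _ : Fin 6 => gaussianReal 0 1)
      {v : Fin 6 → ℝ | v 1 ≤ v 0 ∧ v 2 ≤ v 0 ∧
        α * v 1 + β * v 4 ≤ α * v 0 + β * v 3 ∧
        α * v 2 + β * v 5 ≤ α * v 0 + β * v 3}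
    = ∫⁻ z, ∫⁻ w, ENNReal.ofReal (gdens z) * ENNReal.ofReal (gdens w) *
      (coneC.indicator 1 z * coneC.indicator 1 (α * z + β * w)) := by
  have hS : MeasurableSet {p : ℂ × ℂ | p.1 ∈ coneC ∧ (α * p.1 + β * p.2 : ℂ) ∈ coneC} := by
    apply MeasurableSet.inter
    · exact measurable_fst coneC_meas
    · exact (by fun_prop : Measurable fun p : ℂ × ℂ => (α * p.1 + β * p.2 : ℂ)) coneC_meas
  have hpre : {v : Fin 6 → ℝ | v 1 ≤ v 0 ∧ v 2 ≤ v 0 ∧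
        α * v 1 + β * v 4 ≤ α * v 0 + β * v 3 ∧
        α * v 2 + β * v 5 ≤ α * v 0 + β * v 3}
      = Tmap ⁻¹' {p : ℂ × ℂ | p.1 ∈ coneC ∧ (α * p.1 + β * p.2 : ℂ) ∈ coneC} := by
    ext v
    simp only [Set.mem_ofPred_eq, Set.mem_preimage, Tmap]
    rw [← and_assoc, cone_iff, cone_iff]
    have : ∀ x y : ℂ, x = y → (x ∈ coneC ↔ y ∈ coneC) := by rintro x y rfl; rfl
    refine and_congr Iff.rfl (this _ _ ?_)
    apply Complex.ext <;> simp <;> ring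
  have hm := gdens_cont.measurable
  have hi : Measurable (coneC.indicator (1 : ℂ → ENNReal)) :=
    measurable_one.indicator coneC_meas
  rw [hpre, ← Measure.map_apply Tmap_meas hS, map_Tmap, Measure.prod_apply hS]
  conv_lhs => rw [gC]
  rw [lintegral_withDensity_eq_lintegral_mul _ (by fun_prop) (measurable_measure_prodMk_left hS)]
  refine lintegral_congr fun z => ?_
  simp only [Pi.mul_apply]
  rw [withDensity_apply _ (measurable_prodMk_left hS), ← lintegral_indicator (measurable_prodMk_left hS),
    ← lintegral_const_mul _ (Measurable.indicator (by fun_prop) (measurable_prodMk_left hS))]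
  refine lintegral_congr fun w => ?_
  by_cases h1 : z ∈ coneC <;> by_cases h2 : (α * z + β * w : ℂ) ∈ coneC <;>
    simp [Set.indicator, h1, h2]

lemma lintegral_Ioi_FTC {g g' : ℝ → ℝ} {l : ℝ}
    (h : ∀ x ∈ Set.Ici (0 : ℝ), HasDerivAt g (g' x) x) (h0 : ∀ x ∈ Set.Ioi (0 : ℝ), 0 ≤ g' x)
    (hl : Filter.Tendsto g Filter.atTop (nhds l)) :
    0 ≤ l - g 0 ∧
    ∫⁻ x in Set.Ioi (0 : ℝ), ENNReal.ofReal (g' x) = ENNReal.ofReal (l - g 0) := by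
  refine ⟨?_, ?_⟩
  · rw [← integral_Ioi_of_hasDerivAt_of_nonneg' h h0 hl]
    exact setIntegral_nonneg measurableSet_Ioi h0
  rw [← integral_Ioi_of_hasDerivAt_of_nonneg' h h0 hl,
    ofReal_integral_eq_lintegral_ofReal (integrableOn_Ioi_deriv_of_nonneg' h h0 hl)]
  exact (ae_restrict_iff' measurableSet_Ioi).2 (Filter.Eventually.of_forall h0)

/-- radial integral in `z` -/
lemma radial (A : ℝ) (hA : 0 < A) :
    ∫⁻ r in Set.Ioi (0 : ℝ), ENNReal.ofReal (r ^ 3 * Real.exp (-(A * r ^ 2 / 2)))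
      = ENNReal.ofReal (2 / A ^ 2) := by
  have := lintegral_Ioi_FTC (g := fun r => -(r ^ 2 / A + 2 / A ^ 2) * Real.exp (-(A * r ^ 2 / 2)))
    (g' := fun r => r ^ 3 * Real.exp (-(A * r ^ 2 / 2))) (l := 0) ?_ ?_ ?_
  · rw [this.2]; congr 1; simp
  · intro r _
    have h1 : HasDerivAt (fun r : ℝ => -(r ^ 2 / A + 2 / A ^ 2)) (-(2 * r / A)) r := by
      have := (((hasDerivAt_id r).pow 2).div_const A).add_const (2 / A ^ 2) |>.neg
      refine this.congr_deriv ?_; simp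
    have h2 : HasDerivAt (fun r : ℝ => -(A * r ^ 2 / 2)) (-(A * r)) r := by
      have := (((hasDerivAt_id r).pow 2).const_mul A).div_const 2 |>.neg
      refine this.congr_deriv ?_; simp; ring
    refine (h1.mul h2.exp).congr_deriv ?_
    field_simp
    ring
  · intro r hr
    have : 0 < r := hr
    positivity
  · have hx : Filter.Tendsto (fun r : ℝ => A * r ^ 2 / 2) Filter.atTop Filter.atTop := by
      have := (Filter.tendsto_pow_atTop (α := ℝ) (n := 2) (by norm_num)).const_mul_atTop
        (show 0 < A / 2 by positivity)
      refine this.congr fun r => by ring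
    have h1 := (Real.tendsto_pow_mul_exp_neg_atTop_nhds_zero 1).comp hx
    have h0 := (Real.tendsto_pow_mul_exp_neg_atTop_nhds_zero 0).comp hx
    have := (h1.const_mul (-(2 / A ^ 2))).add (h0.const_mul (-(2 / A ^ 2)))
    simp only [mul_zero, add_zero] at this
    refine this.congr fun r => ?_
    simp only [Function.comp]
    field_simp
    ring

/-- radial integral in `u` -/
lemma radial2 (μ : ℝ) (h1 : μ ^ 2 < 1) :
    0 ≤ 1 / (2 * (1 - μ ^ 2)) + μ * (π / 2 + arcsin μ) / (2 * √(1 - μ ^ 2) ^ 3) ∧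
    ∫⁻ r in Set.Ioi (0 : ℝ), ENNReal.ofReal (r / (r ^ 2 - 2 * μ * r + 1) ^ 2)
      = ENNReal.ofReal (1 / (2 * (1 - μ ^ 2)) +
          μ * (π / 2 + arcsin μ) / (2 * √(1 - μ ^ 2) ^ 3)) := by
  set s := √(1 - μ ^ 2) with hs
  have hs0 : 0 < s := Real.sqrt_pos.2 (by linarith)
  have hss : s ^ 2 = 1 - μ ^ 2 := Real.sq_sqrt (by linarith)
  have hD : ∀ r : ℝ, 0 < r ^ 2 - 2 * μ * r + 1 := fun r => by nlinarith [sq_nonneg (r - μ)]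
  have := lintegral_Ioi_FTC
    (g := fun r => (-1 / 2 + μ * (r - μ) / (2 * s ^ 2)) / (r ^ 2 - 2 * μ * r + 1)
      + μ / (2 * s ^ 3) * arctan ((r - μ) / s))
    (g' := fun r => r / (r ^ 2 - 2 * μ * r + 1) ^ 2) (l := 0 + μ / (2 * s ^ 3) * (π / 2)) ?_ ?_ ?_
  · have ha : arctan ((0 - μ) / s) = - arcsin μ := by
      rw [Real.arcsin_eq_arctan (by constructor <;> nlinarith), ← Real.arctan_neg, ← hs]
      congr 1; ring
    simp only [ha] at this
    have e : 0 + μ / (2 * s ^ 3) * (π / 2) - ((-1 / 2 + μ * (0 - μ) / (2 * s ^ 2)) /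
        (0 ^ 2 - 2 * μ * 0 + 1) + μ / (2 * s ^ 3) * -arcsin μ)
        = 1 / (2 * (1 - μ ^ 2)) + μ * (π / 2 + arcsin μ) / (2 * s ^ 3) := by
      rw [← hss]
      field_simp
      nlinarith
    rwa [e] at this
  · intro r _
    have hn : HasDerivAt (fun r : ℝ => -1 / 2 + μ * (r - μ) / (2 * s ^ 2)) (μ / (2 * s ^ 2)) r := by
      have := ((((hasDerivAt_id r).sub_const μ).const_mul μ).div_const (2 * s ^ 2)).const_add (-1 / 2)
      refine this.congr_deriv ?_; simp
    have hd : HasDerivAt (fun r : ℝ => r ^ 2 - 2 * μ * r + 1) (2 * r - 2 * μ) r := by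
      have := (((hasDerivAt_id r).pow 2).sub ((hasDerivAt_id r).const_mul (2 * μ))).add_const 1
      refine this.congr_deriv ?_; simp
    have ht : HasDerivAt (fun r : ℝ => (r - μ) / s) (1 / s) r :=
      ((hasDerivAt_id r).sub_const μ).div_const s
    refine ((hn.div hd (hD r).ne').add ((ht.arctan).const_mul (μ / (2 * s ^ 3)))).congr_deriv ?_
    have e : 1 + ((r - μ) / s) ^ 2 = (r ^ 2 - 2 * μ * r + 1) / s ^ 2 := by
      field_simp; rw [hss]; ring
    rw [e]
    have := (hD r).ne'
    field_simp
    rw [hss]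
    ring
  · intro r hr
    have : 0 < r := hr
    have := hD r
    positivity
  · apply Filter.Tendsto.add
    · have e : ∀ᶠ r : ℝ in Filter.atTop,
        ((-1 / 2 - μ ^ 2 / (2 * s ^ 2)) * r⁻¹ ^ 2 + μ / (2 * s ^ 2) * r⁻¹) / (1 - 2 * μ * r⁻¹ + r⁻¹ ^ 2)
        = (-1 / 2 + μ * (r - μ) / (2 * s ^ 2)) / (r ^ 2 - 2 * μ * r + 1) := by
        filter_upwards [Filter.eventually_gt_atTop 0] with r hr
        have := (hD r).ne'
        have h2 : 1 - 2 * μ * r⁻¹ + r⁻¹ ^ 2 = (r ^ 2 - 2 * μ * r + 1) / r ^ 2 := by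
          field_simp
        rw [h2]
        field_simp
        ring
      have hi := tendsto_inv_atTop_zero (𝕜 := ℝ)
      have ht : Filter.Tendsto (fun r : ℝ => ((-1 / 2 - μ ^ 2 / (2 * s ^ 2)) * r⁻¹ ^ 2 +
          μ / (2 * s ^ 2) * r⁻¹) / (1 - 2 * μ * r⁻¹ + r⁻¹ ^ 2)) Filter.atTop
          (nhds (((-1 / 2 - μ ^ 2 / (2 * s ^ 2)) * 0 ^ 2 +
          μ / (2 * s ^ 2) * 0) / (1 - 2 * μ * 0 + 0 ^ 2))) :=
        (((hi.pow 2).const_mul _).add (hi.const_mul _)).div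
          ((tendsto_const_nhds.sub (hi.const_mul _)).add (hi.pow 2)) (by norm_num)
      simp only [ne_eq, OfNat.ofNat_ne_zero, not_false_eq_true, zero_pow, mul_zero, add_zero,
        zero_div] at ht
      exact ht.congr' e
    · refine Filter.Tendsto.const_mul _ ?_
      refine (Real.tendsto_arctan_atTop.mono_right nhdsWithin_le_nhds).comp ?_
      exact (Filter.tendsto_atTop_add_const_right _ (-μ) Filter.tendsto_id).atTop_div_const hs0

noncomputable def bfun (α φ : ℝ) : ℝ := π / 2 + arcsin (α * cos φ)

lemma kfun_eq (α β : ℝ) (hab : α ^ 2 + β ^ 2 = 1) (hβ : β ≠ 0) (φ : ℝ) : (α * cos φ) ^ 2 < 1 := by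
  have : 0 < β ^ 2 := by positivity
  nlinarith [sin_sq_add_cos_sq φ, sq_nonneg (α * sin φ)]

noncomputable def kfun (α β φ : ℝ) : ℝ :=
  β ^ 2 / (2 * π ^ 2) * (1 / (2 * (1 - (α * cos φ) ^ 2)) +
          (α * cos φ) * (π / 2 + arcsin (α * cos φ)) / (2 * √(1 - (α * cos φ) ^ 2) ^ 3))

lemma kfun_deriv (α β : ℝ) (hab : α ^ 2 + β ^ 2 = 1) (hβ : β ≠ 0) (φ : ℝ) :
    HasDerivAt (fun φ => (φ ^ 2 - (bfun α φ) ^ 2) / (8 * π ^ 2))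
      ((φ + bfun α φ * (α * sin φ) / √(1 - (α * cos φ) ^ 2)) / (4 * π ^ 2)) φ ∧
    HasDerivAt (fun φ => (φ + bfun α φ * (α * sin φ) / √(1 - (α * cos φ) ^ 2)) / (4 * π ^ 2))
      (kfun α β φ) φ := by
  have hμ := kfun_eq α β hab hβ φ
  set s := √(1 - (α * cos φ) ^ 2) with hs
  have hs0 : 0 < s := Real.sqrt_pos.2 (by linarith)
  have hss : s ^ 2 = 1 - (α * cos φ) ^ 2 := Real.sq_sqrt (by linarith)
  have hm : HasDerivAt (fun φ => α * cos φ) (α * (- sin φ)) φ := (hasDerivAt_cos φ).const_mul α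
  have hb : HasDerivAt (bfun α) (1 / s * (α * (- sin φ))) φ := by
    have := (Real.hasDerivAt_arcsin (x := α * cos φ) (by nlinarith) (by nlinarith)).comp φ hm
    exact this.const_add _
  have hsd : HasDerivAt (fun φ => √(1 - (α * cos φ) ^ 2))
      ((α * cos φ) * (α * sin φ) / s) φ := by
    have := ((hm.pow 2).const_sub 1).sqrt (by simp; nlinarith)
    refine this.congr_deriv ?_
    simp only [Pi.pow_apply]
    rw [← hs]
    field_simp
    simp
    ring
  constructor
  · have := (((hasDerivAt_id φ).pow 2).sub (hb.pow 2)).div_const (8 * π ^ 2)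
    refine this.congr_deriv ?_
    simp
    field_simp
    ring
  · have := ((hasDerivAt_id φ).add ((hb.mul ((hasDerivAt_sin φ).const_mul α)).div hsd hs0.ne')).div_const (4 * π ^ 2)
    refine this.congr_deriv ?_
    unfold kfun
    rw [← hs, ← hss]
    simp only [Pi.mul_apply]
    rw [show π / 2 + arcsin (α * cos φ) = bfun α φ from rfl]
    have hc : sin φ ^ 2 = 1 - cos φ ^ 2 := by linarith [sin_sq_add_cos_sq φ]
    have hβ2 : β ^ 2 = s ^ 2 - α ^ 2 * sin φ ^ 2 := by rw [hss, hc]; linarith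
    rw [hβ2]
    field_simp
    ring

lemma kfun_nonneg (α β : ℝ) (hab : α ^ 2 + β ^ 2 = 1) (hβ : β ≠ 0) (φ : ℝ) : 0 ≤ kfun α β φ :=
  mul_nonneg (by positivity) (radial2 _ (kfun_eq α β hab hβ φ)).1

lemma kfun_cont (α β : ℝ) (hab : α ^ 2 + β ^ 2 = 1) (hβ : β ≠ 0) : Continuous (kfun α β) := by
  unfold kfun
  have h := kfun_eq α β hab hβ
  have h1 : ∀ φ, 2 * (1 - (α * cos φ) ^ 2) ≠ 0 := fun φ => by
    have := h φ
    apply ne_of_gt; linarith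
  have h2 : ∀ φ, 2 * √(1 - (α * cos φ) ^ 2) ^ 3 ≠ 0 := fun φ => by
    have := h φ
    have : 0 < √(1 - (α * cos φ) ^ 2) := Real.sqrt_pos.2 (by linarith)
    positivity
  have := Real.continuous_arcsin
  exact continuous_const.mul ((continuous_const.div (by fun_prop) h1).add
    (Continuous.div (by fun_prop) (by fun_prop) h2))

lemma final_integral (α β : ℝ) (hab : α ^ 2 + β ^ 2 = 1) (hβ : β ≠ 0) :
    ∫⁻ φ in Set.Ioo (-π) π, ENNReal.ofReal (2 * π / 3 - |φ|) * ENNReal.ofReal (kfun α β φ)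
      = ENNReal.ofReal (Pfun α) := by
  have hpi := Real.pi_pos
  set γ := 2 * π / 3 with hγ
  have hγ0 : 0 < γ := by positivity
  have hc := kfun_cont α β hab hβ
  have hcont : Continuous fun φ => (γ - |φ|) * kfun α β φ := by fun_prop
  have e1 : ∫⁻ φ in Set.Ioo (-π) π, ENNReal.ofReal (γ - |φ|) * ENNReal.ofReal (kfun α β φ)
      = ∫⁻ φ in Set.Ioc (-γ) γ, ENNReal.ofReal ((γ - |φ|) * kfun α β φ) := by
    rw [← lintegral_indicator measurableSet_Ioo, ← lintegral_indicator measurableSet_Ioc]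
    refine lintegral_congr fun φ => ?_
    by_cases h : φ ∈ Set.Ioc (-γ) γ
    · have h' : φ ∈ Set.Ioo (-π) π := ⟨by linarith [h.1], by linarith [h.2]⟩
      rw [Set.indicator_of_mem h, Set.indicator_of_mem h', ENNReal.ofReal_mul]
      have : |φ| ≤ γ := abs_le.2 ⟨h.1.le, h.2⟩
      linarith
    · rw [Set.indicator_of_notMem h]
      have : γ ≤ |φ| := by
        by_contra hh
        push Not at hh
        have := abs_lt.1 hh
        exact h ⟨this.1, this.2.le⟩
      simp [Set.indicator, ENNReal.ofReal_of_nonpos (show γ - |φ| ≤ 0 by linarith)]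
  rw [e1, ← ofReal_integral_eq_lintegral_ofReal
    ((hcont.integrableOn_Icc (a := -γ) (b := γ)).mono_set Set.Ioc_subset_Icc_self)]
  swap
  · refine (ae_restrict_iff' measurableSet_Ioc).2 (Filter.Eventually.of_forall fun φ h => ?_)
    have : |φ| ≤ γ := abs_le.2 ⟨h.1.le, h.2⟩
    exact mul_nonneg (by linarith) (kfun_nonneg α β hab hβ φ)
  congr 1
  rw [← intervalIntegral.integral_of_le (by linarith),
    ← intervalIntegral.integral_add_adjacent_intervals (b := 0)
      (hcont.intervalIntegrable _ _) (hcont.intervalIntegrable _ _)]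
  set G := fun φ => (φ ^ 2 - (bfun α φ) ^ 2) / (8 * π ^ 2) with hG
  set G' := fun φ => (φ + bfun α φ * (α * sin φ) / √(1 - (α * cos φ) ^ 2)) / (4 * π ^ 2) with hG'
  have hd : ∀ φ, HasDerivAt G (G' φ) φ ∧ HasDerivAt G' (kfun α β φ) φ :=
    kfun_deriv α β hab hβ
  have I1 : ∫ φ in (-γ)..0, (γ - |φ|) * kfun α β φ = G (-γ) - G 0 := by
    have e : ∫ φ in (-γ)..0, (γ - |φ|) * kfun α β φ = ∫ φ in (-γ)..0, (γ + φ) * kfun α β φ := by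
      apply intervalIntegral.integral_congr
      intro φ h
      rw [Set.uIcc_of_le (by linarith)] at h
      simp only [abs_of_nonpos h.2, sub_neg_eq_add]
    rw [e, intervalIntegral.integral_eq_sub_of_hasDerivAt
      (f := fun φ => (γ + φ) * G' φ - G φ)]
    · simp [hG']
      ring
    · intro φ _
      refine ((((hasDerivAt_id φ).const_add γ).mul (hd φ).2).sub (hd φ).1).congr_deriv ?_
      simp
    · exact Continuous.intervalIntegrable (by fun_prop) _ _
  have I2 : ∫ φ in 0..γ, (γ - |φ|) * kfun α β φ = G γ - G 0 := by
    have e : ∫ φ in 0..γ, (γ - |φ|) * kfun α β φ = ∫ φ in 0..γ, (γ - φ) * kfun α β φ := by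
      apply intervalIntegral.integral_congr
      intro φ h
      rw [Set.uIcc_of_le (by linarith)] at h
      simp only [abs_of_nonneg h.1]
    rw [e, intervalIntegral.integral_eq_sub_of_hasDerivAt
      (f := fun φ => (γ - φ) * G' φ + G φ)]
    · simp [hG']
    · intro φ _
      refine ((((hasDerivAt_id φ).const_sub γ).mul (hd φ).2).add (hd φ).1).congr_deriv ?_
      simp
    · exact Continuous.intervalIntegrable (by fun_prop) _ _
  have hcos : cos γ = -(1 / 2) := by
    rw [hγ, show 2 * π / 3 = π - π / 3 by ring, cos_pi_sub, cos_pi_div_three]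
  have hbγ : bfun α γ = π / 2 - arcsin (α / 2) := by
    rw [bfun, hcos, show α * -(1 / 2) = -(α / 2) by ring, arcsin_neg]; ring
  have hbγ' : bfun α (-γ) = π / 2 - arcsin (α / 2) := by
    rw [← hbγ, bfun, bfun, cos_neg]
  have hb0 : bfun α 0 = π / 2 + arcsin α := by simp [bfun]
  rw [I1, I2]
  simp only [hG, hbγ, hbγ', hb0, Pfun]
  simp only [hγ]
  field_simp
  ring

lemma lintegral_affine (c d : ℂ) (hc : c ≠ 0) (f : ℂ → ENNReal) (hf : Measurable f) :
    ∫⁻ w, f w = ∫⁻ u, ENNReal.ofReal (‖c‖ ^ 2) * f (c * u + d) := by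
  have hdet : LinearMap.det (Algebra.lmul ℝ ℂ c) = ‖c‖ ^ 2 := by
    rw [← Algebra.norm_apply, Algebra.norm_complex_eq, Complex.sq_norm]; rfl
  have hn : 0 < ‖c‖ ^ 2 := by positivity
  have hmap := Measure.map_linearMap_addHaar_eq_smul_addHaar (volume : Measure ℂ)
    (f := Algebra.lmul ℝ ℂ c) (by rw [hdet]; exact hn.ne')
  rw [hdet, abs_of_pos (inv_pos.2 hn)] at hmap
  rw [lintegral_const_mul _ (by fun_prop), ← lintegral_add_right_eq_self f d]
  have h2 : ∫⁻ u, f (c * u + d) = ∫⁻ w, f (w + d) ∂(Measure.map (Algebra.lmul ℝ ℂ c) volume) := by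
    rw [lintegral_map (by fun_prop)]
    · rfl
    · exact (by fun_prop : Measurable fun u : ℂ => c * u)
  rw [h2, hmap, lintegral_smul_measure, smul_eq_mul, ← mul_assoc, ← ENNReal.ofReal_mul hn.le,
    mul_inv_cancel₀ hn.ne', ENNReal.ofReal_one, one_mul]

lemma cos_half_iff (x : ℝ) (hx : |x| ≤ 4 * π / 3) : 1 ≤ 2 * cos x ↔ |x| ≤ π / 3 := by
  have hpi := Real.pi_pos
  rw [← cos_abs]
  have h0 := abs_nonneg x
  generalize |x| = y at *
  have h3 := cos_pi_div_three
  constructor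
  · intro h
    by_contra hh
    push Not at hh
    rcases le_or_gt y π with h1 | h1
    · have := cos_lt_cos_of_nonneg_of_le_pi (by positivity) h1 hh
      linarith
    · have := cos_neg_of_pi_div_two_lt_of_lt (x := y) (by linarith) (by linarith)
      linarith
  · intro h
    have := cos_le_cos_of_nonneg_of_le_pi h0 (by linarith) h
    linarith

lemma polar_eq (p : ℝ × ℝ) : Complex.polarCoord.symm p = (p.1 : ℂ) * Complex.exp (p.2 * Complex.I) := by
  rw [Complex.polarCoord_symm_apply, Complex.exp_mul_I]
  simp

lemma mem_cone_iff (r x : ℝ) (hr : 0 < r) (hx : |x| ≤ 4 * π / 3) :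
    (r : ℂ) * Complex.exp (x * Complex.I) ∈ coneC ↔ |x| ≤ π / 3 := by
  rw [← cos_half_iff x hx]
  simp only [coneC, Set.mem_ofPred_eq]
  rw [norm_mul, Complex.norm_exp_ofReal_mul_I, Complex.re_ofReal_mul, Complex.exp_ofReal_mul_I_re,
    Complex.norm_real, Real.norm_of_nonneg hr.le]
  constructor
  · intro h; nlinarith
  · intro h; nlinarith

lemma angle_vol (φ : ℝ) (hφ : φ ∈ Set.Ioo (-π) π) :
    ∫⁻ θ in Set.Ioo (-π) π, ({θ : ℝ | |θ| ≤ π / 3 ∧ |θ + φ| ≤ π / 3}.indicator 1 θ : ENNReal)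
      = ENNReal.ofReal (2 * π / 3 - |φ|) := by
  have hpi := Real.pi_pos
  have hset : {θ : ℝ | |θ| ≤ π / 3 ∧ |θ + φ| ≤ π / 3}
      = Set.Icc (max (-(π / 3)) (-(π / 3) - φ)) (min (π / 3) (π / 3 - φ)) := by
    ext θ
    simp only [Set.mem_ofPred_eq, Set.mem_Icc, abs_le, max_le_iff, le_min_iff]
    constructor
    · rintro ⟨⟨a, b⟩, c, d⟩; refine ⟨⟨?_, ?_⟩, ?_, ?_⟩ <;> linarith
    · rintro ⟨⟨a, b⟩, c, d⟩; refine ⟨⟨?_, ?_⟩, ?_, ?_⟩ <;> linarith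
  rw [hset, lintegral_indicator_one measurableSet_Icc, Measure.restrict_apply measurableSet_Icc,
    Set.inter_eq_left.2, Real.volume_Icc]
  · congr 1
    rcases le_total 0 φ with h | h
    · rw [max_eq_left (by linarith), min_eq_right (by linarith), abs_of_nonneg h]; ring
    · rw [max_eq_right (by linarith), min_eq_left (by linarith), abs_of_nonpos h]; ring
  · rw [← hset]
    rintro θ ⟨h, -⟩
    rw [abs_le] at h
    exact ⟨by linarith, by linarith⟩

lemma inner_z (α β : ℝ) (hab : α ^ 2 + β ^ 2 = 1) (hβ : β ≠ 0) (ρ φ : ℝ) (hρ : 0 < ρ)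
    (hφ : φ ∈ Set.Ioo (-π) π) (u : ℂ) (hu : u = (ρ : ℂ) * Complex.exp (φ * Complex.I)) :
    ∫⁻ z : ℂ, ENNReal.ofReal (‖z / β‖ ^ 2) * (ENNReal.ofReal (gdens z) *
        ENNReal.ofReal (gdens (z / β * u + -(α * z / β))) *
      (coneC.indicator 1 z * coneC.indicator 1 (z * u)))
    = ENNReal.ofReal (β ^ 2 / (2 * π ^ 2) / (ρ ^ 2 - 2 * (α * cos φ) * ρ + 1) ^ 2) *
      ENNReal.ofReal (2 * π / 3 - |φ|) := by
  have hpi := Real.pi_pos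
  have hβ2 : 0 < β ^ 2 := by positivity
  set D := ρ ^ 2 - 2 * (α * cos φ) * ρ + 1 with hD
  have hsub : Complex.normSq (u - α) = ρ ^ 2 - 2 * (α * cos φ) * ρ + α ^ 2 := by
    rw [hu, Complex.normSq_apply]
    simp [Complex.exp_ofReal_mul_I_re, Complex.exp_ofReal_mul_I_im]
    nlinarith [sin_sq_add_cos_sq φ]
  have hD0 : 0 < D := by
    have := Complex.normSq_nonneg (u - α)
    rw [hsub] at this
    linarith
  set A := D / β ^ 2 with hA
  have hA0 : 0 < A := by positivity
  rw [← Complex.lintegral_comp_polarCoord_symm]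
  have hcongr : ∀ p ∈ polarCoord.target, ENNReal.ofReal p.1 • (fun z : ℂ => ENNReal.ofReal (‖z / β‖ ^ 2) *
      (ENNReal.ofReal (gdens z) * ENNReal.ofReal (gdens (z / β * u + -(α * z / β))) *
      ((coneC.indicator 1 z : ENNReal) * coneC.indicator 1 (z * u)))) (Complex.polarCoord.symm p)
      = (ENNReal.ofReal (1 / (4 * π ^ 2 * β ^ 2)) *
          ENNReal.ofReal (p.1 ^ 3 * Real.exp (-(A * p.1 ^ 2 / 2)))) *
        {θ : ℝ | |θ| ≤ π / 3 ∧ |θ + φ| ≤ π / 3}.indicator 1 p.2 := by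
    rintro ⟨r, θ⟩ ⟨hr, hθ⟩
    simp only [Set.mem_Ioi] at hr
    simp only [polar_eq, smul_eq_mul]
    set z := (r : ℂ) * Complex.exp (θ * Complex.I) with hz
    have hnz : ‖z‖ = r := by
      rw [hz, norm_mul, Complex.norm_exp_ofReal_mul_I, Complex.norm_real, Real.norm_of_nonneg hr.le,
        mul_one]
    have hzu : z * u = ((r * ρ : ℝ) : ℂ) * Complex.exp ((θ + φ : ℝ) * Complex.I) := by
      rw [hz, hu]; push_cast; rw [add_mul, Complex.exp_add]; ring
    have hzA : ‖z / β * u + -(α * z / β)‖ ^ 2 = r ^ 2 * (D - β ^ 2) / β ^ 2 := by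
      have : z / β * u + -(α * z / β) = z / β * (u - α) := by ring
      rw [this, norm_mul, mul_pow, norm_div, hnz, Complex.sq_norm (u - α), hsub, Complex.norm_real,
        Real.norm_eq_abs, div_pow, sq_abs, hD]
      rw [show ρ ^ 2 - 2 * (α * cos φ) * ρ + 1 - β ^ 2 = ρ ^ 2 - 2 * (α * cos φ) * ρ + α ^ 2 by linarith]
      ring
    by_cases hq : |θ| ≤ π / 3 ∧ |θ + φ| ≤ π / 3
    · have h1 : z ∈ coneC := (mem_cone_iff r θ hr (by linarith [hq.1])).2 hq.1
      have h2 : z * u ∈ coneC := by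
        rw [hzu]; exact (mem_cone_iff _ _ (by positivity) (by linarith [hq.2])).2 hq.2
      rw [Set.indicator_of_mem h1, Set.indicator_of_mem h2,
        Set.indicator_of_mem (show θ ∈ {θ : ℝ | |θ| ≤ π / 3 ∧ |θ + φ| ≤ π / 3} from hq)]
      simp only [Pi.one_apply, mul_one]
      rw [← ENNReal.ofReal_mul (gdens_nonneg _), ← ENNReal.ofReal_mul (by positivity),
        ← ENNReal.ofReal_mul hr.le, ← ENNReal.ofReal_mul (by positivity)]
      congr 1
      rw [gdens, gdens, hzA, norm_div, hnz, Complex.norm_real, Real.norm_eq_abs, div_pow, sq_abs]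
      have : Real.exp (-(A * r ^ 2 / 2)) = Real.exp (-r ^ 2 / 2) *
          Real.exp (-(r ^ 2 * (D - β ^ 2) / β ^ 2) / 2) := by
        rw [← Real.exp_add, hA]; congr 1; field_simp; ring
      rw [this]
      field_simp
      norm_num
    · rw [Set.indicator_of_notMem (show θ ∉ {θ : ℝ | |θ| ≤ π / 3 ∧ |θ + φ| ≤ π / 3} from hq)]
      have : z ∉ coneC ∨ z * u ∉ coneC := by
        by_contra hh
        push Not at hh
        have a1 : |θ| ≤ π / 3 := (mem_cone_iff r θ hr (by
          rw [abs_le]; constructor <;> linarith [hθ.1, hθ.2])).1 hh.1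
        refine hq ⟨a1, ?_⟩
        have := hh.2
        rw [hzu] at this
        refine (mem_cone_iff _ _ (by positivity) ?_).1 this
        rw [abs_le] at a1 ⊢
        constructor <;> linarith [hφ.1, hφ.2]
      rcases this with h | h <;> simp [h]
  rw [setLIntegral_congr_fun (by
    exact (measurableSet_Ioi.prod measurableSet_Ioo)) hcongr]
  have ht : polarCoord.target = Set.Ioi (0 : ℝ) ×ˢ Set.Ioo (-π) π := rfl
  have hms : MeasurableSet {θ : ℝ | |θ| ≤ π / 3 ∧ |θ + φ| ≤ π / 3} :=
    MeasurableSet.inter (s₁ := {θ : ℝ | |θ| ≤ π / 3}) (s₂ := {θ : ℝ | |θ + φ| ≤ π / 3})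
      (measurableSet_le (by fun_prop) (by fun_prop)) (measurableSet_le (by fun_prop) (by fun_prop))
  rw [ht, Measure.volume_eq_prod, ← Measure.prod_restrict,
    lintegral_prod_mul (f := fun r => ENNReal.ofReal (1 / (4 * π ^ 2 * β ^ 2)) *
          ENNReal.ofReal (r ^ 3 * Real.exp (-(A * r ^ 2 / 2))))
      (g := fun θ => {θ : ℝ | |θ| ≤ π / 3 ∧ |θ + φ| ≤ π / 3}.indicator 1 θ) (by fun_prop)
      (measurable_one.indicator hms).aemeasurable,
    angle_vol φ hφ, lintegral_const_mul _ (by fun_prop), radial A hA0,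
    ← ENNReal.ofReal_mul (by positivity)]
  congr 2
  rw [hA]
  field_simp
  norm_num

lemma core (α β : ℝ) (hab : α ^ 2 + β ^ 2 = 1) (hβ : β ≠ 0) :
    ∫⁻ z : ℂ, ∫⁻ w : ℂ, ENNReal.ofReal (gdens z) * ENNReal.ofReal (gdens w) *
      (coneC.indicator 1 z * coneC.indicator 1 (α * z + β * w)) = ENNReal.ofReal (Pfun α) := by
  have hm := gdens_cont.measurable
  have hi : Measurable (coneC.indicator (1 : ℂ → ENNReal)) :=
    measurable_one.indicator coneC_meas
  have hβc : (β : ℂ) ≠ 0 := by exact_mod_cast hβ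
  have s1 : ∫⁻ z : ℂ, ∫⁻ w : ℂ, ENNReal.ofReal (gdens z) * ENNReal.ofReal (gdens w) *
      (coneC.indicator 1 z * coneC.indicator 1 (α * z + β * w))
      = ∫⁻ z : ℂ, ∫⁻ u : ℂ, ENNReal.ofReal (‖z / β‖ ^ 2) * (ENNReal.ofReal (gdens z) *
        ENNReal.ofReal (gdens (z / β * u + -(α * z / β))) *
      (coneC.indicator 1 z * coneC.indicator 1 (z * u))) := by
    apply lintegral_congr_ae
    filter_upwards [compl_mem_ae_iff.2 (measure_singleton (0 : ℂ))] with z hz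
    have hz : z ≠ 0 := hz
    rw [lintegral_affine (z / β) (-(α * z / β)) (div_ne_zero hz hβc) _ (by fun_prop)]
    refine lintegral_congr fun u => ?_
    have : (α * z + β * (z / β * u + -(α * z / β)) : ℂ) = z * u := by field_simp; ring
    rw [this]
  rw [s1, lintegral_lintegral_swap (by fun_prop), ← Complex.lintegral_comp_polarCoord_symm]
  rw [setLIntegral_congr_fun (g := fun p : ℝ × ℝ =>
    (ENNReal.ofReal (β ^ 2 / (2 * π ^ 2)) * ENNReal.ofReal (p.1 / (p.1 ^ 2 - 2 * (α * cos p.2) * p.1 + 1) ^ 2)) *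
      ENNReal.ofReal (2 * π / 3 - |p.2|)) (by
    exact (measurableSet_Ioi.prod measurableSet_Ioo))]
  swap
  · rintro ⟨ρ, φ⟩ ⟨hρ, hφ⟩
    simp only [Set.mem_Ioi] at hρ
    simp only [smul_eq_mul]
    rw [inner_z α β hab hβ ρ φ hρ hφ _ (polar_eq _), ← mul_assoc, ← ENNReal.ofReal_mul hρ.le,
      ← ENNReal.ofReal_mul (show 0 ≤ β ^ 2 / (2 * π ^ 2) by positivity)]
    congr 2
    ring
  have ht : polarCoord.target = Set.Ioi (0 : ℝ) ×ˢ Set.Ioo (-π) π := rfl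
  rw [ht, Measure.volume_eq_prod, ← Measure.prod_restrict, lintegral_prod_symm _ (by fun_prop),
    ← final_integral α β hab hβ]
  refine lintegral_congr fun φ => ?_
  simp only []
  rw [lintegral_mul_const _ (by fun_prop), lintegral_const_mul _ (by fun_prop),
    (radial2 _ (kfun_eq α β hab hβ φ)).2, ← ENNReal.ofReal_mul (by positivity), mul_comm, kfun]

lemma gC_total : ∫⁻ w : ℂ, ENNReal.ofReal (gdens w) = 1 := by
  have h := gC_charFun 0
  rw [charFun_zero] at h
  simp at h
  have : gC.real Set.univ = 1 := by exact_mod_cast h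
  rw [Measure.real, ENNReal.toReal_eq_one_iff, gC, withDensity_apply _ MeasurableSet.univ,
    Measure.restrict_univ] at this
  exact this

lemma cone_mass : ∫⁻ z : ℂ, ENNReal.ofReal (gdens z) * coneC.indicator 1 z
    = ENNReal.ofReal (1 / 3) := by
  have h := core 0 1 (by norm_num) (by norm_num)
  have hm := gdens_cont.measurable
  have hi : Measurable (coneC.indicator (1 : ℂ → ENNReal)) :=
    measurable_one.indicator coneC_meas
  set X := ∫⁻ z : ℂ, ENNReal.ofReal (gdens z) * coneC.indicator 1 z with hX
  have h2 : ∫⁻ z : ℂ, ∫⁻ w : ℂ, ENNReal.ofReal (gdens z) * ENNReal.ofReal (gdens w) *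
      (coneC.indicator 1 z * coneC.indicator 1 (((0 : ℝ) : ℂ) * z + ((1 : ℝ) : ℂ) * w)) = X * X := by
    conv_rhs => rw [hX, ← lintegral_mul_const _ (by fun_prop)]
    refine lintegral_congr fun z => ?_
    rw [← lintegral_const_mul _ (by fun_prop)]
    refine lintegral_congr fun w => ?_
    simp only [Complex.ofReal_zero, zero_mul, zero_add, Complex.ofReal_one, one_mul]
    ring
  rw [h2] at h
  have hP : Pfun 0 = 1 / 3 * (1 / 3) := by simp [Pfun]; norm_num
  rw [hP, ENNReal.ofReal_mul (by norm_num)] at h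
  rcases lt_trichotomy X (ENNReal.ofReal (1 / 3)) with h3 | h3 | h3
  · exact absurd h (ENNReal.mul_lt_mul h3 h3).ne
  · exact h3
  · exact absurd h (ENNReal.mul_lt_mul h3 h3).ne'

lemma core0 (α : ℝ) (hα : α ^ 2 = 1) :
    ∫⁻ z : ℂ, ∫⁻ w : ℂ, ENNReal.ofReal (gdens z) * ENNReal.ofReal (gdens w) *
      (coneC.indicator 1 z * coneC.indicator 1 (α * z + ((0 : ℝ) : ℂ) * w))
      = ENNReal.ofReal (Pfun α) := by
  have hm := gdens_cont.measurable
  have hi : Measurable (coneC.indicator (1 : ℂ → ENNReal)) :=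
    measurable_one.indicator coneC_meas
  have hpi := Real.pi_pos
  have h12 : arcsin (1 / 2) = π / 6 := by
    rw [← sin_pi_div_six, arcsin_sin] <;> linarith
  rcases mul_self_eq_one_iff.1 (show α * α = 1 by nlinarith) with rfl | rfl
  · have hP : Pfun 1 = 1 / 3 := by
      rw [Pfun, h12, arcsin_one]; field_simp; norm_num
    rw [hP, ← cone_mass]
    refine lintegral_congr fun z => ?_
    have : ∀ w : ℂ, ENNReal.ofReal (gdens z) * ENNReal.ofReal (gdens w) *
      ((coneC.indicator 1 z : ENNReal) * coneC.indicator 1 (((1 : ℝ) : ℂ) * z + ((0 : ℝ) : ℂ) * w))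
      = (ENNReal.ofReal (gdens z) * coneC.indicator 1 z) * ENNReal.ofReal (gdens w) := by
      intro w
      by_cases h : z ∈ coneC <;> simp [h]
    simp_rw [this]
    rw [lintegral_const_mul _ (by fun_prop), gC_total, mul_one]
  · have hP : Pfun (-1) = 0 := by
      rw [Pfun, show (-1 : ℝ) / 2 = -(1 / 2) by norm_num, arcsin_neg, arcsin_neg, h12, arcsin_one]
      field_simp; norm_num
    rw [hP, ENNReal.ofReal_zero]
    refine (lintegral_congr_ae ?_).trans lintegral_zero
    filter_upwards [compl_mem_ae_iff.2 (measure_singleton (0 : ℂ))] with z hz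
    have hz : 0 < ‖z‖ := norm_pos_iff.2 hz
    refine (lintegral_congr fun w => ?_).trans lintegral_zero
    by_cases h : z ∈ coneC
    · have h2 : -z ∉ coneC := by
        intro h2
        simp only [coneC, Set.mem_ofPred_eq, norm_neg, Complex.neg_re] at h h2
        linarith
      simp [h2]
    · simp [h]

/-- For `α² + β² = 1` and i.i.d. standard normals `x₁, x₂, x₃, y₁, y₂, y₃`
(coordinates `v 0, v 1, v 2, v 3, v 4, v 5` under the 6-fold product Gaussian measure),
the probability that `x₁ ≥ x₂`, `x₁ ≥ x₃`, `αx₁ + βy₁ ≥ αx₂ + βy₂` and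
`αx₁ + βy₁ ≥ αx₃ + βy₃` equals `P(α)`. -/
theorem stmt_14 (α β : ℝ) (hab : α ^ 2 + β ^ 2 = 1) :
    (Measure.pi fun _ : Fin 6 => gaussianReal 0 1)
      {v : Fin 6 → ℝ | v 1 ≤ v 0 ∧ v 2 ≤ v 0 ∧
        α * v 1 + β * v 4 ≤ α * v 0 + β * v 3 ∧
        α * v 2 + β * v 5 ≤ α * v 0 + β * v 3} = ENNReal.ofReal (Pfun α) := by
  rw [event_eq]
  by_cases hβ : β = 0
  · subst hβ
    exact core0 α (by linarith)
  · exact core α β hab hβ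
end

section
/- For every real α with −1 ≤ α ≤ 1, we have 1 − 3·P(α) ≥ (1 − α)/2, where P(α) = 1/9 + (arcsin α + arcsin(α/2))/(4π) + ((arcsin α)² − (arcsin(α/2))²)/(4π²). -/
open Real

lemma sin_conc {x y a b : ℝ} (hx : x ∈ Set.Icc 0 π) (hy : y ∈ Set.Icc 0 π) (ha : 0 ≤ a)
    (hb : 0 ≤ b) (hab : a + b = 1) : a • sin x + b • sin y ≤ sin (a • x + b • y) :=
  strictConcaveOn_sin_Icc.concaveOn.2 hx hy ha hb hab

lemma aux_pos (x y : ℝ) (hx0 : 0 ≤ x) (hx : x ≤ 1/2) (hy0 : 0 ≤ y) (hy : y ≤ 1/6) (a : ℝ)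
    (h1 : sin (π * x) = a) (h2 : sin (π * y) = a / 2) :
    3/4 * (x + x^2 + y - y^2) ≤ 1/6 + a/2 := by
  have hpi := pi_pos
  have hxa : 2 * x ≤ a := by
    have := mul_le_sin (x := π * x) (by positivity) (by nlinarith)
    rw [h1] at this
    have e : 2 / π * (π * x) = 2 * x := by field_simp
    linarith
  have hya : y ≤ a / 6 := by
    have hc := sin_conc (x := 0) (y := π/6)
      ⟨le_rfl, hpi.le⟩ ⟨by positivity, by linarith⟩ (a := 1 - 6*y) (b := 6*y)
      (by linarith) (by linarith) (by ring)
    simp only [smul_eq_mul, sin_zero, sin_pi_div_six] at hc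
    have e : (1 - 6*y) * 0 + 6*y*(π/6) = π * y := by ring
    rw [e, h2] at hc
    linarith
  have ha1 : a ≤ 1 := h1 ▸ sin_le_one _
  have : y - y^2 ≤ a/6 - (a/6)^2 := by nlinarith
  nlinarith

lemma aux_neg (p q : ℝ) (hp0 : 0 ≤ p) (hp : p ≤ 1/2) (hq0 : 0 ≤ q) (hq : q ≤ 1/6) (a : ℝ)
    (h1 : sin (π * p) = a) (h2 : sin (π * q) = a / 2) :
    a/2 ≤ 1/6 + 3/4 * (p - p^2 + q + q^2) := by
  have hpi := pi_pos
  have hs2 : √2 ^ 2 = 2 := sq_sqrt (by norm_num)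
  have hs0 := sqrt_nonneg 2
  have hpa : a / 4 ≤ p - p^2 := by
    set r := 1/2 - p with hr
    have hc := sin_conc (x := 0) (y := π/4)
      ⟨le_rfl, hpi.le⟩ ⟨by positivity, by linarith⟩ (a := 1 - 2*r) (b := 2*r)
      (by linarith) (by linarith) (by ring)
    simp only [smul_eq_mul, sin_zero, sin_pi_div_four] at hc
    have e : (1 - 2*r) * 0 + 2*r*(π/4) = π * r / 2 := by ring
    rw [e] at hc
    have hsq : 2 * r^2 ≤ sin (π * r / 2)^2 := by
      have : (√2 * r)^2 ≤ sin (π * r / 2)^2 :=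
        pow_le_pow_left₀ (mul_nonneg hs0 (by linarith)) (by linarith) 2
      nlinarith
    have hco : a = 1 - 2 * sin (π * r / 2)^2 := by
      rw [← h1, ← cos_pi_div_two_sub]
      have : π/2 - π * p = 2 * (π * r / 2) := by rw [hr]; ring
      rw [this, cos_two_mul, cos_sq']; ring
    have : p = 1/2 - r := by rw [hr]; ring
    rw [this]
    nlinarith
  have hqa : 2.4 * (1/6 - q) ≤ 1/2 - a/2 := by
    rcases hq.eq_or_lt with h | h
    · have : a / 2 = 1/2 := by rw [← h2, h, ← sin_pi_div_six]; congr 1; ring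
      rw [h, this]; norm_num
    have hc := strictConcaveOn_sin_Icc.concaveOn.slope_anti_adjacent (x := π * q) (y := π/6)
      (z := π/4) ⟨by positivity, by nlinarith⟩ ⟨by positivity, by linarith⟩
      (by nlinarith) (by linarith)
    rw [h2, sin_pi_div_six, sin_pi_div_four, div_le_div_iff₀ (by linarith) (by nlinarith)] at hc
    have h14 : (1.4:ℝ) ≤ √2 := by apply le_sqrt_of_sq_le; norm_num
    have hc' : (√2/2 - 1/2) * (1/6 - q) ≤ (1/2 - a/2) * (1/12) := by
      refine le_of_mul_le_mul_left ?_ hpi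
      linarith
    nlinarith
  nlinarith

lemma asin_data (a : ℝ) (h0 : 0 ≤ a) (h1 : a ≤ 1) :
    0 ≤ arcsin a / π ∧ arcsin a / π ≤ 1/2 ∧ 0 ≤ arcsin (a/2) / π ∧ arcsin (a/2) / π ≤ 1/6 ∧
    sin (π * (arcsin a / π)) = a ∧ sin (π * (arcsin (a/2) / π)) = a / 2 := by
  have hpi := pi_pos
  have e : ∀ t : ℝ, π * (t / π) = t := fun t => by field_simp
  refine ⟨div_nonneg (arcsin_nonneg.2 h0) hpi.le, ?_,
    div_nonneg (arcsin_nonneg.2 (by linarith)) hpi.le, ?_, ?_, ?_⟩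
  · rw [div_le_iff₀ hpi]; linarith [arcsin_le_pi_div_two a]
  · rw [div_le_iff₀ hpi]
    have : arcsin (a/2) ≤ π/6 := by
      rw [arcsin_le_iff_le_sin ⟨by linarith, by linarith⟩ ⟨by linarith, by linarith⟩,
        sin_pi_div_six]
      linarith
    linarith
  · rw [e, sin_arcsin (by linarith) h1]
  · rw [e, sin_arcsin (by linarith) (by linarith)]

/-- For every `α ∈ [−1, 1]`, `1 − 3P(α) ≥ (1 − α)/2`, where
`P(α) = 1/9 + (arcsin α + arcsin(α/2))/(4π) + ((arcsin α)² − (arcsin(α/2))²)/(4π²)`. -/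
theorem stmt_15 (α : ℝ) (hα : -1 ≤ α) (hα' : α ≤ 1) :
    1 - 3 * (1 / 9 + (Real.arcsin α + Real.arcsin (α / 2)) / (4 * π) +
        ((Real.arcsin α) ^ 2 - (Real.arcsin (α / 2)) ^ 2) / (4 * π ^ 2)) ≥
      (1 - α) / 2 := by
  have hpi := pi_pos
  have key : ∀ A B : ℝ, 1 / 9 + (A + B) / (4 * π) + (A ^ 2 - B ^ 2) / (4 * π ^ 2) =
      1/9 + 1/4 * (A/π + (A/π)^2 + B/π - (B/π)^2) := by
    intro A B; field_simp; ring
  rw [key]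
  rcases le_total 0 α with h | h
  · obtain ⟨a1, a2, a3, a4, a5, a6⟩ := asin_data α h hα'
    have := aux_pos _ _ a1 a2 a3 a4 α a5 a6
    linarith
  · obtain ⟨a1, a2, a3, a4, a5, a6⟩ := asin_data (-α) (by linarith) (by linarith)
    have := aux_neg _ _ a1 a2 a3 a4 (-α) a5 a6
    rw [neg_div, arcsin_neg, arcsin_neg, neg_div, neg_div] at this
    linarith
end

section
/- Let x, y ∈ ℝⁿ be unit vectors and let a₁, a₂, a₃ be independent standard Gaussian random vectors in ℝⁿ (each distributed as the product of n standard normals, the three being independent). Then the probability that the maximizing index differs, i.e., the probability of the event that there exist distinct indices i, j ∈ {1,2,3} with aᵢ·x > aₖ·x for all k ≠ i and aⱼ·y > aₖ·y for all k ≠ j, is at least (1 − x·y)/2. -/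
open MeasureTheory ProbabilityTheory

lemma lintegral_fin_succ (μ : Measure ℝ) [SigmaFinite μ] (n : ℕ) (f : (Fin (n+1) → ℝ) → ENNReal)
    (hf : Measurable f) :
    ∫⁻ w, f w ∂(Measure.pi fun _ => μ) =
      ∫⁻ a, ∫⁻ w : Fin n → ℝ, f (Matrix.vecCons a w) ∂(Measure.pi fun _ => μ) ∂μ := by
  have h := (measurePreserving_piFinSuccAbove (fun _ : Fin (n+1) => μ) 0).symm
  rw [← h.lintegral_comp hf, lintegral_prod]
  · refine lintegral_congr fun a => lintegral_congr fun w => ?_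
    congr 1
    exact Fin.insertNth_zero' a w
  · exact (hf.comp h.measurable).aemeasurable

lemma lintegral_fin_four (μ : Measure ℝ) [SigmaFinite μ] (f : (Fin 4 → ℝ) → ENNReal)
    (hf : Measurable f) :
    ∫⁻ w, f w ∂(Measure.pi fun _ => μ) =
      ∫⁻ a, ∫⁻ b, ∫⁻ c, ∫⁻ d, f ![a, b, c, d] ∂μ ∂μ ∂μ ∂μ := by
  rw [lintegral_fin_succ _ _ _ hf]
  congr 1; ext a
  rw [lintegral_fin_succ _ _ _ (by fun_prop)]
  congr 1; ext b
  rw [lintegral_fin_succ _ _ _ (by fun_prop)]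
  congr 1; ext c
  rw [lintegral_fin_succ _ _ _ (by fun_prop)]
  congr 1; ext d
  rw [lintegral_unique]
  rw [Measure.pi_of_empty]
  simp only [measure_univ, mul_one]
  congr! 5

lemma lintegral_four_prod (f g h k : ℝ → ENNReal) (hf : Measurable f) (hg : Measurable g)
    (hh : Measurable h) (hk : Measurable k) :
    ∫⁻ a, ∫⁻ b, ∫⁻ c, ∫⁻ d, f a * g b * h c * k d =
      (∫⁻ a, f a) * (∫⁻ a, g a) * (∫⁻ a, h a) * (∫⁻ a, k a) := by
  have h1 : ∀ a b c, ∫⁻ d, f a * g b * h c * k d = f a * g b * h c * ∫⁻ d, k d := fun a b c =>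
    lintegral_const_mul _ hk
  have h2 : ∀ a b, ∫⁻ c, f a * g b * h c * ∫⁻ d, k d = f a * g b * (∫⁻ c, h c) * ∫⁻ d, k d :=
    fun a b => by rw [lintegral_mul_const _ (by fun_prop), lintegral_const_mul _ hh]
  have h3 : ∀ a, ∫⁻ b, f a * g b * (∫⁻ c, h c) * ∫⁻ d, k d =
      f a * (∫⁻ b, g b) * (∫⁻ c, h c) * ∫⁻ d, k d := fun a => by
    rw [lintegral_mul_const _ (by fun_prop), lintegral_mul_const _ (by fun_prop),
      lintegral_const_mul _ hg]
  simp only [h1, h2, h3]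
  rw [lintegral_mul_const _ (by fun_prop), lintegral_mul_const _ (by fun_prop),
    lintegral_mul_const _ hf]

lemma gauss_four_density :
    (Measure.pi fun _ : Fin 4 => gaussianReal 0 1) =
      (volume : Measure (Fin 4 → ℝ)).withDensity (fun w => ∏ i, gaussianPDF 0 1 (w i)) := by
  have hm : Measurable (gaussianPDF 0 1) := by fun_prop
  refine (Measure.pi_eq fun s hs => ?_)
  rw [withDensity_apply _ (MeasurableSet.univ_pi hs), ← lintegral_indicator (MeasurableSet.univ_pi hs)]
  have : (Set.univ.pi s).indicator (fun w : Fin 4 → ℝ => ∏ i, gaussianPDF 0 1 (w i)) =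
      fun w => ∏ i, (s i).indicator (gaussianPDF 0 1) (w i) := by
    ext w
    by_cases h : w ∈ Set.univ.pi s
    · rw [Set.indicator_of_mem h]
      refine Finset.prod_congr rfl fun i _ => ?_
      rw [Set.indicator_of_mem (h i trivial)]
    · rw [Set.indicator_of_notMem h]
      simp only [Set.mem_pi, Set.mem_univ, true_imp_iff, not_forall] at h
      obtain ⟨i, hi⟩ := h
      exact (Finset.prod_eq_zero (Finset.mem_univ i) (Set.indicator_of_notMem hi _)).symm
  have hmi : ∀ i, Measurable ((s i).indicator (gaussianPDF 0 1)) := fun i => hm.indicator (hs i)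
  rw [this, volume_pi, lintegral_fin_four _ _ (by fun_prop)]
  simp only [Fin.prod_univ_four]
  simp only [Matrix.cons_val]
  have hg : ∀ i, gaussianReal 0 1 (s i) = ∫⁻ a, (s i).indicator (gaussianPDF 0 1) a := by
    intro i
    rw [gaussianReal_of_var_ne_zero _ one_ne_zero, withDensity_apply _ (hs i), lintegral_indicator (hs i)]
  simp only [hg]
  exact lintegral_four_prod _ _ _ _ (hmi _) (hmi _) (hmi _) (hmi _)

lemma gauss_law (n : ℕ) {m : ℕ} (w : Fin m → Fin 3 → Fin n → ℝ)
    (hw : ∀ k l, ∑ i, ∑ t, w k i t * w l i t = if k = l then 1 else 0) :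
    (Measure.pi fun _ : Fin 3 => Measure.pi fun _ : Fin n => gaussianReal 0 1).map
      (fun a k => ∑ i, ∑ t, a i t * w k i t) = Measure.pi fun _ : Fin m => gaussianReal 0 1 := by
  have hmeas : Measurable (fun (a : Fin 3 → Fin n → ℝ) (k : Fin m) => ∑ i, ∑ t, a i t * w k i t) := by
    fun_prop
  have : IsProbabilityMeasure ((Measure.pi fun _ : Fin 3 => Measure.pi fun _ : Fin n => gaussianReal 0 1).map
      (fun a k => ∑ i, ∑ t, a i t * w k i t)) := Measure.isProbabilityMeasure_map hmeas.aemeasurable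
  rw [← charFun_eq_pi_iff]
  intro t
  rw [charFun, integral_map (by fun_prop) (by fun_prop), integral_map hmeas.aemeasurable (by fun_prop)]
  set c : Fin 3 → Fin n → ℝ := fun i u => ∑ k, t k * w k i u with hc
  have e1 : ∀ a : Fin 3 → Fin n → ℝ,
      Complex.exp (((inner ℝ (WithLp.toLp 2 (fun k => ∑ i, ∑ u, a i u * w k i u)) t : ℝ) : ℂ) * Complex.I)
      = ∏ i, (fun b : Fin n → ℝ => ∏ u, Complex.exp (c i u * b u * Complex.I)) (a i) := by
    intro a
    simp only [← Complex.exp_sum]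
    congr 1
    simp_rw [← Finset.sum_mul]
    congr 1
    norm_cast
    have hin : ∀ v : Fin m → ℝ, inner ℝ (WithLp.toLp 2 v) t = ∑ k, v k * t k := by
      intro v
      rw [PiLp.inner_apply]
      refine Finset.sum_congr rfl fun k _ => ?_
      simp [mul_comm]
    rw [hin]
    simp only [hc, Finset.sum_mul]
    rw [Finset.sum_comm]
    refine Finset.sum_congr rfl fun i _ => ?_
    rw [Finset.sum_comm]
    refine Finset.sum_congr rfl fun u _ => ?_
    refine Finset.sum_congr rfl fun k _ => ?_
    ring
  simp_rw [e1]
  rw [integral_fintype_prod_eq_prod (fun (i : Fin 3) (b : Fin n → ℝ) => ∏ u, Complex.exp (c i u * b u * Complex.I))]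
  have e2 : ∀ i : Fin 3, ∫ b : Fin n → ℝ, ∏ u, Complex.exp (c i u * b u * Complex.I) ∂(Measure.pi fun _ : Fin n => gaussianReal 0 1)
      = ∏ u, Complex.exp (-(c i u)^2/2) := by
    intro i
    rw [integral_fintype_prod_eq_prod (fun (u : Fin n) (b : ℝ) => Complex.exp (c i u * b * Complex.I))]
    refine Finset.prod_congr rfl fun u _ => ?_
    rw [← charFun_apply_real, charFun_gaussianReal]
    congr 1
    simp; ring
  simp_rw [e2, charFun_gaussianReal, ← Complex.exp_sum]
  congr 1
  have e3 : ∑ i, ∑ u, (c i u)^2 = ∑ k, (t k)^2 := by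
    have : ∀ i u, (c i u)^2 = ∑ k, ∑ l, t k * t l * (w k i u * w l i u) := by
      intro i u
      rw [sq, hc, Finset.sum_mul_sum]
      refine Finset.sum_congr rfl fun k _ => Finset.sum_congr rfl fun l _ => by ring
    simp_rw [this]
    calc _ = ∑ k, ∑ l, t k * t l * ∑ i, ∑ u, w k i u * w l i u := by
          simp_rw [Finset.mul_sum]
          simp_rw [Finset.sum_comm (γ := Fin n)]
          rw [Finset.sum_comm]
          refine Finset.sum_congr rfl fun k _ => ?_
          rw [Finset.sum_comm]
      _ = _ := by
          simp_rw [hw]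
          simp [sq]
  have e4 : ∑ i, ∑ u, (-((c i u : ℝ):ℂ)^2/2) = -(((∑ i, ∑ u, (c i u)^2 : ℝ)) : ℂ)/2 := by
    push_cast
    simp only [← Finset.sum_neg_distrib, Finset.sum_div]
  rw [e4, e3]
  push_cast
  simp only [← Finset.sum_neg_distrib, Finset.sum_div]
  refine Finset.sum_congr rfl fun k _ => ?_
  simp
  try ring

lemma gauss_four_cov (M : Matrix (Fin 4) (Fin 4) ℝ) (hM : M.det ≠ 0) (f : (Fin 4 → ℝ) → ENNReal)
    (hf : Measurable f) :
    ∫⁻ g, f g = ENNReal.ofReal |M.det| * ∫⁻ w : Fin 4 → ℝ, f (M.mulVec w) := by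
  have h := Real.map_matrix_volume_pi_eq_smul_volume_pi hM
  have hmeas : Measurable (Matrix.toLin' M) := (LinearMap.continuous_on_pi _).measurable
  have h2 : ∫⁻ w : Fin 4 → ℝ, f (M.mulVec w) = ENNReal.ofReal |(M.det)⁻¹| * ∫⁻ g, f g := by
    rw [← smul_eq_mul, ← lintegral_smul_measure, ← h, lintegral_map hf hmeas]
    rfl
  rw [h2, ← mul_assoc, ← ENNReal.ofReal_mul (abs_nonneg _), ← abs_mul, mul_inv_cancel₀ hM]
  simp

lemma lintegral_Ioi_deriv (F F' : ℝ → ℝ) (l : ℝ) (hd : ∀ x ∈ Set.Ici (0:ℝ), HasDerivAt F (F' x) x)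
    (hpos : ∀ x ∈ Set.Ioi (0:ℝ), 0 ≤ F' x) (hl : Filter.Tendsto F Filter.atTop (nhds l)) :
    ∫⁻ x in Set.Ioi (0:ℝ), ENNReal.ofReal (F' x) = ENNReal.ofReal (l - F 0) := by
  rw [← integral_Ioi_of_hasDerivAt_of_nonneg' hd hpos hl, ofReal_integral_eq_lintegral_ofReal]
  · exact integrableOn_Ioi_deriv_of_nonneg' hd hpos hl
  · exact (ae_restrict_iff' measurableSet_Ioi).2 (Filter.Eventually.of_forall hpos)

lemma lint_L1 (g : ℝ) (hg : 0 < g) :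
    ∫⁻ a in Set.Ioi (0:ℝ), ENNReal.ofReal (a * Real.exp (-(g * a^2))) = ENNReal.ofReal (1/(2*g)) := by
  rw [lintegral_Ioi_deriv (fun a => -(Real.exp (-(g * a^2)))/(2*g)) _ 0]
  · congr 1; simp; ring
  · intro x _
    have h1 : HasDerivAt (fun a : ℝ => -(g * a^2)) (-(g*(2*x))) x := by
      have := ((hasDerivAt_pow 2 x).const_mul g).fun_neg
      exact this.congr_deriv (by simp)
    have := (h1.exp.fun_neg).div_const (2*g)
    refine this.congr_deriv ?_
    field_simp
  · intro x hx
    have : (0:ℝ) < x := hx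
    positivity
  · have h0 : Filter.Tendsto (fun a : ℝ => -(g * a^2)) Filter.atTop Filter.atBot := by
      apply Filter.tendsto_neg_atTop_atBot.comp
      exact (Filter.tendsto_pow_atTop two_ne_zero).const_mul_atTop hg
    have := ((Real.tendsto_exp_atBot.comp h0).neg).div_const (2*g)
    simpa using this

lemma lint_L2 (g : ℝ) (hg : 0 < g) :
    ∫⁻ a in Set.Ioi (0:ℝ), ENNReal.ofReal (a^2 * Real.exp (-(g * a^2))) =
      ENNReal.ofReal (Real.sqrt Real.pi / 4 * (1 / (g * Real.sqrt g))) := by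
  have hG : Real.Gamma (3/2) = Real.sqrt Real.pi / 2 := by
    have := Real.Gamma_add_one (s := 1/2) (by norm_num)
    rw [Real.Gamma_one_half_eq] at this
    rw [show (3/2:ℝ) = 1/2+1 by norm_num, this]; ring
  have h1 := integral_rpow_mul_exp_neg_mul_rpow (p := 2) (q := 2) (b := g) (by norm_num) (by norm_num) hg
  have h2 := integrableOn_rpow_mul_exp_neg_mul_sq hg (s := 2) (by norm_num)
  simp only [Real.rpow_ofNat] at h1 h2
  have hr : g ^ (-(2+1:ℝ)/2) = 1 / (g * Real.sqrt g) := by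
    rw [show (-(2+1:ℝ)/2) = -(1+1/2) by norm_num, Real.rpow_neg hg.le, Real.rpow_add hg, Real.rpow_one,
      ← Real.sqrt_eq_rpow]; simp
  rw [hr, show ((2+1:ℝ)/2) = 3/2 by norm_num, hG] at h1
  rw [show Real.sqrt Real.pi / 4 * (1 / (g * Real.sqrt g)) = 1 / (g * Real.sqrt g) * (1/2) * (Real.sqrt Real.pi / 2) by ring,
    ← h1, ofReal_integral_eq_lintegral_ofReal]
  · simp only [neg_mul]
  · exact h2
  · exact (ae_restrict_iff' measurableSet_Ioi).2 (Filter.Eventually.of_forall fun x hx => by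
      have : (0:ℝ) < x := hx
      positivity)

lemma qpos (t : ℝ) : 0 < t^2 - t + 1 := by nlinarith [sq_nonneg (t-1/2)]

lemma lint_L3 : ∫⁻ t in Set.Ioi (0:ℝ), ENNReal.ofReal (1/(t^2-t+1)) =
    ENNReal.ofReal (4*Real.pi/(3*Real.sqrt 3)) := by
  have h3 : (0:ℝ) < Real.sqrt 3 := by positivity
  have h33 : Real.sqrt 3 ^ 2 = 3 := Real.sq_sqrt (by norm_num)
  rw [lintegral_Ioi_deriv (fun t => 2/Real.sqrt 3 * Real.arctan ((2*t-1)/Real.sqrt 3)) _ (2/Real.sqrt 3 * (Real.pi/2))]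
  · congr 1
    have : (2*(0:ℝ)-1)/Real.sqrt 3 = -(Real.sqrt 3)⁻¹ := by field_simp; norm_num
    rw [this, Real.arctan_neg, Real.arctan_inv_sqrt_three]
    field_simp; ring
  · intro x _
    have h1 : HasDerivAt (fun t : ℝ => (2*t-1)/Real.sqrt 3) (2/Real.sqrt 3) x := by
      have := (((hasDerivAt_id x).const_mul 2).sub_const 1).div_const (Real.sqrt 3)
      simpa using this
    have := h1.arctan.const_mul (2/Real.sqrt 3)
    refine this.congr_deriv ?_
    have := qpos x
    have h4 : 1 + ((2*x-1)/Real.sqrt 3)^2 = 4/3*(x^2-x+1) := by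
      rw [div_pow, h33]; ring
    rw [h4]
    field_simp
    rw [h33]; norm_num
  · intro x _
    have := qpos x
    positivity
  · apply Filter.Tendsto.const_mul
    have : Filter.Tendsto (fun t : ℝ => (2*t-1)/Real.sqrt 3) Filter.atTop Filter.atTop := by
      apply Filter.Tendsto.atTop_div_const h3
      apply Filter.tendsto_atTop_add_const_right
      exact Filter.tendsto_id.const_mul_atTop (by norm_num)
    exact (Real.tendsto_arctan_atTop.mono_right nhdsWithin_le_nhds).comp this

lemma lint_L5 : ∫⁻ t in Set.Ioi (0:ℝ), ENNReal.ofReal (2/(1+t)^2) = ENNReal.ofReal 2 := by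
  rw [lintegral_Ioi_deriv (fun t => -(2/(1+t))) _ 0]
  · congr 1; norm_num
  · intro x hx
    have hx : (0:ℝ) ≤ x := hx
    have := (((hasDerivAt_id x).const_add 1).fun_inv (by simp; linarith)).const_mul (-2)
    simp only [id] at this
    have e : (fun t : ℝ => -(2/(1+t))) = fun y => -2 * (1+y)⁻¹ := by ext; ring
    rw [e]
    refine this.congr_deriv ?_
    ring
  · intro x hx
    positivity
  · have : Filter.Tendsto (fun t : ℝ => 1+t) Filter.atTop Filter.atTop := 
      Filter.tendsto_atTop_add_const_left _ _ Filter.tendsto_id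
    simpa using (this.const_div_atTop 2).neg

lemma lint_L4 : ∫⁻ t in Set.Ioi (0:ℝ), ENNReal.ofReal (1/((t^2-t+1) * Real.sqrt (t^2-t+1))) = ENNReal.ofReal 2 := by
  rw [lintegral_Ioi_deriv (fun t => 4/3 * ((t-1/2)/Real.sqrt (t^2-t+1))) _ (4/3 * 1)]
  · congr 1; norm_num
  · intro x _
    have hq := qpos x
    have hs : 0 < Real.sqrt (x^2-x+1) := Real.sqrt_pos.2 hq
    have hss : Real.sqrt (x^2-x+1)^2 = x^2-x+1 := Real.sq_sqrt hq.le
    have h1 : HasDerivAt (fun t : ℝ => t^2-t+1) (2*x-1) x := by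
      have := ((hasDerivAt_pow 2 x).fun_sub (hasDerivAt_id' x)).add_const 1
      exact this.congr_deriv (by simp)
    have h2 := (((hasDerivAt_id' x).sub_const (1/2)).fun_div (h1.sqrt hq.ne') hs.ne').const_mul (4/3)
    refine h2.congr_deriv ?_
    simp only [hss]
    set r := Real.sqrt (x^2-x+1) with hr
    have key : 1 * r - (x - 1/2) * ((2*x-1)/(2*r)) = (3/4)/r := by
      have : (x - 1/2) * ((2*x-1)/(2*r)) = (r^2 - 3/4)/r := by
        rw [hss]; field_simp; ring
      rw [this]; field_simp; ring
    rw [key]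
    generalize x^2-x+1 = q at *
    field_simp
  · intro x _
    have := qpos x
    positivity
  · apply Filter.Tendsto.const_mul
    have e : ∀ᶠ t : ℝ in Filter.atTop, Real.sqrt (1 - (3/4) / (t^2-t+1)) = (t-1/2)/Real.sqrt (t^2-t+1) := by
      filter_upwards [Filter.eventually_ge_atTop 1] with t ht
      have hq := qpos t
      rw [← Real.sqrt_sq (show 0 ≤ t - 1/2 by linarith), ← Real.sqrt_div (sq_nonneg _)]
      congr 1
      field_simp
      ring
    refine Filter.Tendsto.congr' e ?_
    have h1 : Filter.Tendsto (fun t : ℝ => t^2-t+1) Filter.atTop Filter.atTop := by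
      refine Filter.tendsto_atTop_mono (fun t => ?_) (Filter.tendsto_id)
      simp only [id]; nlinarith [sq_nonneg (t-1)]
    have h2 := ((h1.const_div_atTop (3/4)).const_sub 1).sqrt
    simpa using h2

lemma lintegral_Ioi_scale (a : ℝ) (ha : 0 < a) (f : ℝ → ENNReal) (hf : Measurable f) :
    ∫⁻ b in Set.Ioi (0:ℝ), f b = ENNReal.ofReal a * ∫⁻ t in Set.Ioi (0:ℝ), f (a * t) := by
  rw [← lintegral_indicator measurableSet_Ioi, ← lintegral_indicator measurableSet_Ioi]
  have hm : Measurable ((Set.Ioi (0:ℝ)).indicator f) := hf.indicator measurableSet_Ioi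
  conv_lhs => rw [← Real.smul_map_volume_mul_left ha.ne']
  rw [lintegral_smul_measure, lintegral_map hm (by fun_prop), abs_of_pos ha, smul_eq_mul]
  congr 1
  refine lintegral_congr fun t => ?_
  simp [Set.indicator, ha]

/-- homogeneous double integral -/
lemma lintegral_homog (f : ℝ → ℝ → ENNReal) (hf : Measurable (Function.uncurry f)) :
    ∫⁻ a in Set.Ioi (0:ℝ), ∫⁻ b in Set.Ioi (0:ℝ), f a b =
      ∫⁻ t in Set.Ioi (0:ℝ), ∫⁻ a in Set.Ioi (0:ℝ), ENNReal.ofReal a * f a (a * t) := by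
  symm
  rw [lintegral_lintegral_swap]
  · symm
    refine setLIntegral_congr_fun measurableSet_Ioi fun a ha => ?_
    have hfa : Measurable (f a) := hf.comp (by fun_prop : Measurable fun b => (a, b))
    rw [lintegral_Ioi_scale a ha _ hfa, lintegral_const_mul]
    exact hfa.comp (by fun_prop)
  · apply Measurable.aemeasurable
    exact (by fun_prop : Measurable fun p : ℝ × ℝ => ENNReal.ofReal p.2).mul
      (hf.comp (by fun_prop : Measurable fun p : ℝ × ℝ => (p.2, p.2 * p.1)))

lemma int_K : ∫⁻ a in Set.Ioi (0:ℝ), ∫⁻ b in Set.Ioi (0:ℝ), 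
    ENNReal.ofReal (Real.exp (-((a^2+b^2-a*b)/2))) = ENNReal.ofReal (4*Real.pi/(3*Real.sqrt 3)) := by
  rw [lintegral_homog _ (by simp only [Function.uncurry_def]; fun_prop), ← lint_L3]
  refine lintegral_congr fun t => ?_
  have hq := qpos t
  rw [show 1/(t^2-t+1) = 1/(2*((t^2-t+1)/2)) by field_simp, ← lint_L1 _ (by positivity)]
  refine setLIntegral_congr_fun measurableSet_Ioi fun a (ha : 0 < a) => ?_
  rw [← ENNReal.ofReal_mul ha.le]
  congr 3; ring

lemma int_M1 : ∫⁻ a in Set.Ioi (0:ℝ), ∫⁻ b in Set.Ioi (0:ℝ), 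
    ENNReal.ofReal (a * Real.exp (-((a^2+b^2-a*b)/2))) = ENNReal.ofReal (Real.sqrt (2*Real.pi)) := by
  rw [lintegral_homog _ (by simp only [Function.uncurry_def]; fun_prop)]
  have : Real.sqrt (2*Real.pi) = Real.sqrt (2*Real.pi) / 2 * 2 := by ring
  rw [this, ENNReal.ofReal_mul (by positivity), ← lint_L4, ← lintegral_const_mul]
  · refine lintegral_congr fun t => ?_
    have hq := qpos t
    have h2 : Real.sqrt Real.pi / 4 * (1 / (((t^2-t+1)/2) * Real.sqrt ((t^2-t+1)/2))) = 
       Real.sqrt (2*Real.pi) / 2 * (1 / ((t^2-t+1) * Real.sqrt (t^2-t+1))) := by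
      rw [Real.sqrt_div hq.le, Real.sqrt_mul (by norm_num)]
      have := Real.sqrt_pos.2 hq
      field_simp
      try norm_num
    rw [← ENNReal.ofReal_mul (by positivity), ← h2, ← lint_L2 _ (by positivity)]
    refine setLIntegral_congr_fun measurableSet_Ioi fun a (ha : 0 < a) => ?_
    rw [← ENNReal.ofReal_mul ha.le, ← mul_assoc, ← sq]
    congr 3; ring
  · fun_prop

lemma int_M2 : ∫⁻ a in Set.Ioi (0:ℝ), ∫⁻ b in Set.Ioi (0:ℝ), 
    ENNReal.ofReal (b * Real.exp (-((a^2+b^2-a*b)/2))) = ENNReal.ofReal (Real.sqrt (2*Real.pi)) := by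
  rw [lintegral_lintegral_swap (by simp only [Function.uncurry_def]; fun_prop), ← int_M1]
  refine lintegral_congr fun a => lintegral_congr fun b => ?_
  congr 4; ring

lemma int_H : ∫⁻ a in Set.Ioi (0:ℝ), ∫⁻ b in Set.Ioi (0:ℝ), 
    ENNReal.ofReal (Real.exp (-((a+b)^2/4))) = ENNReal.ofReal 2 := by
  rw [lintegral_homog _ (by simp only [Function.uncurry_def]; fun_prop), ← lint_L5]
  refine setLIntegral_congr_fun measurableSet_Ioi fun t (ht : 0 < t) => ?_
  rw [show 2/(1+t)^2 = 1/(2*((1+t)^2/4)) by field_simp; norm_num, ← lint_L1 _ (by positivity)]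
  refine setLIntegral_congr_fun measurableSet_Ioi fun a (ha : 0 < a) => ?_
  rw [← ENNReal.ofReal_mul ha.le]
  congr 3; ring

/-- Lebesgue measure on the positive orthant -/
noncomputable def orth : Measure (Fin 4 → ℝ) :=
  (volume : Measure (Fin 4 → ℝ)).restrict (Set.univ.pi fun _ => Set.Ioi 0)

lemma orth_ae : ∀ᵐ w ∂orth, ∀ i, 0 < w i := by
  have := ae_restrict_mem (μ := (volume : Measure (Fin 4 → ℝ)))
    (MeasurableSet.univ_pi (fun _ : Fin 4 => measurableSet_Ioi (a := (0:ℝ))))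
  filter_upwards [this] with w hw i
  exact hw i trivial

lemma lintegral_orth (f : (Fin 4 → ℝ) → ENNReal) (hf : Measurable f) :
    ∫⁻ w, f w ∂orth = ∫⁻ a in Set.Ioi (0:ℝ), ∫⁻ b in Set.Ioi (0:ℝ), ∫⁻ c in Set.Ioi (0:ℝ),
      ∫⁻ d in Set.Ioi (0:ℝ), f ![a, b, c, d] := by
  rw [orth, volume_pi, Measure.restrict_pi_pi, lintegral_fin_four _ _ hf]

lemma lintegral_orth_mul (f g : ℝ → ℝ → ENNReal) (hf : Measurable (Function.uncurry f))
    (hg : Measurable (Function.uncurry g)) :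
    ∫⁻ w, f (w 0) (w 1) * g (w 2) (w 3) ∂orth =
      (∫⁻ a in Set.Ioi (0:ℝ), ∫⁻ b in Set.Ioi (0:ℝ), f a b) *
      (∫⁻ a in Set.Ioi (0:ℝ), ∫⁻ b in Set.Ioi (0:ℝ), g a b) := by
  have hf1 : ∀ a, Measurable (f a) := fun a => hf.comp (by fun_prop : Measurable fun b => (a, b))
  have hg1 : ∀ a, Measurable (g a) := fun a => hg.comp (by fun_prop : Measurable fun b => (a, b))
  have hf2 : Measurable fun a => ∫⁻ b in Set.Ioi (0:ℝ), f a b := Measurable.lintegral_prod_right hf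
  have hg2 : Measurable fun a => ∫⁻ b in Set.Ioi (0:ℝ), g a b := Measurable.lintegral_prod_right hg
  rw [lintegral_orth]
  · simp only [Matrix.cons_val]
    rw [← lintegral_mul_const _ hf2]
    refine lintegral_congr fun a => ?_
    rw [← lintegral_mul_const _ (hf1 a)]
    refine lintegral_congr fun b => ?_
    rw [← lintegral_const_mul _ hg2]
    refine lintegral_congr fun c => ?_
    rw [← lintegral_const_mul _ (hg1 c)]
  · exact (hf.comp (by fun_prop : Measurable fun w : Fin 4 → ℝ => (w 0, w 1))).mul
      (hg.comp (by fun_prop : Measurable fun w : Fin 4 → ℝ => (w 2, w 3)))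

lemma lintegral_orth_mul' (f g : ℝ → ℝ → ENNReal) (hf : Measurable (Function.uncurry f))
    (hg : Measurable (Function.uncurry g)) :
    ∫⁻ w, f (w 0) (w 2) * g (w 1) (w 3) ∂orth =
      (∫⁻ a in Set.Ioi (0:ℝ), ∫⁻ b in Set.Ioi (0:ℝ), f a b) *
      (∫⁻ a in Set.Ioi (0:ℝ), ∫⁻ b in Set.Ioi (0:ℝ), g a b) := by
  have hf1 : ∀ a, Measurable (f a) := fun a => hf.comp (by fun_prop : Measurable fun b => (a, b))
  have hg1 : ∀ a, Measurable (g a) := fun a => hg.comp (by fun_prop : Measurable fun b => (a, b))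
  have hf2 : Measurable fun a => ∫⁻ b in Set.Ioi (0:ℝ), f a b := Measurable.lintegral_prod_right hf
  have hg2 : Measurable fun a => ∫⁻ b in Set.Ioi (0:ℝ), g a b := Measurable.lintegral_prod_right hg
  rw [lintegral_orth]
  · simp only [Matrix.cons_val]
    rw [← lintegral_mul_const _ hf2]
    refine lintegral_congr fun a => ?_
    rw [← lintegral_const_mul _ hg2]
    refine lintegral_congr fun b => ?_
    rw [← lintegral_mul_const _ (hf1 a)]
    refine lintegral_congr fun c => ?_
    rw [← lintegral_const_mul _ (hg1 b)]
  · exact (hf.comp (by fun_prop : Measurable fun w : Fin 4 → ℝ => (w 0, w 2))).mul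
      (hg.comp (by fun_prop : Measurable fun w : Fin 4 → ℝ => (w 1, w 3)))

lemma gauss_orthant (M : Matrix (Fin 4) (Fin 4) ℝ) (hM : M.det ≠ 0) (S : Set (Fin 4 → ℝ))
    (hS : MeasurableSet S) (hMS : ∀ w, M.mulVec w ∈ S ↔ ∀ i, 0 < w i) (E : (Fin 4 → ℝ) → ℝ)
    (hE : ∀ w, ∑ i, (M.mulVec w i)^2 = 2 * E w) :
    (Measure.pi fun _ : Fin 4 => gaussianReal 0 1) S =
      ENNReal.ofReal (|M.det| / (4 * Real.pi^2)) * ∫⁻ w, ENNReal.ofReal (Real.exp (-(E w))) ∂orth := by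
  have hpdf : Measurable (fun w : Fin 4 → ℝ => ∏ i, gaussianPDF 0 1 (w i)) := by fun_prop
  rw [gauss_four_density, withDensity_apply _ hS, ← lintegral_indicator hS,
    gauss_four_cov M hM _ (hpdf.indicator hS), ENNReal.ofReal_div_of_pos (by positivity), div_eq_mul_inv,
    mul_assoc]
  congr 1
  rw [orth, ← lintegral_const_mul', ← lintegral_indicator (MeasurableSet.univ_pi fun _ => measurableSet_Ioi)]
  · refine lintegral_congr fun w => ?_
    by_cases h : ∀ i, 0 < w i
    · have hm : w ∈ Set.univ.pi (fun _ : Fin 4 => Set.Ioi (0:ℝ)) := fun i _ => h i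
      rw [Set.indicator_of_mem ((hMS w).2 h), Set.indicator_of_mem hm]
      simp only [gaussianPDF, gaussianPDFReal]
      rw [← ENNReal.ofReal_prod_of_nonneg (fun i _ => by positivity),
        ← ENNReal.ofReal_inv_of_pos (by positivity), ← ENNReal.ofReal_mul (by positivity)]
      congr 1
      rw [Finset.prod_mul_distrib, ← Real.exp_sum]
      congr 1
      · simp only [Finset.prod_const, Finset.card_univ, Fintype.card_fin]
        rw [inv_pow]
        congr 1
        rw [show (4:ℕ) = 2*2 from rfl, pow_mul, Real.sq_sqrt (by positivity)]
        simp; ring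
      · congr 1
        rw [← Finset.sum_div, Finset.sum_neg_distrib]
        simp only [sub_zero]
        rw [hE]
        have h2 : (((1:NNReal):ℝ)) = 1 := rfl
        rw [h2]; ring
    · have hn : w ∉ Set.univ.pi (fun _ : Fin 4 => Set.Ioi (0:ℝ)) := fun h' => h fun i => h' i trivial
      rw [Set.indicator_of_notMem (fun h' => h ((hMS w).1 h')), Set.indicator_of_notMem hn]
  · simp [Real.pi_ne_zero]

lemma orth_upper (r : ℝ) (hr0 : 0 ≤ r) (hr1 : r ≤ 1) :
    ∫⁻ w, ENNReal.ofReal (Real.exp (-((w 0^2+w 1^2-w 0*w 1)/2 + (w 2^2+w 3^2-w 2*w 3)/2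
      + r * (w 0*w 2+w 1*w 3-(w 0*w 3+w 1*w 2)/2)))) ∂orth ≤
    ENNReal.ofReal ((1-r)*(16*Real.pi^2/27) + r*4) := by
  have hb : ∀ w : Fin 4 → ℝ, ENNReal.ofReal (Real.exp (-((w 0^2+w 1^2-w 0*w 1)/2 + (w 2^2+w 3^2-w 2*w 3)/2
      + r * (w 0*w 2+w 1*w 3-(w 0*w 3+w 1*w 2)/2)))) ≤
      ENNReal.ofReal (1-r) * (ENNReal.ofReal (Real.exp (-((w 0^2+w 1^2-w 0*w 1)/2))) *
        ENNReal.ofReal (Real.exp (-((w 2^2+w 3^2-w 2*w 3)/2)))) +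
      ENNReal.ofReal r * (ENNReal.ofReal (Real.exp (-((w 0+w 2)^2/4))) *
        ENNReal.ofReal (Real.exp (-((w 1+w 3)^2/4)))) := by
    intro w
    rw [← ENNReal.ofReal_mul (p := Real.exp (-((w 0^2+w 1^2-w 0*w 1)/2))) (by positivity),
      ← ENNReal.ofReal_mul (p := Real.exp (-((w 0+w 2)^2/4))) (by positivity),
      ← ENNReal.ofReal_mul (p := 1-r) (by linarith), ← ENNReal.ofReal_mul (p := r) hr0,
      ← ENNReal.ofReal_add (mul_nonneg (by linarith) (by positivity)) (by positivity)]
    apply ENNReal.ofReal_le_ofReal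
    rw [← Real.exp_add, ← Real.exp_add]
    have h1 := convexOn_exp.2 (Set.mem_univ (-((w 0^2+w 1^2-w 0*w 1)/2)+-((w 2^2+w 3^2-w 2*w 3)/2)))
      (Set.mem_univ (-((w 0^2+w 1^2-w 0*w 1)/2)+-((w 2^2+w 3^2-w 2*w 3)/2)
        - (w 0*w 2+w 1*w 3-(w 0*w 3+w 1*w 2)/2))) (sub_nonneg.2 hr1) hr0 (by ring)
    simp only [smul_eq_mul] at h1
    have h2 : Real.exp (-((w 0^2+w 1^2-w 0*w 1)/2)+-((w 2^2+w 3^2-w 2*w 3)/2)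
        - (w 0*w 2+w 1*w 3-(w 0*w 3+w 1*w 2)/2)) ≤ Real.exp (-((w 0+w 2)^2/4) + -((w 1+w 3)^2/4)) := by
      apply Real.exp_le_exp.2
      nlinarith [sq_nonneg (w 0 + w 2 - w 1 - w 3)]
    have h3 := mul_le_mul_of_nonneg_left h2 hr0
    refine le_trans (le_of_eq ?_) (h1.trans (by linarith))
    congr 1; ring
  refine (lintegral_mono hb).trans ?_
  rw [lintegral_add_left (by fun_prop), lintegral_const_mul _ (by fun_prop), lintegral_const_mul _ (by fun_prop),
    lintegral_orth_mul (fun a b => ENNReal.ofReal (Real.exp (-((a^2+b^2-a*b)/2))))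
      (fun a b => ENNReal.ofReal (Real.exp (-((a^2+b^2-a*b)/2)))) (by fun_prop) (by fun_prop),
    lintegral_orth_mul' (fun a b => ENNReal.ofReal (Real.exp (-((a+b)^2/4))))
      (fun a b => ENNReal.ofReal (Real.exp (-((a+b)^2/4)))) (by fun_prop) (by fun_prop), int_K, int_H,
    ← ENNReal.ofReal_mul (p := 4*Real.pi/(3*Real.sqrt 3)) (by positivity),
      ← ENNReal.ofReal_mul (p := 2) (by positivity),
      ← ENNReal.ofReal_mul (p := 1-r) (by linarith), ← ENNReal.ofReal_mul (p := r) hr0,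
      ← ENNReal.ofReal_add (mul_nonneg (by linarith) (by positivity)) (by positivity)]
  apply ENNReal.ofReal_le_ofReal
  have h33 : Real.sqrt 3 ^ 2 = 3 := Real.sq_sqrt (by norm_num)
  have : 4*Real.pi/(3*Real.sqrt 3) * (4*Real.pi/(3*Real.sqrt 3)) = 16*Real.pi^2/27 := by
    rw [div_mul_div_comm]
    rw [show 3*Real.sqrt 3 * (3*Real.sqrt 3) = 9 * Real.sqrt 3^2 by ring, h33]
    ring
  rw [this]
  linarith

lemma orth_lower (r : ℝ) (hr0 : 0 ≤ r) :
    ENNReal.ofReal (16*Real.pi^2/27 - r * Real.pi) ≤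
    ∫⁻ w, ENNReal.ofReal (Real.exp (-((w 0^2+w 1^2-w 0*w 1)/2 + (w 2^2+w 3^2-w 2*w 3)/2
      - r * (w 0*w 2 - (w 0*w 3+w 1*w 2+w 1*w 3)/2)))) ∂orth := by
  set I := ∫⁻ w, ENNReal.ofReal (Real.exp (-((w 0^2+w 1^2-w 0*w 1)/2 + (w 2^2+w 3^2-w 2*w 3)/2
      - r * (w 0*w 2 - (w 0*w 3+w 1*w 2+w 1*w 3)/2)))) ∂orth with hI
  let k : ℝ → ℝ → ENNReal := fun a b => ENNReal.ofReal (Real.exp (-((a^2+b^2-a*b)/2)))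
  let ka : ℝ → ℝ → ENNReal := fun a b => ENNReal.ofReal (a * Real.exp (-((a^2+b^2-a*b)/2)))
  let kb : ℝ → ℝ → ENNReal := fun a b => ENNReal.ofReal (b * Real.exp (-((a^2+b^2-a*b)/2)))
  have mk : Measurable (Function.uncurry k) := by simp only [k, Function.uncurry_def]; fun_prop
  have mka : Measurable (Function.uncurry ka) := by simp only [ka, Function.uncurry_def]; fun_prop
  have mkb : Measurable (Function.uncurry kb) := by simp only [kb, Function.uncurry_def]; fun_prop
  have hk : ∫⁻ a in Set.Ioi (0:ℝ), ∫⁻ b in Set.Ioi (0:ℝ), k a b = _ := int_K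
  have hka : ∫⁻ a in Set.Ioi (0:ℝ), ∫⁻ b in Set.Ioi (0:ℝ), ka a b = _ := int_M1
  have hkb : ∫⁻ a in Set.Ioi (0:ℝ), ∫⁻ b in Set.Ioi (0:ℝ), kb a b = _ := int_M2
  have m2 : ∀ f : ℝ → ℝ → ENNReal, Measurable (Function.uncurry f) → ∀ i j : Fin 4,
      Measurable fun w : Fin 4 → ℝ => f (w i) (w j) := fun f hf i j =>
    hf.comp (by fun_prop : Measurable fun w : Fin 4 → ℝ => (w i, w j))
  have hb : ∀ᵐ w ∂orth, k (w 0) (w 1) * k (w 2) (w 3) + ENNReal.ofReal r * (ka (w 0) (w 1) * ka (w 2) (w 3)) ≤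
      ENNReal.ofReal (Real.exp (-((w 0^2+w 1^2-w 0*w 1)/2 + (w 2^2+w 3^2-w 2*w 3)/2
        - r * (w 0*w 2 - (w 0*w 3+w 1*w 2+w 1*w 3)/2)))) + 
      ENNReal.ofReal (r/2) * (ka (w 0) (w 1) * kb (w 2) (w 3) + kb (w 0) (w 1) * ka (w 2) (w 3)
        + kb (w 0) (w 1) * kb (w 2) (w 3)) := by
    filter_upwards [orth_ae] with w hw
    have h0 := (hw 0).le
    have h1 := (hw 1).le
    have h2 := (hw 2).le
    have h3 := (hw 3).le
    simp only [k, ka, kb]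
    set e1 := Real.exp (-((w 0^2+w 1^2-w 0*w 1)/2)) with he1
    set e2 := Real.exp (-((w 2^2+w 3^2-w 2*w 3)/2)) with he2
    have p1 : 0 < e1 := Real.exp_pos _
    have p2 : 0 < e2 := Real.exp_pos _
    have heq : Real.exp (-((w 0^2+w 1^2-w 0*w 1)/2 + (w 2^2+w 3^2-w 2*w 3)/2
        - r * (w 0*w 2 - (w 0*w 3+w 1*w 2+w 1*w 3)/2))) = 
        e1 * e2 * Real.exp (r * (w 0*w 2 - (w 0*w 3+w 1*w 2+w 1*w 3)/2)) := by
      rw [he1, he2, ← Real.exp_add, ← Real.exp_add]; congr 1; ring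
    rw [heq]
    repeat rw [← ENNReal.ofReal_mul (by positivity)]
    repeat rw [← ENNReal.ofReal_add (by positivity) (by positivity)]
    rw [← ENNReal.ofReal_mul (by positivity), ← ENNReal.ofReal_add (by positivity) (by positivity)]
    apply ENNReal.ofReal_le_ofReal
    have := mul_le_mul_of_nonneg_left (Real.add_one_le_exp (r * (w 0*w 2 - (w 0*w 3+w 1*w 2+w 1*w 3)/2)))
      (mul_pos p1 p2).le
    nlinarith [this]
  have hineq := lintegral_mono_ae hb
  have n1 := m2 k mk
  have n2 := m2 ka mka
  have n3 := m2 kb mkb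
  rw [lintegral_add_left (by fun_prop), lintegral_const_mul _ (by fun_prop),
    lintegral_add_left (by fun_prop), lintegral_const_mul _ (by fun_prop),
    lintegral_add_left (by fun_prop), lintegral_add_left (by fun_prop), ← hI,
    lintegral_orth_mul _ _ mk mk, lintegral_orth_mul _ _ mka mka, lintegral_orth_mul _ _ mka mkb,
    lintegral_orth_mul _ _ mkb mka, lintegral_orth_mul _ _ mkb mkb, hk, hka, hkb] at hineq
  have h33 : Real.sqrt 3 ^ 2 = 3 := Real.sq_sqrt (by norm_num)
  have e1 : 4*Real.pi/(3*Real.sqrt 3) * (4*Real.pi/(3*Real.sqrt 3)) = 16*Real.pi^2/27 := by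
    rw [div_mul_div_comm]
    rw [show 3*Real.sqrt 3 * (3*Real.sqrt 3) = 9 * Real.sqrt 3^2 by ring, h33]
    ring
  have e2 : Real.sqrt (2*Real.pi) * Real.sqrt (2*Real.pi) = 2*Real.pi := Real.mul_self_sqrt (by positivity)
  rw [← ENNReal.ofReal_mul (by positivity), ← ENNReal.ofReal_mul (by positivity), e1, e2] at hineq
  have hpi := Real.pi_pos
  repeat rw [← ENNReal.ofReal_add (by positivity) (by positivity)] at hineq
  rw [← ENNReal.ofReal_mul (by positivity), ← ENNReal.ofReal_mul (by positivity),
    ← ENNReal.ofReal_add (by positivity) (by positivity)] at hineq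
  by_cases hIt : I = ⊤
  · rw [hIt]; exact le_top
  · rw [← ENNReal.ofReal_toReal hIt] at hineq ⊢
    rw [← ENNReal.ofReal_add (by positivity) (by positivity),
      ENNReal.ofReal_le_ofReal_iff (by positivity)] at hineq
    apply ENNReal.ofReal_le_ofReal
    linarith

lemma same_upper (ρ s : ℝ) (hs : 0 < s) (hs2 : s^2 = 1 - ρ^2) (hρ : ρ ≤ 0) :
    (Measure.pi fun _ : Fin 4 => gaussianReal 0 1)
      {g : Fin 4 → ℝ | 0 < Real.sqrt 3 * g 0 - g 1 ∧ 0 < Real.sqrt 3 * g 0 + g 1 ∧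
        0 < Real.sqrt 3 * (ρ * g 0 + s * g 2) - (ρ * g 1 + s * g 3) ∧
        0 < Real.sqrt 3 * (ρ * g 0 + s * g 2) + (ρ * g 1 + s * g 3)} ≤ ENNReal.ofReal ((1+ρ)/6) := by
  have h33 : Real.sqrt 3 ^ 2 = 3 := Real.sq_sqrt (by norm_num)
  have h3 : 0 < Real.sqrt 3 := Real.sqrt_pos.2 (by norm_num)
  set c := Real.sqrt 3 with hc
  let M : Matrix (Fin 4) (Fin 4) ℝ := !![s/2, s/2, 0, 0; s*c/2, -(s*c/2), 0, 0;
    -(ρ/2), -(ρ/2), 1/2, 1/2; -(ρ*c/2), ρ*c/2, c/2, -(c/2)]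
  have hdet : M.det = 3/4*s^2 := by
    simp only [M]
    rw [Matrix.det_succ_row_zero]
    simp [Fin.sum_univ_succ, Matrix.det_fin_three, Fin.succAbove]
    linear_combination (s^2/4) * h33
  have m0 : ∀ w, M.mulVec w 0 = s/2 * w 0 + s/2 * w 1 := by
    intro w; simp [M, Matrix.mulVec, dotProduct, Fin.sum_univ_four]
  have m1 : ∀ w, M.mulVec w 1 = s*c/2 * w 0 - s*c/2 * w 1 := by
    intro w; simp [M, Matrix.mulVec, dotProduct, Fin.sum_univ_four]; ring
  have m2 : ∀ w, M.mulVec w 2 = -(ρ/2) * w 0 - ρ/2 * w 1 + w 2/2 + w 3/2 := by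
    intro w; simp [M, Matrix.mulVec, dotProduct, Fin.sum_univ_four]; ring
  have m3 : ∀ w, M.mulVec w 3 = -(ρ*c/2) * w 0 + ρ*c/2 * w 1 + c/2* w 2 - c/2*w 3 := by
    intro w; simp [M, Matrix.mulVec, dotProduct, Fin.sum_univ_four]; ring
  have hsc : 0 < s * c := mul_pos hs h3
  have hρ1 : 0 ≤ 1 + ρ := by nlinarith
  rw [gauss_orthant M (by rw [hdet]; positivity) _ (by measurability) ?_
    (fun w => (w 0^2+w 1^2-w 0*w 1)/2 + (w 2^2+w 3^2-w 2*w 3)/2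
      + (-ρ) * (w 0*w 2+w 1*w 3-(w 0*w 3+w 1*w 2)/2)) ?_]
  · refine (mul_le_mul_right (orth_upper (-ρ) (by linarith) (by linarith)) _).trans ?_
    rw [← ENNReal.ofReal_mul (by positivity), hdet]
    apply ENNReal.ofReal_le_ofReal
    rw [abs_of_pos (by positivity), hs2]
    have hpi : 3 < Real.pi := Real.pi_gt_three
    have hp2 : 9 < Real.pi^2 := by nlinarith
    rw [div_mul_eq_mul_div, div_le_iff₀ (by positivity)]
    have key : 0 ≤ (1+ρ) * ((Real.pi^2) * (4/6) - 3/4*(1-ρ)*((1+ρ)*(16*Real.pi^2/27) - 4 * ρ)) := by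
      apply mul_nonneg hρ1
      nlinarith [mul_nonneg hρ1 (neg_nonneg.2 hρ), sq_nonneg (ρ+1/2), sq_nonneg ρ]
    nlinarith [key]
  · intro w
    simp only [Set.mem_ofPred_eq, m0, m1, m2, m3]
    have e1 : c * (s/2 * w 0 + s/2 * w 1) - (s*c/2 * w 0 - s*c/2 * w 1) = s*c*w 1 := by ring
    have e2 : c * (s/2 * w 0 + s/2 * w 1) + (s*c/2 * w 0 - s*c/2 * w 1) = s*c*w 0 := by ring
    have e3 : c * (ρ * (s/2 * w 0 + s/2 * w 1) + s * (-(ρ/2) * w 0 - ρ/2 * w 1 + w 2/2 + w 3/2))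
      - (ρ * (s*c/2 * w 0 - s*c/2 * w 1) + s * (-(ρ*c/2) * w 0 + ρ*c/2 * w 1 + c/2* w 2 - c/2*w 3))
      = s*c*w 3 := by ring
    have e4 : c * (ρ * (s/2 * w 0 + s/2 * w 1) + s * (-(ρ/2) * w 0 - ρ/2 * w 1 + w 2/2 + w 3/2))
      + (ρ * (s*c/2 * w 0 - s*c/2 * w 1) + s * (-(ρ*c/2) * w 0 + ρ*c/2 * w 1 + c/2* w 2 - c/2*w 3))
      = s*c*w 2 := by ring
    rw [e1, e2, e3, e4, Fin.forall_fin_succ, Fin.forall_fin_succ, Fin.forall_fin_succ, Fin.forall_fin_one]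
    simp only [mul_pos_iff_of_pos_left hsc]
    change _ ↔ 0 < w 0 ∧ 0 < w 1 ∧ 0 < w 2 ∧ 0 < w 3
    tauto
  · intro w
    rw [Fin.sum_univ_four, m0, m1, m2, m3]
    have : (s*c)^2 = 3*s^2 := by rw [mul_pow, h33]; ring
    linear_combination ((w 0 - w 1)^2/4*s^2 + (-ρ*(w 0 - w 1) + (w 2 - w 3))^2/4) * h33 + ((w 0+w 1)^2/4 + 3*(w 0-w 1)^2/4)*hs2

lemma diff_lower (ρ s : ℝ) (hs : 0 < s) (hs2 : s^2 = 1 - ρ^2) (hρ : 0 ≤ ρ) :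
    ENNReal.ofReal ((1-ρ)/12) ≤ (Measure.pi fun _ : Fin 4 => gaussianReal 0 1)
      {g : Fin 4 → ℝ | 0 < Real.sqrt 3 * g 0 - g 1 ∧ 0 < Real.sqrt 3 * g 0 + g 1 ∧
        0 < ρ * g 1 + s * g 3 ∧
        0 < (ρ * g 1 + s * g 3) - Real.sqrt 3 * (ρ * g 0 + s * g 2)} := by
  have h33 : Real.sqrt 3 ^ 2 = 3 := Real.sq_sqrt (by norm_num)
  have h3 : 0 < Real.sqrt 3 := Real.sqrt_pos.2 (by norm_num)
  set c := Real.sqrt 3 with hc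
  let M : Matrix (Fin 4) (Fin 4) ℝ := !![s/2, s/2, 0, 0; s*c/2, -(s*c/2), 0, 0;
    -(ρ/2), -(ρ/2), 1/2, -1; -(ρ*c/2), ρ*c/2, c/2, 0]
  have hdet : M.det = -(3/4*s^2) := by
    simp only [M]
    rw [Matrix.det_succ_row_zero]
    simp [Fin.sum_univ_succ, Matrix.det_fin_three, Fin.succAbove]
    linear_combination (-s^2/4) * h33
  have m0 : ∀ w, M.mulVec w 0 = s/2 * w 0 + s/2 * w 1 := by
    intro w; simp [M, Matrix.mulVec, dotProduct, Fin.sum_univ_four]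
  have m1 : ∀ w, M.mulVec w 1 = s*c/2 * w 0 - s*c/2 * w 1 := by
    intro w; simp [M, Matrix.mulVec, dotProduct, Fin.sum_univ_four]; ring
  have m2 : ∀ w, M.mulVec w 2 = -(ρ/2) * w 0 - ρ/2 * w 1 + w 2/2 - w 3 := by
    intro w; simp [M, Matrix.mulVec, dotProduct, Fin.sum_univ_four]; ring
  have m3 : ∀ w, M.mulVec w 3 = -(ρ*c/2) * w 0 + ρ*c/2 * w 1 + c/2* w 2 := by
    intro w; simp [M, Matrix.mulVec, dotProduct, Fin.sum_univ_four]
  have hsc : 0 < s * c := mul_pos hs h3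
  have hsc2 : 0 < s * c / 2 := by positivity
  have hρ1 : 0 ≤ 1 - ρ := by nlinarith
  rw [gauss_orthant M (by rw [hdet]; simp; positivity) _ (by measurability) ?_
    (fun w => (w 0^2+w 1^2-w 0*w 1)/2 + (w 2^2+w 3^2-w 2*w 3)/2
      - ρ * (w 0*w 2 - (w 0*w 3+w 1*w 2+w 1*w 3)/2)) ?_]
  · refine le_trans ?_ (mul_le_mul_right (orth_lower ρ hρ) _)
    rw [← ENNReal.ofReal_mul (by positivity), hdet]
    apply ENNReal.ofReal_le_ofReal
    rw [abs_neg, abs_of_pos (by positivity), hs2]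
    have hpi : 3 < Real.pi := Real.pi_gt_three
    rw [div_mul_eq_mul_div, le_div_iff₀ (by positivity)]
    have key : 0 ≤ (1-ρ) * (Real.pi * (3/4*(1+ρ)*(16*Real.pi/27 - ρ) - Real.pi/3)) := by
      apply mul_nonneg hρ1 
      apply mul_nonneg (by positivity)
      nlinarith [mul_nonneg hρ1 hρ, mul_nonneg hρ (sub_nonneg.2 hpi.le)]
    nlinarith [key]
  · intro w
    simp only [Set.mem_ofPred_eq, m0, m1, m2, m3]
    have e1 : c * (s/2 * w 0 + s/2 * w 1) - (s*c/2 * w 0 - s*c/2 * w 1) = s*c*w 1 := by ring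
    have e2 : c * (s/2 * w 0 + s/2 * w 1) + (s*c/2 * w 0 - s*c/2 * w 1) = s*c*w 0 := by ring
    have e3 : ρ * (s*c/2 * w 0 - s*c/2 * w 1) + s * (-(ρ*c/2) * w 0 + ρ*c/2 * w 1 + c/2* w 2)
      = s*c/2*w 2 := by ring
    have e4 : s*c/2*w 2 - c * (ρ * (s/2 * w 0 + s/2 * w 1) + s * (-(ρ/2) * w 0 - ρ/2 * w 1 + w 2/2 - w 3))
      = s*c*w 3 := by ring
    rw [e1, e2, e3, e4, Fin.forall_fin_succ, Fin.forall_fin_succ, Fin.forall_fin_succ, Fin.forall_fin_one]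
    simp only [mul_pos_iff_of_pos_left hsc, mul_pos_iff_of_pos_left hsc2]
    change _ ↔ 0 < w 0 ∧ 0 < w 1 ∧ 0 < w 2 ∧ 0 < w 3
    tauto
  · intro w
    rw [Fin.sum_univ_four, m0, m1, m2, m3]
    linear_combination ((w 0 - w 1)^2/4*s^2 + (-ρ*(w 0 - w 1) + w 2)^2/4) * h33 + ((w 0+w 1)^2/4 + 3*(w 0-w 1)^2/4)*hs2

lemma sum3 (i j k : Fin 3) (hij : i ≠ j) (hik : i ≠ k) (hjk : j ≠ k) (f : Fin 3 → ℝ) :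
    ∑ m, f m = f i + f j + f k := by
  have : (Finset.univ : Finset (Fin 3)) = {i, j, k} := by
    revert i j k; decide
  rw [this, Finset.sum_insert (by simp [hij, hik]), Finset.sum_pair hjk, add_assoc]

/-- the Gaussian measure -/
noncomputable abbrev gm (n : ℕ) : Measure (Fin 3 → Fin n → ℝ) :=
  Measure.pi fun _ : Fin 3 => Measure.pi fun _ : Fin n => gaussianReal 0 1

lemma sum_prod_aux {n : ℕ} (c d : Fin 3 → ℝ) (u v : Fin n → ℝ) :
    ∑ m, ∑ t, (c m * u t) * (d m * v t) = (∑ m, c m * d m) * ∑ t, u t * v t := by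
  rw [Finset.sum_mul_sum]
  exact Finset.sum_congr rfl fun i _ => Finset.sum_congr rfl fun t _ => by ring

lemma sum_lin_aux {n : ℕ} (a : Fin 3 → Fin n → ℝ) (c : Fin 3 → ℝ) (u : Fin n → ℝ) :
    ∑ m, ∑ t, a m t * (c m * u t) = ∑ m, c m * ∑ t, a m t * u t := by
  simp_rw [Finset.mul_sum]
  exact Finset.sum_congr rfl fun i _ => Finset.sum_congr rfl fun t _ => by ring

lemma tie_null (n : ℕ) (x : Fin n → ℝ) (hx : ∑ t, x t ^ 2 = 1) (i j : Fin 3) (hij : i ≠ j) :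
    ∀ᵐ a ∂(gm n), (∑ t, a i t * x t) ≠ ∑ t, a j t * x t := by
  obtain ⟨k, hik, hjk⟩ : ∃ k : Fin 3, i ≠ k ∧ j ≠ k := by revert i j; decide
  have h2 : Real.sqrt 2 ^ 2 = 2 := Real.sq_sqrt (by norm_num)
  have h20 : Real.sqrt 2 ≠ 0 := by positivity
  let c : Fin 3 → ℝ := fun m => if m = i then 1/Real.sqrt 2 else if m = j then -(1/Real.sqrt 2) else 0
  have hlaw := gauss_law n (m := 1) (fun _ m t => c m * x t) (by
    intro k' l
    rw [if_pos (Subsingleton.elim _ _), sum_prod_aux, sum3 i j k hij hik hjk]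
    simp only [← sq, hx]
    simp [c, hij.symm, hik.symm, hjk.symm]
    norm_num)
  have h0 : ∀ᵐ g ∂(Measure.pi fun _ : Fin 1 => gaussianReal 0 1), g 0 ≠ 0 := by
    have : NullSingletonClass (gaussianReal 0 1) := nullSingletonClass_gaussianReal one_ne_zero
    exact Measure.ae_eval_ne (μ := fun _ : Fin 1 => gaussianReal 0 1) 0 0
  rw [← hlaw] at h0
  have h1 := ae_of_ae_map (Measurable.aemeasurable (by fun_prop)) h0
  filter_upwards [h1] with a ha h
  apply ha
  rw [sum_lin_aux, sum3 i j k hij hik hjk, h]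
  simp [c, hij.symm, hik.symm, hjk.symm]

lemma transfer (n : ℕ) (x y : Fin n → ℝ) (hx : ∑ t, x t ^ 2 = 1) (hy : ∑ t, y t ^ 2 = 1)
    (ρ s : ℝ) (hρ : ∑ t, x t * y t = ρ) (hs : 0 < s) (hs2 : s^2 = 1 - ρ^2)
    (i j k : Fin 3) (hij : i ≠ j) (hik : i ≠ k) (hjk : j ≠ k) (S : Set (Fin 4 → ℝ)) (hS : MeasurableSet S)
    (T : Set (Fin 3 → Fin n → ℝ))
    (hT : ∀ a, ∀ g : Fin 4 → ℝ,
      g 0 * (Real.sqrt 2 * Real.sqrt 3) = 2 * (∑ t, a i t * x t) - (∑ t, a j t * x t) - ∑ t, a k t * x t →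
      g 1 * Real.sqrt 2 = (∑ t, a j t * x t) - ∑ t, a k t * x t →
      (ρ * g 0 + s * g 2) * (Real.sqrt 2 * Real.sqrt 3) =
        2 * (∑ t, a i t * y t) - (∑ t, a j t * y t) - ∑ t, a k t * y t →
      (ρ * g 1 + s * g 3) * Real.sqrt 2 = (∑ t, a j t * y t) - ∑ t, a k t * y t → (a ∈ T ↔ g ∈ S)) :
    gm n T = (Measure.pi fun _ : Fin 4 => gaussianReal 0 1) S := by
  have h2 : Real.sqrt 2 ^ 2 = 2 := Real.sq_sqrt (by norm_num)
  have h20 : Real.sqrt 2 ≠ 0 := by positivity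
  have h3 : Real.sqrt 3 ^ 2 = 3 := Real.sq_sqrt (by norm_num)
  have h30 : Real.sqrt 3 ≠ 0 := by positivity
  have hs0 := hs.ne'
  let c : Fin 3 → ℝ := fun m => if m = i then 2/(Real.sqrt 2*Real.sqrt 3) else -(1/(Real.sqrt 2*Real.sqrt 3))
  let d : Fin 3 → ℝ := fun m => if m = j then 1/Real.sqrt 2 else if m = k then -(1/Real.sqrt 2) else 0
  let z : Fin n → ℝ := fun t => (y t - ρ * x t)/s
  have hcc : ∑ m, c m * c m = 1 := by
    rw [sum3 i j k hij hik hjk]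
    simp only [c, hij.symm, hik.symm, if_true, if_false]
    field_simp
    rw [h2, h3]; norm_num
  have hdd : ∑ m, d m * d m = 1 := by
    rw [sum3 i j k hij hik hjk]
    simp only [d, hij, hik, hjk.symm, if_true, if_false]
    field_simp
    rw [h2]; norm_num
  have hcd : ∑ m, c m * d m = 0 := by
    rw [sum3 i j k hij hik hjk]
    simp only [c, d, hij, hij.symm, hik, hik.symm, hjk.symm, if_true, if_false]
    ring
  have hdc : ∑ m, d m * c m = 0 := by rw [← hcd]; simp only [mul_comm]
  have hxx : ∑ t, x t * x t = 1 := by rw [← hx]; simp only [sq]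
  have hxz : ∑ t, x t * z t = 0 := by
    have : ∑ t, x t * z t = ((∑ t, x t * y t) - ρ * ∑ t, x t ^ 2)/s := by
      rw [Finset.mul_sum, ← Finset.sum_sub_distrib, Finset.sum_div]
      exact Finset.sum_congr rfl fun t _ => by simp only [z]; ring
    rw [this, hρ, hx]; ring
  have hzx : ∑ t, z t * x t = 0 := by rw [← hxz]; simp only [mul_comm]
  have hzz : ∑ t, z t * z t = 1 := by
    have : ∑ t, z t * z t = ((∑ t, y t ^ 2) - 2 * ρ * (∑ t, x t * y t) + ρ^2 * ∑ t, x t ^ 2)/s^2 := by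
      rw [Finset.mul_sum, Finset.mul_sum, ← Finset.sum_sub_distrib, ← Finset.sum_add_distrib, Finset.sum_div]
      exact Finset.sum_congr rfl fun t _ => by simp only [z]; field_simp; ring
    rw [this, hρ, hx, hy, hs2, div_eq_one_iff_eq (by rw [← hs2]; positivity)]; ring
  have hY : ∀ (a : Fin 3 → Fin n → ℝ) m, ρ * (∑ t, a m t * x t) + s * (∑ t, a m t * z t) = ∑ t, a m t * y t := by
    intro a m
    rw [Finset.mul_sum, Finset.mul_sum, ← Finset.sum_add_distrib]
    exact Finset.sum_congr rfl fun t _ => by simp only [z]; field_simp; ring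
  let w : Fin 4 → Fin 3 → Fin n → ℝ := ![fun m t => c m * x t, fun m t => d m * x t,
    fun m t => c m * z t, fun m t => d m * z t]
  have hlaw := gauss_law n w (by
    intro k' l
    fin_cases k' <;> fin_cases l <;>
      simp [w, sum_prod_aux, hcc, hdd, hcd, hdc, hxx, hxz, hzx, hzz])
  rw [← hlaw, Measure.map_apply (by fun_prop) hS]
  congr 1
  ext a
  rw [Set.mem_preimage]
  have g0 : (∑ m, ∑ t, a m t * w 0 m t) * (Real.sqrt 2 * Real.sqrt 3) =
      2 * (∑ t, a i t * x t) - (∑ t, a j t * x t) - ∑ t, a k t * x t := by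
    simp only [w, Matrix.cons_val]
    rw [sum_lin_aux, sum3 i j k hij hik hjk]
    simp only [c, hij.symm, hik.symm, if_true, if_false]
    field_simp
    ring
  have g1 : (∑ m, ∑ t, a m t * w 1 m t) * Real.sqrt 2 = (∑ t, a j t * x t) - ∑ t, a k t * x t := by
    simp only [w, Matrix.cons_val]
    rw [sum_lin_aux, sum3 i j k hij hik hjk]
    simp only [d, hij, hik, hjk.symm, if_true, if_false]
    field_simp
    ring
  have g2 : (∑ m, ∑ t, a m t * w 2 m t) * (Real.sqrt 2 * Real.sqrt 3) =
      2 * (∑ t, a i t * z t) - (∑ t, a j t * z t) - ∑ t, a k t * z t := by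
    simp only [w, Matrix.cons_val]
    rw [sum_lin_aux, sum3 i j k hij hik hjk]
    simp only [c, hij.symm, hik.symm, if_true, if_false]
    field_simp
    ring
  have g3 : (∑ m, ∑ t, a m t * w 3 m t) * Real.sqrt 2 = (∑ t, a j t * z t) - ∑ t, a k t * z t := by
    simp only [w, Matrix.cons_val]
    rw [sum_lin_aux, sum3 i j k hij hik hjk]
    simp only [d, hij, hik, hjk.symm, if_true, if_false]
    field_simp
    ring
  have g2' : (ρ * (∑ m, ∑ t, a m t * w 0 m t) + s * (∑ m, ∑ t, a m t * w 2 m t)) * (Real.sqrt 2 * Real.sqrt 3) =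
        2 * (∑ t, a i t * y t) - (∑ t, a j t * y t) - ∑ t, a k t * y t := by
    simp only [← hY]
    linear_combination ρ * g0 + s * g2
  have g3' : (ρ * (∑ m, ∑ t, a m t * w 1 m t) + s * (∑ m, ∑ t, a m t * w 3 m t)) * Real.sqrt 2 =
        (∑ t, a j t * y t) - ∑ t, a k t * y t := by
    simp only [← hY]
    linear_combination ρ * g1 + s * g3
  exact hT a _ g0 g1 g2' g3'

/-- index `i` is the strict maximizer of the inner products with `x` -/
def wins {n : ℕ} (x : Fin n → ℝ) (i : Fin 3) (a : Fin 3 → Fin n → ℝ) : Prop :=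
  ∀ k, k ≠ i → (∑ t, a k t * x t) < ∑ t, a i t * x t

lemma forall3 (i j k : Fin 3) (hij : i ≠ j) (hik : i ≠ k) (hjk : j ≠ k) (P : Fin 3 → Prop) :
    (∀ m, m ≠ i → P m) ↔ P j ∧ P k := by
  constructor
  · intro h
    exact ⟨h j hij.symm, h k hik.symm⟩
  · rintro ⟨h1, h2⟩ m hm
    have : m = j ∨ m = k := by clear h1 h2; revert i j k m; decide
    rcases this with rfl | rfl <;> assumption

lemma same_event (n : ℕ) (x y : Fin n → ℝ) (hx : ∑ t, x t ^ 2 = 1) (hy : ∑ t, y t ^ 2 = 1)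
    (ρ s : ℝ) (hρ : ∑ t, x t * y t = ρ) (hs : 0 < s) (hs2 : s^2 = 1 - ρ^2) (h0 : ρ ≤ 0) (i : Fin 3) :
    gm n {a | wins x i a ∧ wins y i a} ≤ ENNReal.ofReal ((1+ρ)/6) := by
  obtain ⟨j, k, hij, hik, hjk⟩ : ∃ j k : Fin 3, i ≠ j ∧ i ≠ k ∧ j ≠ k := by revert i; decide
  have h20 : 0 < Real.sqrt 2 := by positivity
  refine le_of_eq_of_le (transfer n x y hx hy ρ s hρ hs hs2 i j k hij hik hjk _ (by measurability) _ ?_)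
    (same_upper ρ s hs hs2 h0)
  intro a g e0 e1 e2 e3
  simp only [Set.mem_ofPred_eq, wins, forall3 i j k hij hik hjk]
  rw [← mul_pos_iff_of_pos_left h20, ← mul_pos_iff_of_pos_left (b := Real.sqrt 3 * g 0 + g 1) h20,
    ← mul_pos_iff_of_pos_left (b := Real.sqrt 3 * (ρ * g 0 + s * g 2) - (ρ * g 1 + s * g 3)) h20,
    ← mul_pos_iff_of_pos_left (b := Real.sqrt 3 * (ρ * g 0 + s * g 2) + (ρ * g 1 + s * g 3)) h20]
  have f1 : Real.sqrt 2 * (Real.sqrt 3 * g 0 - g 1) = 2 * ((∑ t, a i t * x t) - ∑ t, a j t * x t) := by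
    linear_combination e0 - e1
  have f2 : Real.sqrt 2 * (Real.sqrt 3 * g 0 + g 1) = 2 * ((∑ t, a i t * x t) - ∑ t, a k t * x t) := by
    linear_combination e0 + e1
  have f3 : Real.sqrt 2 * (Real.sqrt 3 * (ρ * g 0 + s * g 2) - (ρ * g 1 + s * g 3)) =
      2 * ((∑ t, a i t * y t) - ∑ t, a j t * y t) := by
    linear_combination e2 - e3
  have f4 : Real.sqrt 2 * (Real.sqrt 3 * (ρ * g 0 + s * g 2) + (ρ * g 1 + s * g 3)) =
      2 * ((∑ t, a i t * y t) - ∑ t, a k t * y t) := by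
    linear_combination e2 + e3
  rw [f1, f2, f3, f4]
  simp only [mul_pos_iff_of_pos_left (two_pos (α := ℝ)), sub_pos]
  tauto

lemma diff_event (n : ℕ) (x y : Fin n → ℝ) (hx : ∑ t, x t ^ 2 = 1) (hy : ∑ t, y t ^ 2 = 1)
    (ρ s : ℝ) (hρ : ∑ t, x t * y t = ρ) (hs : 0 < s) (hs2 : s^2 = 1 - ρ^2) (h0 : 0 ≤ ρ) (i j : Fin 3)
    (hij : i ≠ j) :
    ENNReal.ofReal ((1-ρ)/12) ≤ gm n {a | wins x i a ∧ wins y j a} := by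
  obtain ⟨k, hik, hjk⟩ : ∃ k : Fin 3, i ≠ k ∧ j ≠ k := by revert i j; decide
  have h20 : 0 < Real.sqrt 2 := by positivity
  refine le_of_le_of_eq (diff_lower ρ s hs hs2 h0)
    (transfer n x y hx hy ρ s hρ hs hs2 i j k hij hik hjk _ (by measurability) _ ?_).symm
  intro a g e0 e1 e2 e3
  simp only [Set.mem_ofPred_eq, wins, forall3 i j k hij hik hjk, forall3 j i k hij.symm hjk hik]
  rw [← mul_pos_iff_of_pos_left h20, ← mul_pos_iff_of_pos_left (b := Real.sqrt 3 * g 0 + g 1) h20,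
    ← mul_pos_iff_of_pos_left (b := ρ * g 1 + s * g 3) h20,
    ← mul_pos_iff_of_pos_left (b := (ρ * g 1 + s * g 3) - Real.sqrt 3 * (ρ * g 0 + s * g 2)) h20]
  have f1 : Real.sqrt 2 * (Real.sqrt 3 * g 0 - g 1) = 2 * ((∑ t, a i t * x t) - ∑ t, a j t * x t) := by
    linear_combination e0 - e1
  have f2 : Real.sqrt 2 * (Real.sqrt 3 * g 0 + g 1) = 2 * ((∑ t, a i t * x t) - ∑ t, a k t * x t) := by
    linear_combination e0 + e1
  have f3 : Real.sqrt 2 * ((ρ * g 1 + s * g 3) - Real.sqrt 3 * (ρ * g 0 + s * g 2)) =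
      2 * ((∑ t, a j t * y t) - ∑ t, a i t * y t) := by
    linear_combination e3 - e2
  have f4 : Real.sqrt 2 * (ρ * g 1 + s * g 3) = (∑ t, a j t * y t) - ∑ t, a k t * y t := by
    linear_combination e3
  rw [f1, f2, f3, f4]
  simp only [mul_pos_iff_of_pos_left (two_pos (α := ℝ)), sub_pos]
  tauto

lemma wins_unique {n : ℕ} (x : Fin n → ℝ) (i j : Fin 3) (a : Fin 3 → Fin n → ℝ) (hi : wins x i a)
    (hj : wins x j a) : i = j := by
  by_contra h
  exact lt_asymm (hi j (Ne.symm h)) (hj i h)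

lemma wins_exists (n : ℕ) (x : Fin n → ℝ) (hx : ∑ t, x t ^ 2 = 1) :
    ∀ᵐ a ∂(gm n), ∃ i, wins x i a := by
  have : ∀ᵐ a ∂(gm n), ∀ i j : Fin 3, i ≠ j → (∑ t, a i t * x t) ≠ ∑ t, a j t * x t := by
    rw [ae_all_iff]; intro i
    rw [ae_all_iff]; intro j
    by_cases h : i = j
    · simp [h]
    · filter_upwards [tie_null n x hx i j h] with a ha _ using ha
  filter_upwards [this] with a ha
  obtain ⟨i, hi⟩ := Finite.exists_max (fun i : Fin 3 => ∑ t, a i t * x t)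
  exact ⟨i, fun k hk => lt_of_le_of_ne (hi k) (ha k i hk)⟩

lemma wins_meas {n : ℕ} (x y : Fin n → ℝ) (i j : Fin 3) :
    MeasurableSet {a : Fin 3 → Fin n → ℝ | wins x i a ∧ wins y j a} := by
  have h : ∀ (x : Fin n → ℝ) (i : Fin 3), MeasurableSet {a : Fin 3 → Fin n → ℝ | wins x i a} := by
    intro x i
    have : {a : Fin 3 → Fin n → ℝ | wins x i a} = ⋂ k, {a : Fin 3 → Fin n → ℝ | k ≠ i →
      (∑ t, a k t * x t) < ∑ t, a i t * x t} := by ext a; simp [wins]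
    rw [this]
    refine MeasurableSet.iInter fun k => ?_
    by_cases hk : k = i
    · simp [hk]
    · simp only [ne_eq, hk, not_false_eq_true, forall_const]
      exact measurableSet_lt (by fun_prop) (by fun_prop)
  exact (h x i).inter (h y j)

lemma lower_of_same (n : ℕ) (x y : Fin n → ℝ) (hx : ∑ t, x t ^ 2 = 1) (hy : ∑ t, y t ^ 2 = 1) (p : ℝ)
    (hp : 0 ≤ p) (h : ∀ i, gm n {a | wins x i a ∧ wins y i a} ≤ ENNReal.ofReal (p/6)) :
    ENNReal.ofReal (1 - p/2) ≤ gm n {a | ∃ i j, i ≠ j ∧ wins x i a ∧ wins y j a} := by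
  have h1 : (1 : ENNReal) ≤ gm n {a | ∃ i j, i ≠ j ∧ wins x i a ∧ wins y j a} + ENNReal.ofReal (p/2) := by
    calc (1 : ENNReal) = gm n Set.univ := measure_univ.symm
      _ ≤ gm n ({a | ∃ i j, i ≠ j ∧ wins x i a ∧ wins y j a} ∪ ⋃ i, {a | wins x i a ∧ wins y i a}) := by
          apply measure_mono_ae
          filter_upwards [wins_exists n x hx, wins_exists n y hy] with a ⟨i, hi⟩ ⟨j, hj⟩ _
          by_cases hij : i = j
          · subst hij
            exact Or.inr (Set.mem_iUnion.2 ⟨i, hi, hj⟩)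
          · exact Or.inl ⟨i, j, hij, hi, hj⟩
      _ ≤ _ := by
          refine (measure_union_le _ _).trans (add_le_add le_rfl ?_)
          refine (measure_iUnion_fintype_le _ _).trans ((Finset.sum_le_sum fun i _ => h i).trans ?_)
          rw [← ENNReal.ofReal_sum_of_nonneg (fun _ _ => by positivity)]
          apply ENNReal.ofReal_le_ofReal
          simp; linarith
  rw [ENNReal.ofReal_sub _ (by positivity), ENNReal.ofReal_one]
  exact tsub_le_iff_right.2 h1

lemma lower_of_diff (n : ℕ) (x y : Fin n → ℝ) (p : ℝ) (hp : 0 ≤ p)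
    (h : ∀ i j, i ≠ j → ENNReal.ofReal (p/12) ≤ gm n {a | wins x i a ∧ wins y j a}) :
    ENNReal.ofReal (p/2) ≤ gm n {a | ∃ i j, i ≠ j ∧ wins x i a ∧ wins y j a} := by
  let I : Finset (Fin 3 × Fin 3) := Finset.univ.filter fun q => q.1 ≠ q.2
  have hI : I.card = 6 := by decide
  calc ENNReal.ofReal (p/2) = ∑ q ∈ I, ENNReal.ofReal (p/12) := by
        rw [Finset.sum_const, hI, ← ENNReal.ofReal_nsmul]
        congr 1; simp; ring
    _ ≤ ∑ q ∈ I, gm n {a | wins x q.1 a ∧ wins y q.2 a} :=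
        Finset.sum_le_sum fun q hq => h q.1 q.2 (Finset.mem_filter.1 hq).2
    _ = gm n (⋃ q ∈ I, {a | wins x q.1 a ∧ wins y q.2 a}) := by
        rw [measure_biUnion_finset _ (fun q _ => wins_meas x y q.1 q.2)]
        intro q _ q' _ hqq
        refine Set.disjoint_left.2 fun a ha ha' => hqq ?_
        exact Prod.ext (wins_unique x _ _ a ha.1 ha'.1) (wins_unique y _ _ a ha.2 ha'.2)
    _ ≤ _ := by
        apply measure_mono
        intro a ha
        simp only [Set.mem_iUnion] at ha
        obtain ⟨q, hq, h1, h2⟩ := ha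
        exact ⟨q.1, q.2, (Finset.mem_filter.1 hq).2, h1, h2⟩


/-- For unit vectors `x, y ∈ ℝⁿ` and independent standard Gaussian vectors
`a 0, a 1, a 2` in `ℝⁿ`, the probability that the (strict) maximizing indices of
`i ↦ (a i)·x` and `j ↦ (a j)·y` differ is at least `(1 − x·y)/2`. -/
theorem stmt_16 (n : ℕ) (x y : Fin n → ℝ)
    (hx : ∑ t, x t ^ 2 = 1) (hy : ∑ t, y t ^ 2 = 1) :
    ENNReal.ofReal ((1 - ∑ t, x t * y t) / 2) ≤
      (Measure.pi fun _ : Fin 3 => Measure.pi fun _ : Fin n => gaussianReal 0 1)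
        {a : Fin 3 → Fin n → ℝ | ∃ i j : Fin 3, i ≠ j ∧
          (∀ k, k ≠ i → (∑ t, a k t * x t) < ∑ t, a i t * x t) ∧
          (∀ k, k ≠ j → (∑ t, a k t * y t) < ∑ t, a j t * y t)} := by
  change _ ≤ gm n {a | ∃ i j, i ≠ j ∧ wins x i a ∧ wins y j a}
  obtain ⟨ρ, hρ⟩ : ∃ ρ, ∑ t, x t * y t = ρ := ⟨_, rfl⟩
  rw [hρ]
  have hplus : ∑ t, (x t + y t)^2 = 2 + 2 * ρ := by
    have : ∑ t, (x t + y t)^2 = (∑ t, x t ^ 2) + (∑ t, y t ^ 2) + 2 * ∑ t, x t * y t := by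
      rw [Finset.mul_sum, ← Finset.sum_add_distrib, ← Finset.sum_add_distrib]
      exact Finset.sum_congr rfl fun t _ => by ring
    rw [this, hx, hy, hρ]; ring
  have hge : -1 ≤ ρ := by
    have : 0 ≤ ∑ t, (x t + y t)^2 := Finset.sum_nonneg fun t _ => sq_nonneg _
    linarith
  rcases le_or_gt 1 ρ with h1 | h1
  · rw [ENNReal.ofReal_of_nonpos (by linarith)]
    exact zero_le
  rcases eq_or_lt_of_le hge with hm | hm
  · have hyx : ∀ t, y t = - x t := by
      have hz : ∑ t, (x t + y t)^2 = 0 := by rw [hplus, ← hm]; ring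
      intro t
      have := (Finset.sum_eq_zero_iff_of_nonneg (fun t _ => sq_nonneg (x t + y t))).1 hz t (Finset.mem_univ t)
      have := pow_eq_zero_iff (two_ne_zero) |>.1 this
      linarith
    have := lower_of_same n x y hx hy 0 le_rfl (by
      intro i
      have he : {a : Fin 3 → Fin n → ℝ | wins x i a ∧ wins y i a} = ∅ := by
        ext a
        simp only [Set.mem_ofPred_eq, Set.mem_empty_iff_false, iff_false, not_and]
        intro hi hi'
        obtain ⟨k, hk⟩ : ∃ k : Fin 3, k ≠ i := by clear hi hi'; revert i; decide
        have u1 := hi k hk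
        have u2 := hi' k hk
        simp only [hyx, mul_neg, Finset.sum_neg_distrib] at u2
        linarith
      rw [he]; simp)
    rw [← hm]
    convert this using 2
    norm_num
  have hs2 : Real.sqrt (1 - ρ^2) ^ 2 = 1 - ρ^2 := Real.sq_sqrt (by nlinarith)
  have hs : 0 < Real.sqrt (1 - ρ^2) := Real.sqrt_pos.2 (by nlinarith)
  rcases le_total 0 ρ with h0 | h0
  · exact lower_of_diff n x y (1-ρ) (by linarith)
      fun i j hij => diff_event n x y hx hy ρ _ hρ hs hs2 h0 i j hij
  · have := lower_of_same n x y hx hy (1+ρ) (by linarith)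
      fun i => same_event n x y hx hy ρ _ hρ hs hs2 h0 i
    convert this using 2
    ring
end

section
/- Fix d ∈ ℕ and ε ∈ (0,1), and let N be a natural number with N ≥ ((42·d^{7/4} + 16·d^{3/2})/ε)². Let s = (s₁, …, s_d) where s₁, …, s_d are i.i.d., each distributed as the sum of N independent random variables uniform on {−1/√N, +1/√N} (a normalized binomial). Let a ∼ N(0, I_d) be a standard Gaussian vector in ℝ^d. Then for every convex measurable set S ⊆ ℝ^d, |Pr[s ∈ S] − Pr[a ∈ S]| ≤ ε. -/
open MeasureTheory ProbabilityTheory Real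
open scoped ENNReal

theorem hybrid (β γ : Measure ℝ) [IsProbabilityMeasure β] [IsProbabilityMeasure γ] (K : ℝ≥0∞)
    (h : ∀ I : Set ℝ, Convex ℝ I → MeasurableSet I → β I ≤ γ I + K) (d : ℕ) :
    ∀ S : Set (Fin d → ℝ), Convex ℝ S → MeasurableSet S →
      Measure.pi (fun _ : Fin d => β) S ≤ Measure.pi (fun _ : Fin d => γ) S + d * K := by
  induction d with
  | zero =>
    intro S hS hSm
    have : (fun _ : Fin 0 => β) = (fun _ : Fin 0 => γ) := by
      funext i; exact i.elim0
    rw [this]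
    exact le_self_add
  | succ d ih =>
    intro S hS hSm
    let e := (MeasurableEquiv.piFinSuccAbove (fun _ : Fin (d+1) => ℝ) 0).symm
    have key : ∀ m : Measure ℝ, IsProbabilityMeasure m →
        Measure.pi (fun _ : Fin (d+1) => m) S = (m.prod (Measure.pi (fun _ : Fin d => m))) (e ⁻¹' S) := by
      intro m hm
      have := (measurePreserving_piFinSuccAbove (fun _ : Fin (d+1) => m) 0).symm
      exact (this.measure_preimage hSm.nullMeasurableSet).symm
    have hT : Convex ℝ (e ⁻¹' S) := by
      intro x hx y hy a b ha hb hab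
      have h1 := hS hx hy ha hb hab
      show e _ ∈ S
      convert h1 using 1
      funext i
      refine Fin.cases ?_ ?_ i
      · simp [e, MeasurableEquiv.piFinSuccAbove]
      · intro j
        simp [e, MeasurableEquiv.piFinSuccAbove]
    have hTm : MeasurableSet (e ⁻¹' S) := e.measurable hSm
    rw [key β inferInstance, key γ inferInstance]
    generalize e ⁻¹' S = T at hT hTm
    have s1 : (β.prod (Measure.pi (fun _ : Fin d => β))) T ≤
        (β.prod (Measure.pi (fun _ : Fin d => γ))) T + d * K := by
      rw [Measure.prod_apply hTm, Measure.prod_apply hTm]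
      calc _ ≤ ∫⁻ x, (Measure.pi (fun _ : Fin d => γ) (Prod.mk x ⁻¹' T) + d * K) ∂β := by
            apply lintegral_mono
            intro x
            apply ih
            · intro u hu v hv a b ha hb hab
              have := hT hu hv ha hb hab
              simpa [← add_mul, hab] using this
            · exact measurable_prodMk_left hTm
        _ = _ := by
            rw [lintegral_add_right _ measurable_const]; simp
    have s2 : (β.prod (Measure.pi (fun _ : Fin d => γ))) T ≤
        (γ.prod (Measure.pi (fun _ : Fin d => γ))) T + K := by
      rw [Measure.prod_apply_symm hTm, Measure.prod_apply_symm hTm]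
      calc _ ≤ ∫⁻ y, (γ ((fun x => (x, y)) ⁻¹' T) + K) ∂(Measure.pi (fun _ : Fin d => γ)) := by
            apply lintegral_mono
            intro y
            apply h
            · intro u hu v hv a b ha hb hab
              have := hT hu hv ha hb hab
              simpa [← add_smul, hab] using this
            · exact measurable_prodMk_right hTm
        _ = _ := by
            rw [lintegral_add_right _ measurable_const]; simp
    calc _ ≤ _ := s1
      _ ≤ _ := add_le_add_left s2 _
      _ = _ := by push_cast; ring

/-- averaging operator -/
noncomputable def TT (h : ℝ) : (ℝ → ℝ) →ₗ[ℝ] (ℝ → ℝ) where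
  toFun F := fun x => (F (x + h) + F (x - h)) / 2
  map_add' F G := by funext x; simp; ring
  map_smul' c F := by funext x; simp; ring

theorem TT_apply (h : ℝ) (F : ℝ → ℝ) (x : ℝ) : TT h F x = (F (x + h) + F (x - h)) / 2 := rfl

theorem TT_pow_mono (h : ℝ) (n : ℕ) : ∀ (F G : ℝ → ℝ), (∀ x, F x ≤ G x) → ∀ x,
    (TT h ^ n) F x ≤ (TT h ^ n) G x := by
  induction n with
  | zero => intro F G hFG x; simpa using hFG x
  | succ n ih =>
    intro F G hFG x
    rw [pow_succ]
    apply ih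
    intro y
    simp only [TT_apply]
    linarith [hFG (y+h), hFG (y-h)]

theorem TT_pow_const (h c : ℝ) (n : ℕ) : (TT h ^ n) (fun _ => c) = fun _ => c := by
  induction n with
  | zero => simp
  | succ n ih =>
    rw [pow_succ']
    simp only [Module.End.mul_apply, ih]
    funext x; simp [TT_apply]

theorem TT_stein (h : ℝ) (n : ℕ) : ∀ (F : ℝ → ℝ) (x : ℝ),
    (TT h ^ (n+1)) (fun y => y * F y) x = x * (TT h ^ (n+1)) F x +
      (n+1) * h * (TT h ^ n) (fun y => (F (y + h) - F (y - h)) / 2) x := by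
  induction n with
  | zero => intro F x; simp [TT_apply]; ring
  | succ n ih =>
    intro F x
    have hD : ∀ m : ℕ, ∀ y, (TT h ^ m) (fun y => (F (y + h) - F (y - h)) / 2) y =
        ((TT h ^ m) F (y+h) - (TT h ^ m) F (y-h)) / 2 := by
      intro m
      induction m with
      | zero => intro y; simp
      | succ m ihm =>
        intro y
        rw [pow_succ']
        simp only [Module.End.mul_apply, TT_apply, ihm]
        ring_nf
    rw [pow_succ' _ (n+1)]
    simp only [Module.End.mul_apply]
    rw [TT_apply, ih, ih, TT_apply]
    have e1 := hD (n+1) x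
    have e2 : (TT h ^ (n+1)) (fun y => (F (y + h) - F (y - h)) / 2) x = 
       ((TT h ^ n) (fun y => (F (y + h) - F (y - h)) / 2) (x+h) + (TT h ^ n) (fun y => (F (y + h) - F (y - h)) / 2) (x-h))/2 := by
      rw [pow_succ']; simp only [Module.End.mul_apply, TT_apply]
    push_cast
    rw [show ((n:ℝ) + 1 + 1) * h * (TT h ^ (n+1)) (fun y => (F (y + h) - F (y - h)) / 2) x = 
      (n+1) * h * (TT h ^ (n+1)) (fun y => (F (y + h) - F (y - h)) / 2) x +  h * (TT h ^ (n+1)) (fun y => (F (y + h) - F (y - h)) / 2) x by ring]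
    nth_rw 1 [e2]
    rw [e1]
    ring

/-- abs moment -/
theorem TT_abs (h : ℝ) (n : ℕ) (hh : (n+1) * h * h = 1) : (TT h ^ (n+1)) (fun y => |y|) 0 ≤ 1 := by
  have h2 : (TT h ^ (n+1)) (fun y => y * y) 0 = 1 := by
    rw [TT_stein h n (fun y => y) 0]
    have : (fun y : ℝ => ((y + h) - (y - h)) / 2) = fun _ => h := by funext y; ring
    rw [this, TT_pow_const]; simp [hh]
  have h3 := TT_pow_mono h (n+1) (fun y => |y|) ((1/2:ℝ) • (fun y => y * y) + (fun _ => (1/2:ℝ))) (by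
    intro x; simp; nlinarith [sq_nonneg (|x| - 1), abs_mul_abs_self x]) 0
  rw [map_add, map_smul, TT_pow_const] at h3
  simp only [Pi.add_apply, Pi.smul_apply, h2, smul_eq_mul] at h3
  linarith

/-- integral against binomial -/
theorem TT_integral (h : ℝ) (ν : Measure ℝ) (hν : ν = (2 : ℝ≥0∞)⁻¹ • Measure.dirac (-h) +
        (2 : ℝ≥0∞)⁻¹ • Measure.dirac h) (n : ℕ) (s : Set ℝ) (hs : MeasurableSet s) :
    ∀ x : ℝ, ((Measure.pi (fun _ : Fin n => ν)) {X | x + ∑ i, X i ∈ s}) = 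
      ENNReal.ofReal ((TT h ^ n) (s.indicator (fun _ => 1)) x) := by
  have hp : IsProbabilityMeasure ν := by
    subst hν; constructor; simp [ENNReal.inv_two_add_inv_two]
  induction n with
  | zero =>
    intro x
    by_cases hx : x ∈ s <;> simp [hx]
  | succ n ih =>
    intro x
    have hm : MeasurableSet {X : Fin (n+1) → ℝ | x + ∑ i, X i ∈ s} := by
      have : Measurable (fun X : Fin (n+1) → ℝ => x + ∑ i, X i) := by fun_prop
      exact this hs
    have := (measurePreserving_piFinSuccAbove (fun _ : Fin (n+1) => ν) 0).symm
    rw [← this.measure_preimage hm.nullMeasurableSet, Measure.prod_apply (this.measurable hm)]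
    have e : ∀ t : ℝ, (Prod.mk t ⁻¹' ((MeasurableEquiv.piFinSuccAbove (fun _ : Fin (n+1) => ℝ) 0).symm ⁻¹' {X | x + ∑ i, X i ∈ s})) = {X : Fin n → ℝ | (x + t) + ∑ i, X i ∈ s} := by
      intro t
      ext X
      simp [MeasurableEquiv.piFinSuccAbove, Fin.sum_univ_succ, add_assoc]
    have hnn : ∀ y, 0 ≤ (TT h ^ n) (s.indicator (fun _ => 1)) y := by
      intro y
      have := TT_pow_mono h n (fun _ => 0) (s.indicator (fun _ => 1)) (by
        intro x; exact Set.indicator_nonneg (by simp) x) y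
      rwa [TT_pow_const] at this
    simp only [e, ih]
    rw [hν, lintegral_add_measure, lintegral_smul_measure, lintegral_smul_measure, lintegral_dirac, lintegral_dirac]
    rw [pow_succ']
    simp only [Module.End.mul_apply, TT_apply]
    rw [ENNReal.ofReal_div_of_pos (by norm_num), ENNReal.ofReal_add (hnn _) (hnn _)]
    rw [← sub_eq_add_neg]
    simp [ENNReal.div_eq_inv_mul, mul_add, add_comm]

/-- standard normal density -/
noncomputable def PP (x : ℝ) : ℝ := gaussianPDFReal 0 1 x

/-- standard normal cdf -/
noncomputable def Ph (w : ℝ) : ℝ := ∫ x in Set.Iic w, PP x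

theorem PP_eq (x : ℝ) : PP x = (√(2 * π))⁻¹ * exp (- x ^ 2 / 2) := by
  simp [PP, gaussianPDFReal]

theorem PP_pos (x : ℝ) : 0 < PP x := gaussianPDFReal_pos 0 1 x one_ne_zero

theorem PP_deriv (x : ℝ) : HasDerivAt PP (-x * PP x) x := by
  have : PP = fun x => (√(2 * π))⁻¹ * exp (- x ^ 2 / 2) := funext PP_eq
  rw [PP_eq, this]
  have h1 : HasDerivAt (fun x : ℝ => - x ^ 2 / 2) (-x) x := by
    have := ((hasDerivAt_pow 2 x).neg).div_const 2
    exact HasDerivAt.congr_deriv this (by simp; ring)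
  exact HasDerivAt.congr_deriv (h1.exp.const_mul (√(2 * π))⁻¹) (by ring)

theorem PP_cont : Continuous PP := continuous_iff_continuousAt.2 fun x => (PP_deriv x).continuousAt

theorem PP_int : Integrable PP := integrable_gaussianPDFReal 0 1

theorem PP_integral : ∫ x, PP x = 1 := integral_gaussianPDFReal_eq_one 0 one_ne_zero

theorem sqrt_ge : 1 ≤ √(2 * π) := by
  rw [Real.le_sqrt' (by norm_num)]; nlinarith [pi_gt_three]

theorem sqrt_le3 : √(2 * π) ≤ 3 := by
  rw [Real.sqrt_le_left (by norm_num)]; nlinarith [pi_lt_four]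

theorem PP_le (x : ℝ) : PP x ≤ 1 := by
  rw [PP_eq]
  have h1 : (√(2 * π))⁻¹ ≤ 1 := inv_le_one_of_one_le₀ sqrt_ge
  have h2 : exp (- x ^ 2 / 2) ≤ 1 := by
    rw [Real.exp_le_one_iff]; nlinarith [sq_nonneg x]
  exact mul_le_one₀ h1 (exp_pos _).le h2

theorem PP_ge (x : ℝ) (hx : |x| ≤ 1) : 1/6 ≤ PP x := by
  rw [PP_eq]
  have h1 : (3:ℝ)⁻¹ ≤ (√(2 * π))⁻¹ := inv_anti₀ (by linarith [sqrt_ge]) sqrt_le3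
  have h2 : 1/2 ≤ exp (- x ^ 2 / 2) := by
    have := add_one_le_exp (- x ^ 2 / 2)
    have : x^2 ≤ 1 := by rw [← sq_abs]; nlinarith [abs_nonneg x]
    linarith
  calc (1/6:ℝ) = 3⁻¹ * (1/2) := by norm_num
    _ ≤ _ := by gcongr

theorem Ph_sub (a b : ℝ) : Ph b - Ph a = ∫ x in a..b, PP x :=
  intervalIntegral.integral_Iic_sub_Iic PP_int.integrableOn PP_int.integrableOn

theorem Ph_deriv (x : ℝ) : HasDerivAt Ph (PP x) x := by
  have : Ph = fun w => Ph 0 + ∫ x in (0:ℝ)..w, PP x := by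
    funext w; rw [← Ph_sub]; ring
  rw [this]
  exact (intervalIntegral.integral_hasDerivAt_right (PP_cont.intervalIntegrable _ _)
    (PP_cont.stronglyMeasurableAtFilter _ _) PP_cont.continuousAt).const_add _

theorem Ph_mono : Monotone Ph := by
  intro a b hab
  have := Ph_sub a b
  have h2 : 0 ≤ ∫ x in a..b, PP x := intervalIntegral.integral_nonneg hab fun x _ => (PP_pos x).le
  linarith

theorem Ph_lip (a b : ℝ) (hab : a ≤ b) : Ph b - Ph a ≤ b - a := by
  rw [Ph_sub]
  calc _ ≤ ∫ x in a..b, (1:ℝ) := intervalIntegral.integral_mono_on hab (PP_cont.intervalIntegrable _ _)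
          (by simp) (fun x _ => PP_le x)
    _ = _ := by simp

theorem Ph_nonneg (w : ℝ) : 0 ≤ Ph w := integral_nonneg fun x => (PP_pos x).le

theorem Ph_compl (w : ℝ) : 1 - Ph w = ∫ x in Set.Ioi w, PP x := by
  have := integral_add_compl (measurableSet_Iic (a := w)) PP_int
  rw [PP_integral, Set.compl_Iic] at this
  unfold Ph; linarith

theorem Ph_le (w : ℝ) : Ph w ≤ 1 := by
  have h : 0 ≤ ∫ x in Set.Ioi w, PP x := integral_nonneg fun x => (PP_pos x).le
  rw [← Ph_compl] at h; linarith

theorem xPP_int : Integrable (fun x => x * PP x) := by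
  have := (integrable_mul_exp_neg_mul_sq (b := 1/2) (by norm_num)).const_mul (√(2 * π))⁻¹
  convert this using 2 with x
  rw [PP_eq]
  ring_nf

theorem PP_tendsto_top : Filter.Tendsto PP Filter.atTop (nhds 0) := by
  have h : Filter.Tendsto (fun x : ℝ => x ^ 2 / 2) Filter.atTop Filter.atTop :=
    (Filter.tendsto_pow_atTop (by norm_num)).atTop_div_const (by norm_num)
  have h2 := (tendsto_exp_neg_atTop_nhds_zero.comp h).const_mul (√(2 * π))⁻¹
  rw [mul_zero] at h2
  refine h2.congr fun x => ?_
  rw [PP_eq]; simp [neg_div]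

theorem PP_even (x : ℝ) : PP (-x) = PP x := by rw [PP_eq, PP_eq]; simp

theorem PP_tendsto_bot : Filter.Tendsto PP Filter.atBot (nhds 0) := by
  have := PP_tendsto_top.comp Filter.tendsto_neg_atBot_atTop
  exact this.congr fun x => PP_even x

theorem mills_right (w : ℝ) : w * (1 - Ph w) ≤ PP w := by
  have h := integral_Ioi_of_hasDerivAt_of_tendsto' (a := w) (f := fun x => - PP x) (f' := fun x => x * PP x) (m := 0)
    (fun x _ => HasDerivAt.congr_deriv (PP_deriv x).neg (by ring)) xPP_int.integrableOn (by simpa using PP_tendsto_top.neg)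
  rw [Ph_compl, ← integral_const_mul]
  have h2 : PP w = ∫ x in Set.Ioi w, x * PP x := by rw [h]; ring
  rw [h2]
  apply setIntegral_mono_on (PP_int.const_mul _).integrableOn xPP_int.integrableOn measurableSet_Ioi
  intro x hx
  exact mul_le_mul_of_nonneg_right (le_of_lt hx) (PP_pos x).le

theorem mills_left (w : ℝ) : -w * Ph w ≤ PP w := by
  have h := integral_Iic_of_hasDerivAt_of_tendsto' (a := w) (f := fun x => PP x) (f' := fun x => -x * PP x) (m := 0)
    (fun x _ => PP_deriv x) (by simpa using xPP_int.neg.integrableOn) PP_tendsto_bot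
  unfold Ph
  rw [← integral_const_mul]
  have h2 : PP w = ∫ x in Set.Iic w, -x * PP x := by rw [h]; ring
  rw [h2]
  apply setIntegral_mono_on (PP_int.const_mul _).integrableOn (by simpa using xPP_int.neg.integrableOn) measurableSet_Iic
  intro x hx
  exact mul_le_mul_of_nonneg_right (neg_le_neg hx) (PP_pos x).le

theorem stein_ex (z : ℝ) : ∃ f : ℝ → ℝ, Continuous f ∧ (∀ w, |f w| ≤ 6) ∧ (∀ w, |w * f w| ≤ 1) ∧
    ∀ a b, IntervalIntegrable (fun x => x * f x + (Set.Iic z).indicator (fun _ => 1) x - Ph z) volume a b ∧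
      ∫ x in a..b, (x * f x + (Set.Iic z).indicator (fun _ => 1) x - Ph z) = f b - f a := by
  have Phc : Continuous Ph := continuous_iff_continuousAt.2 fun x => (Ph_deriv x).continuousAt
  let num : ℝ → ℝ := fun w => Ph (min w z) - Ph z * Ph w
  have hn0 : ∀ w, 0 ≤ num w := by
    intro w
    rcases le_total w z with h | h
    · simp only [num, min_eq_left h]; nlinarith [Ph_nonneg w, Ph_le z]
    · simp only [num, min_eq_right h]; nlinarith [Ph_nonneg z, Ph_le w]
  have hn1 : ∀ w, num w ≤ Ph w := by
    intro w
    have := Ph_mono (min_le_left w z)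
    have := mul_nonneg (Ph_nonneg z) (Ph_nonneg w)
    simp only [num]; linarith
  have hn2 : ∀ w, num w ≤ 1 - Ph w := by
    intro w
    have h1 := Ph_mono (min_le_right w z)
    simp only [num]; nlinarith [Ph_le z, Ph_le w]
  have hwn : ∀ w, |w| * num w ≤ PP w := by
    intro w
    rcases le_total 0 w with h | h
    · rw [abs_of_nonneg h]
      exact (mul_le_mul_of_nonneg_left (hn2 w) h).trans (mills_right w)
    · rw [abs_of_nonpos h]
      exact (mul_le_mul_of_nonneg_left (hn1 w) (by linarith)).trans (mills_left w)
  have hc : Continuous (fun w => num w / PP w) := by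
    refine Continuous.div ?_ PP_cont (fun x => (PP_pos x).ne')
    exact (Phc.comp (continuous_id.min continuous_const)).sub (continuous_const.mul Phc)
  refine ⟨fun w => num w / PP w, hc, ?_, ?_, ?_⟩
  · intro w
    rw [abs_of_nonneg (div_nonneg (hn0 w) (PP_pos w).le), div_le_iff₀ (PP_pos w)]
    rcases le_total |w| 1 with h | h
    · have := PP_ge w h
      have := hn1 w
      have := Ph_le w
      linarith
    · have := hwn w
      nlinarith [hn0 w, PP_pos w]
  · intro w
    rw [abs_mul, abs_of_nonneg (div_nonneg (hn0 w) (PP_pos w).le), ← mul_div_assoc, div_le_one (PP_pos w)]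
    exact hwn w
  · intro a b
    have hi : IntervalIntegrable (fun x => x * (num x / PP x) + (Set.Iic z).indicator (fun _ => 1) x - Ph z) volume a b := by
      refine IntervalIntegrable.sub (IntervalIntegrable.add ?_ ?_) (by simp)
      · exact (continuous_id.mul hc).intervalIntegrable _ _
      · have : IntervalIntegrable (fun _ : ℝ => (1:ℝ)) volume a b := by simp
        exact ⟨this.1.indicator measurableSet_Iic, this.2.indicator measurableSet_Iic⟩
    refine ⟨hi, ?_⟩
    refine integral_eq_of_hasDerivAt_off_countable _ _ (Set.countable_singleton z) hc.continuousOn ?_ hi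
    rintro x ⟨-, hx⟩
    have hx : x ≠ z := hx
    have hP := (PP_pos x).ne'
    rcases lt_or_gt_of_ne hx with h | h
    · have e : (fun w => num w / PP w) =ᶠ[nhds x] fun w => (Ph w - Ph z * Ph w) / PP w := by
        filter_upwards [Iio_mem_nhds h] with w hw
        simp only [num, min_eq_left (le_of_lt (show w < z from hw))]
      refine HasDerivAt.congr_of_eventuallyEq ?_ e
      refine HasDerivAt.congr_deriv (((Ph_deriv x).sub ((Ph_deriv x).const_mul (Ph z))).div (PP_deriv x) hP) ?_
      simp only [Pi.sub_apply]
      simp only [num, min_eq_left h.le, Set.indicator_of_mem (show x ∈ Set.Iic z from h.le)]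
      field_simp
      ring
    · have e : (fun w => num w / PP w) =ᶠ[nhds x] fun w => (Ph z - Ph z * Ph w) / PP w := by
        filter_upwards [Ioi_mem_nhds h] with w hw
        simp only [num, min_eq_right (le_of_lt (show z < w from hw))]
      refine HasDerivAt.congr_of_eventuallyEq ?_ e
      refine HasDerivAt.congr_deriv (((hasDerivAt_const x (Ph z)).sub ((Ph_deriv x).const_mul (Ph z))).div (PP_deriv x) hP) ?_
      simp only [Pi.sub_apply]
      simp only [num, min_eq_right h.le, Set.indicator_of_notMem (show x ∉ Set.Iic z from not_le.2 h)]
      field_simp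
      ring

theorem stein_diff (f : ℝ → ℝ) (z : ℝ) (h6 : ∀ w, |f w| ≤ 6) (h1 : ∀ w, |w * f w| ≤ 1)
    (hI : ∀ a b, IntervalIntegrable (fun x => x * f x + (Set.Iic z).indicator (fun _ => 1) x - Ph z) volume a b ∧
      ∫ x in a..b, (x * f x + (Set.Iic z).indicator (fun _ => 1) x - Ph z) = f b - f a)
    (h y u : ℝ) (hyu : |y - u| ≤ 2 * h) : |y * f y - u * f u| ≤ 12 * h + 4 * h * |u| := by
  have hL : |f y - f u| ≤ 2 * |y - u| := by
    rw [← (hI u y).2]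
    rw [← Real.norm_eq_abs (∫ x in u..y, _)]
    refine intervalIntegral.norm_integral_le_of_norm_le_const ?_
    intro x _
    have := abs_le.1 (h1 x)
    have h2 := Ph_nonneg z
    have h3 := Ph_le z
    rw [Real.norm_eq_abs, abs_le]
    by_cases hx : x ∈ Set.Iic z
    · rw [Set.indicator_of_mem hx]; constructor <;> linarith
    · rw [Set.indicator_of_notMem hx]; constructor <;> linarith
  calc |y * f y - u * f u| = |(y - u) * f y + u * (f y - f u)| := by ring_nf
    _ ≤ |(y - u) * f y| + |u * (f y - f u)| := abs_add_le _ _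
    _ = |y - u| * |f y| + |u| * |f y - f u| := by rw [abs_mul, abs_mul]
    _ ≤ (2 * h) * 6 + |u| * (2 * (2 * h)) := by
        gcongr
        · linarith [abs_nonneg (y-u)]
        · exact h6 y
        · linarith
    _ = _ := by ring

theorem kol_lower (n : ℕ) (h : ℝ) (h0 : 0 < h) (hh : (n+1) * h * h = 1) (z : ℝ) :
    Ph z ≤ (TT h ^ (n+1)) ((Set.Iic (z + 2 * h)).indicator (fun _ => 1)) 0 + 16 * h := by
  obtain ⟨f, hfc, h6, h1, hI⟩ := stein_ex z
  set J : ℝ → ℝ := (Set.Iic (z + 2 * h)).indicator (fun _ => 1) with hJ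
  have hE := TT_stein h n f 0
  rw [zero_mul, zero_add] at hE
  have hA := TT_abs h n hh
  let H : ℝ → ℝ := (fun y => y * f y) + ((fun _ => 12 * h - Ph z) + ((4 * h) • (fun y => |y|) + J))
  have hle : ∀ x, (f (x + h) - f (x - h)) / 2 ≤ (h • TT h H) x := by
    intro x
    rw [← (hI (x - h) (x + h)).2]
    have : ∫ y in (x-h)..(x+h), (y * f y + (Set.Iic z).indicator (fun _ => 1) y - Ph z) ≤
        ∫ y in (x-h)..(x+h), TT h H x := by
      refine intervalIntegral.integral_mono_on (by linarith) (hI _ _).1 (by simp) ?_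
      intro y hy
      have b1 := (abs_le.1 (stein_diff f z h6 h1 hI h y (x+h) (by rw [abs_le]; constructor <;> linarith [hy.1, hy.2]))).2
      have b2 := (abs_le.1 (stein_diff f z h6 h1 hI h y (x-h) (by rw [abs_le]; constructor <;> linarith [hy.1, hy.2]))).2
      have b3 : (Set.Iic z).indicator (fun _ => (1:ℝ)) y ≤ (J (x+h) + J (x-h))/2 := by
        by_cases hyz : y ∈ Set.Iic z
        · have hyz' : y ≤ z := hyz
          rw [hJ, Set.indicator_of_mem hyz, Set.indicator_of_mem (show x + h ∈ Set.Iic (z+2*h) by simp; linarith [hy.1]),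
            Set.indicator_of_mem (show x - h ∈ Set.Iic (z+2*h) by simp; linarith [hy.1])]
          norm_num
        · rw [Set.indicator_of_notMem hyz]
          have k1 : 0 ≤ J (x+h) := Set.indicator_nonneg (by simp) _
          have k2 : 0 ≤ J (x-h) := Set.indicator_nonneg (by simp) _
          linarith
      simp only [TT_apply, H, Pi.add_apply, Pi.smul_apply, smul_eq_mul]
      linarith
    rw [intervalIntegral.integral_const] at this
    simp only [Pi.smul_apply, smul_eq_mul] at this ⊢
    linarith
  have hm := TT_pow_mono h n _ _ hle 0
  rw [map_smul] at hm
  have e : (TT h ^ n) (TT h H) = (TT h ^ (n+1)) H := by rw [pow_succ]; rfl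
  rw [e] at hm
  simp only [H, map_add, map_smul, TT_pow_const, Pi.add_apply, Pi.smul_apply, smul_eq_mul] at hm
  have hm2 := mul_le_mul_of_nonneg_left hm (show 0 ≤ (n+1) * h by positivity)
  rw [← hE, ← mul_assoc, hh] at hm2
  nlinarith

theorem kol_upper (n : ℕ) (h : ℝ) (h0 : 0 < h) (hh : (n+1) * h * h = 1) (z : ℝ) :
    (TT h ^ (n+1)) ((Set.Iic (z - 2 * h)).indicator (fun _ => 1)) 0 ≤ Ph z + 16 * h := by
  obtain ⟨f, hfc, h6, h1, hI⟩ := stein_ex z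
  set J : ℝ → ℝ := (Set.Iic (z - 2 * h)).indicator (fun _ => 1) with hJ
  have hE := TT_stein h n f 0
  rw [zero_mul, zero_add] at hE
  have hA := TT_abs h n hh
  let H : ℝ → ℝ := (fun y => y * f y) + ((fun _ => - 12 * h - Ph z) + ((- 4 * h) • (fun y => |y|) + J))
  have hle : ∀ x, (h • TT h H) x ≤ (f (x + h) - f (x - h)) / 2 := by
    intro x
    rw [← (hI (x - h) (x + h)).2]
    have : ∫ y in (x-h)..(x+h), TT h H x ≤
       ∫ y in (x-h)..(x+h), (y * f y + (Set.Iic z).indicator (fun _ => 1) y - Ph z) := by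
      refine intervalIntegral.integral_mono_on (by linarith) (by simp) (hI _ _).1 ?_
      intro y hy
      have b1 := (abs_le.1 (stein_diff f z h6 h1 hI h y (x+h) (by rw [abs_le]; constructor <;> linarith [hy.1, hy.2]))).1
      have b2 := (abs_le.1 (stein_diff f z h6 h1 hI h y (x-h) (by rw [abs_le]; constructor <;> linarith [hy.1, hy.2]))).1
      have b3 : (J (x+h) + J (x-h))/2 ≤ (Set.Iic z).indicator (fun _ => (1:ℝ)) y := by
        by_cases hyz : y ∈ Set.Iic z
        · rw [Set.indicator_of_mem hyz]
          have k1 : J (x+h) ≤ 1 := Set.indicator_le_self' (by simp) _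
          have k2 : J (x-h) ≤ 1 := Set.indicator_le_self' (by simp) _
          linarith
        · have hyz' : z < y := not_le.1 hyz
          rw [hJ, Set.indicator_of_notMem hyz, Set.indicator_of_notMem (show x + h ∉ Set.Iic (z-2*h) by simp; linarith [hy.2]),
            Set.indicator_of_notMem (show x - h ∉ Set.Iic (z-2*h) by simp; linarith [hy.2])]
          norm_num
      simp only [TT_apply, H, Pi.add_apply, Pi.smul_apply, smul_eq_mul]
      linarith
    rw [intervalIntegral.integral_const] at this
    simp only [Pi.smul_apply, smul_eq_mul] at this ⊢
    linarith
  have hm := TT_pow_mono h n _ _ hle 0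
  rw [map_smul] at hm
  have e : (TT h ^ n) (TT h H) = (TT h ^ (n+1)) H := by rw [pow_succ]; rfl
  rw [e] at hm
  simp only [H, map_add, map_smul, TT_pow_const, Pi.add_apply, Pi.smul_apply, smul_eq_mul] at hm
  have hm2 := mul_le_mul_of_nonneg_left hm (show 0 ≤ (n+1) * h by positivity)
  rw [← hE, ← mul_assoc, hh] at hm2
  nlinarith

/-- From half lines to intervals. -/
theorem interval_bound (β γ : Measure ℝ) [IsProbabilityMeasure β] [IsProbabilityMeasure γ] (K : ℝ) (hK : 0 ≤ K)
    (h1 : ∀ z, |β.real (Set.Iic z) - γ.real (Set.Iic z)| ≤ K)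
    (h2 : ∀ z, |β.real (Set.Iio z) - γ.real (Set.Iio z)| ≤ K)
    (I : Set ℝ) (hI : Convex ℝ I) : |β.real I - γ.real I| ≤ 2 * K := by
  have hdiff : ∀ (m : Measure ℝ) [IsProbabilityMeasure m] (A B : Set ℝ), MeasurableSet A → A ⊆ B →
      m.real (B \ A) = m.real B - m.real A := fun m _ A B hA hAB => measureReal_sdiff hAB hA
  have hgen : ∀ A B : Set ℝ, MeasurableSet A → A ⊆ B → |β.real A - γ.real A| ≤ K → |β.real B - γ.real B| ≤ K →
      |β.real (B \ A) - γ.real (B \ A)| ≤ 2 * K := by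
    intro A B hA hAB k1 k2
    rw [hdiff β A B hA hAB, hdiff γ A B hA hAB]
    rw [abs_le] at *
    constructor <;> linarith
  have hu : |β.real Set.univ - γ.real Set.univ| ≤ K := by simpa using hK
  have he : |β.real (∅ : Set ℝ) - γ.real ∅| ≤ 2 * K := by simpa using hK
  have hle : ∀ x : ℝ, x ≤ K → x ≤ 2 * K := fun x hx => by linarith
  have hp : IsPreconnected I := hI.isPreconnected
  set a := sInf I
  set b := sSup I
  rcases hp.mem_intervals with (hs | hs | hs | hs | hs | hs | hs | hs | hs | hs) <;> rw [hs]
  · rcases le_or_gt a b with hab | hab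
    · have e : Set.Icc a b = Set.Iic b \ Set.Iio a := by ext x; simp [and_comm]
      rw [e]
      exact hgen _ _ measurableSet_Iio (fun x hx => (le_of_lt hx).trans hab) (h2 a) (h1 b)
    · rw [Set.Icc_eq_empty (not_le.2 hab)]; exact he
  · rcases le_or_gt a b with hab | hab
    · have e : Set.Ico a b = Set.Iio b \ Set.Iio a := by ext x; simp [and_comm]
      rw [e]
      exact hgen _ _ measurableSet_Iio (fun x hx => lt_of_lt_of_le hx hab) (h2 a) (h2 b)
    · rw [Set.Ico_eq_empty (not_lt.2 hab.le)]; exact he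
  · rcases le_or_gt a b with hab | hab
    · have e : Set.Ioc a b = Set.Iic b \ Set.Iic a := by ext x; simp [and_comm]
      rw [e]
      exact hgen _ _ measurableSet_Iic (fun x hx => le_trans hx hab) (h1 a) (h1 b)
    · rw [Set.Ioc_eq_empty (not_lt.2 hab.le)]; exact he
  · rcases lt_or_ge a b with hab | hab
    · have e : Set.Ioo a b = Set.Iio b \ Set.Iic a := by ext x; simp [and_comm]
      rw [e]
      exact hgen _ _ measurableSet_Iic (fun x hx => lt_of_le_of_lt hx hab) (h1 a) (h2 b)
    · rw [Set.Ioo_eq_empty (not_lt.2 hab)]; exact he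
  · have e : Set.Ici a = Set.univ \ Set.Iio a := by ext x; simp
    rw [e]; exact hgen _ _ measurableSet_Iio (Set.subset_univ _) (h2 a) hu
  · have e : Set.Ioi a = Set.univ \ Set.Iic a := by ext x; simp
    rw [e]; exact hgen _ _ measurableSet_Iic (Set.subset_univ _) (h1 a) hu
  · exact hle _ (h1 b)
  · exact hle _ (h2 b)
  · exact hle _ hu
  · exact he

/-- Berry–Esseen approximation of the standard Gaussian vector in `ℝ^d` by a vector of
i.i.d. normalized binomials: if `N ≥ ((42·d^{7/4} + 16·d^{3/2})/ε)²`, `s` is the vector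
whose `d` coordinates are i.i.d. sums of `N` independent uniform `±1/√N` variables, and
`a ∼ N(0, I_d)`, then for every convex measurable `S ⊆ ℝ^d`,
`|Pr[s ∈ S] − Pr[a ∈ S]| ≤ ε`. -/
theorem stmt_17 (d : ℕ) (ε : ℝ) (hε : ε ∈ Set.Ioo (0 : ℝ) 1) (N : ℕ)
    (hN : ((42 * (d : ℝ) ^ ((7 : ℝ) / 4) + 16 * (d : ℝ) ^ ((3 : ℝ) / 2)) / ε) ^ 2 ≤ N)
    (S : Set (Fin d → ℝ)) (hS : Convex ℝ S) (hSm : MeasurableSet S) :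
    -- the uniform distribution on `{−1/√N, 1/√N}`
    let ν : Measure ℝ :=
      (2 : ℝ≥0∞)⁻¹ • Measure.dirac (-(1 / Real.sqrt N)) +
        (2 : ℝ≥0∞)⁻¹ • Measure.dirac (1 / Real.sqrt N)
    -- the distribution of `s = (s₁, …, s_d)`, each coordinate an independent
    -- normalized binomial, i.e. a sum of `N` independent uniform `±1/√N` variables
    let μs : Measure (Fin d → ℝ) :=
      Measure.map (fun X : Fin d → Fin N → ℝ => fun j => ∑ i, X j i)
        (Measure.pi fun _ : Fin d => Measure.pi fun _ : Fin N => ν)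
    -- the standard Gaussian vector in `ℝ^d`
    let μa : Measure (Fin d → ℝ) := Measure.pi fun _ : Fin d => gaussianReal 0 1
    |(μs S).toReal - (μa S).toReal| ≤ ε := by
  intro ν μs μa
  have hν : IsProbabilityMeasure ν := by
    constructor; simp [ν, ENNReal.inv_two_add_inv_two]
  let β : Measure ℝ := Measure.map (fun X : Fin N → ℝ => ∑ i, X i) (Measure.pi fun _ : Fin N => ν)
  have hsm : Measurable (fun X : Fin N → ℝ => ∑ i, X i) := by fun_prop
  have hβ : IsProbabilityMeasure β := Measure.isProbabilityMeasure_map hsm.aemeasurable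
  have hμs : μs = Measure.pi (fun _ : Fin d => β) := by
    have := Measure.pi_map_pi (μ := fun _ : Fin d => Measure.pi fun _ : Fin N => ν)
      (f := fun (_ : Fin d) (X : Fin N → ℝ) => ∑ i, X i) (fun i => hsm.aemeasurable)
    exact this
  obtain ⟨hε0, hε1⟩ := hε
  -- reduce to K
  obtain ⟨K, hK0, hdK, hK⟩ : ∃ K : ℝ, 0 ≤ K ∧ d * K ≤ ε ∧ 
      ∀ I : Set ℝ, Convex ℝ I → |β.real I - (gaussianReal 0 1).real I| ≤ K := by
    rcases Nat.eq_zero_or_pos d with rfl | hd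
    · refine ⟨1, by norm_num, by simpa using hε0.le, fun I _ => ?_⟩
      have := measureReal_le_one (μ := β) (s := I)
      have := measureReal_le_one (μ := gaussianReal 0 1) (s := I)
      have := measureReal_nonneg (μ := β) (s := I)
      have := measureReal_nonneg (μ := gaussianReal 0 1) (s := I)
      rw [abs_le]; constructor <;> linarith
    have hd1 : (1:ℝ) ≤ d := by exact_mod_cast hd
    have p1 : (d:ℝ) ≤ (d:ℝ) ^ ((7:ℝ)/4) := by
      simpa using Real.rpow_le_rpow_of_exponent_le hd1 (show (1:ℝ) ≤ 7/4 by norm_num)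
    have p2 : (d:ℝ) ≤ (d:ℝ) ^ ((3:ℝ)/2) := by
      simpa using Real.rpow_le_rpow_of_exponent_le hd1 (show (1:ℝ) ≤ 3/2 by norm_num)
    have p3 : 58 * d / ε ≤ √N := by
      apply Real.le_sqrt_of_sq_le
      refine le_trans ?_ hN
      gcongr
      linarith
    have hsp : 0 < √(N:ℝ) := lt_of_lt_of_le (by positivity) p3
    have hNp : 0 < N := by
      rw [Real.sqrt_pos] at hsp; exact_mod_cast hsp
    obtain ⟨n, rfl⟩ : ∃ n, N = n + 1 := ⟨N - 1, by omega⟩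
    let h : ℝ := 1 / √((n + 1 : ℕ) : ℝ)
    have h0 : 0 < h := by positivity
    have hh : ((n:ℝ) + 1) * h * h = 1 := by
      have := Real.mul_self_sqrt (show (0:ℝ) ≤ ((n+1 : ℕ) : ℝ) by positivity)
      simp only [h]
      field_simp
      rw [sq, this]; push_cast; ring
    have hβr : ∀ s, MeasurableSet s → β.real s = (TT h ^ (n+1)) (s.indicator (fun _ => 1)) 0 := by
      intro s hs
      have h1 := TT_integral h ν rfl (n+1) s hs 0
      have h2 : β s = (Measure.pi (fun _ : Fin (n+1) => ν)) {X | 0 + ∑ i, X i ∈ s} := by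
        rw [Measure.map_apply hsm hs]; simp [Set.preimage]
      rw [measureReal_def, h2, h1, ENNReal.toReal_ofReal]
      have := TT_pow_mono h (n+1) (fun _ => 0) (s.indicator (fun _ => 1)) (by
        intro x; exact Set.indicator_nonneg (by simp) x) 0
      rwa [TT_pow_const] at this
    have hγ : ∀ z, (gaussianReal 0 1).real (Set.Iic z) = Ph z := by
      intro z
      rw [measureReal_def, gaussianReal_apply_eq_integral 0 one_ne_zero, ENNReal.toReal_ofReal]
      · rfl
      · exact Ph_nonneg z
    have hγ' : ∀ z, (gaussianReal 0 1).real (Set.Iio z) = Ph z := by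
      intro z
      have : NullSingletonClass (gaussianReal 0 1) := nullSingletonClass_gaussianReal one_ne_zero
      rw [← hγ, measureReal_congr Iio_ae_eq_Iic]
    have u1 : ∀ z, β.real (Set.Iic z) ≤ Ph z + 18 * h := by
      intro z
      have := kol_upper n h h0 hh (z + 2 * h)
      rw [← hβr _ measurableSet_Iic, add_sub_cancel_right] at this
      linarith [Ph_lip z (z+2*h) (by linarith)]
    have l1 : ∀ z, Ph z - 18 * h ≤ β.real (Set.Iic z) := by
      intro z
      have := kol_lower n h h0 hh (z - 2 * h)
      rw [← hβr _ measurableSet_Iic, sub_add_cancel] at this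
      linarith [Ph_lip (z-2*h) z (by linarith)]
    refine ⟨2 * (19 * h), by positivity, ?_, ?_⟩
    · have : h * (58 * d / ε) ≤ 1 := by
        calc h * (58 * d / ε) ≤ h * √((n + 1 : ℕ) : ℝ) := by gcongr
          _ = 1 := by simp only [h]; field_simp
      have h3 : h * (58 * d) ≤ ε := by
        rw [← mul_div_assoc, div_le_one hε0] at this; exact this
      nlinarith [mul_pos h0 (lt_of_lt_of_le one_pos hd1)]
    · intro I hI
      refine interval_bound β (gaussianReal 0 1) (19 * h) (by positivity) ?_ ?_ I hI
      · intro z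
        rw [hγ, abs_le]; constructor <;> linarith [u1 z, l1 z]
      · intro z
        have k1 : β.real (Set.Iio z) ≤ β.real (Set.Iic z) := measureReal_mono Set.Iio_subset_Iic_self
        have k2 : β.real (Set.Iic (z - h)) ≤ β.real (Set.Iio z) :=
          measureReal_mono (fun x hx => lt_of_le_of_lt hx (sub_lt_self z h0))
        have k3 := Ph_lip (z - h) z (by linarith)
        rw [hγ', abs_le]; constructor <;> linarith [u1 z, l1 (z - h)]
  have conv : ∀ (m m' : Measure ℝ) [IsProbabilityMeasure m] [IsProbabilityMeasure m'] (I : Set ℝ),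
      m.real I ≤ m'.real I + K → m I ≤ m' I + ENNReal.ofReal K := by
    intro m m' _ _ I hI
    rw [← ofReal_measureReal (μ := m), ← ofReal_measureReal (μ := m'), ← ENNReal.ofReal_add measureReal_nonneg hK0]
    exact ENNReal.ofReal_le_ofReal hI
  have back : ∀ (m m' : Measure (Fin d → ℝ)) [IsProbabilityMeasure m] [IsProbabilityMeasure m'],
      m S ≤ m' S + d * ENNReal.ofReal K → m.real S ≤ m'.real S + ε := by
    intro m m' _ _ hI
    rw [← ofReal_measureReal (μ := m), ← ofReal_measureReal (μ := m'), ← ENNReal.ofReal_natCast,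
      ← ENNReal.ofReal_mul (by positivity), ← ENNReal.ofReal_add measureReal_nonneg (by positivity)] at hI
    rw [ENNReal.ofReal_le_ofReal_iff (add_nonneg measureReal_nonneg (by positivity))] at hI
    linarith
  have f1 := hybrid β (gaussianReal 0 1) (ENNReal.ofReal K) (fun I hI _ => conv _ _ I (by
    linarith [(abs_le.1 (hK I hI)).2])) d S hS hSm
  have f2 := hybrid (gaussianReal 0 1) β (ENNReal.ofReal K) (fun I hI _ => conv _ _ I (by
    linarith [(abs_le.1 (hK I hI)).1])) d S hS hSm
  have g1 := back _ _ f1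
  have g2 := back _ _ f2
  rw [hμs]
  change |(Measure.pi (fun _ : Fin d => β)).real S - (Measure.pi (fun _ : Fin d => gaussianReal 0 1)).real S| ≤ ε
  rw [abs_le]; constructor <;> linarith
end
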